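/- The number α₁₂ = √25 · ln((√25 − 1)/(√25 + 1)) = 5 ln(2/3) has non-quadraticity measure at most 9.46082; that is, for every real κ > 9.46082, there exist only finitely many real numbers β that are roots of irreducible integer polynomials of degree at most 2 and satisfy |α₁₂ − β| < H(β)^(−κ), where H(β) denotes the largest absolute value of the coefficients of the irreducible integer polynomial having β as a root. -/

import Mathlib

/-- The height of an integer polynomial: the largest absolute value of its coefficients. -/
def polyHeight (P : Polynomial ℤ) : ℕ :=
  P.support.sup fun i => (P.coeff i).natAbs

section
open Real Set Filter Topology MeasureTheory

/-- Fejer kernel. -/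
noncomputable def fejK (x : ℝ) : ℝ := ∫ t in (-1:ℝ)..1, (1 - |t|) * Real.cos (t * x)

lemma fejK_half (x : ℝ) : fejK x = 2 * ∫ t in (0:ℝ)..1, (1 - t) * Real.cos (t * x) := by
  have hc : ∀ a b : ℝ, IntervalIntegrable (fun t : ℝ => (1 - |t|) * Real.cos (t * x)) volume a b :=
    fun a b => Continuous.intervalIntegrable (by fun_prop) _ _
  unfold fejK
  rw [← intervalIntegral.integral_add_adjacent_intervals (hc (-1) 0) (hc 0 1)]
  have h1 : ∫ t in (-1:ℝ)..0, (1 - |t|) * Real.cos (t * x) =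
      ∫ t in (0:ℝ)..1, (1 - |t|) * Real.cos (t * x) := by
    have := intervalIntegral.integral_comp_neg (a := 0) (b := 1)
      (fun t : ℝ => (1 - |t|) * Real.cos (t * x))
    simp at this
    rw [← this]
  rw [h1, ← two_mul]
  congr 1
  apply intervalIntegral.integral_congr
  intro t ht
  rw [uIcc_of_le zero_le_one] at ht
  simp [abs_of_nonneg ht.1]

lemma fejK_eq {x : ℝ} (hx : x ≠ 0) : fejK x = 2 * (1 - Real.cos x) / x ^ 2 := by
  rw [fejK_half]
  have : ∫ t in (0:ℝ)..1, (1 - t) * Real.cos (t * x) = ((1 - 1) * (Real.sin (1 * x) / x) - Real.cos (1 * x) / x^2)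
     - ((1 - 0) * (Real.sin (0 * x) / x) - Real.cos (0 * x) / x^2) := by
    apply intervalIntegral.integral_eq_sub_of_hasDerivAt
      (f := fun t => (1 - t) * (Real.sin (t * x) / x) - Real.cos (t * x) / x^2)
    · intro t _
      have h1 : HasDerivAt (fun t : ℝ => t * x) x t := by simpa using (hasDerivAt_id t).mul_const x
      have h2 := (((hasDerivAt_id t).const_sub 1).mul ((h1.sin).div_const x)).sub ((h1.cos).div_const (x^2))
      refine h2.congr_deriv ?_
      simp; field_simp; ring
    · exact Continuous.intervalIntegrable (by fun_prop) _ _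
  rw [this]; simp; ring

lemma fejK_cont : Continuous fejK := by
  unfold fejK
  apply intervalIntegral.continuous_parametric_intervalIntegral_of_continuous'
  fun_prop

lemma fejK_zero : fejK 0 = 1 := by
  rw [fejK_half]
  simp only [mul_zero, Real.cos_zero, mul_one]
  rw [intervalIntegral.integral_sub (by simp) (by simp), integral_id]
  norm_num

lemma fejK_nonneg (x : ℝ) : 0 ≤ fejK x := by
  by_cases hx : x = 0
  · rw [hx, fejK_zero]; norm_num
  · rw [fejK_eq hx]
    have := Real.cos_le_one x
    have : 0 ≤ 1 - Real.cos x := by linarith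
    positivity

lemma fejK_le (x : ℝ) : fejK x ≤ 5 * (1 + x ^ 2)⁻¹ := by
  by_cases hx : x = 0
  · rw [hx, fejK_zero]; norm_num
  · rw [fejK_eq hx, ← div_eq_mul_inv, div_le_div_iff₀ (by positivity) (by positivity)]
    have h1 := Real.neg_one_le_cos x
    have h2 := Real.one_sub_sq_div_two_le_cos (x := x)
    nlinarith [sq_nonneg x]

lemma fejK_int : Integrable fejK := by
  refine Integrable.mono' ((integrable_inv_one_add_sq).const_mul 5) fejK_cont.aestronglyMeasurable ?_
  filter_upwards with x
  rw [Real.norm_of_nonneg (fejK_nonneg x)]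
  exact fejK_le x

lemma fejK_neg (x : ℝ) : fejK (-x) = fejK x := by
  unfold fejK; simp

lemma fejK_I_pos : 0 < ∫ x, fejK x := by
  rw [integral_pos_iff_support_of_nonneg fejK_nonneg fejK_int]
  exact (fejK_cont.isOpen_support).measure_pos _ ⟨0, by simp [fejK_zero]⟩

lemma fejK_complex (x : ℝ) :
    ∫ t in (-1:ℝ)..1, ((1 - |t| : ℝ) : ℂ) * Complex.exp (Complex.I * t * x) = fejK x := by
  have h0 : ∫ t in (-1:ℝ)..1, (1 - |t|) * Real.sin (t * x) = 0 := by
    have := intervalIntegral.integral_comp_neg (a := -1) (b := 1)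
      (fun t : ℝ => (1 - |t|) * Real.sin (t * x))
    simp at this
    linarith
  have h1 : ∀ t : ℝ, ((1 - |t| : ℝ) : ℂ) * Complex.exp (Complex.I * t * x) =
     (((1 - |t|) * Real.cos (t * x) : ℝ) : ℂ) + Complex.I * (((1 - |t|) * Real.sin (t * x) : ℝ) : ℂ) := by
    intro t
    rw [show Complex.I * t * x = ((t * x : ℝ) : ℂ) * Complex.I by push_cast; ring, Complex.exp_mul_I]
    push_cast; ring
  simp_rw [h1]
  rw [intervalIntegral.integral_add, intervalIntegral.integral_const_mul, intervalIntegral.integral_ofReal, intervalIntegral.integral_ofReal, h0]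
  · simp [fejK]
  all_goals exact Continuous.intervalIntegrable (by fun_prop) _ _

/-- Core of Wiener-Ikehara. -/
theorem wi_core (h : ℝ → ℝ) (hm : Measurable h) (M : ℝ) (hb : ∀ u, |h u| ≤ M) (G : ℂ → ℂ)
    (hG : ContinuousOn G {s | 0 ≤ s.re})
    (hL : ∀ s : ℂ, 0 < s.re → ∫ u in Ioi (0:ℝ), (h u : ℂ) * Complex.exp (-s * u) = G s) :
    Tendsto (fun v : ℝ => ∫ u in Ioi (0:ℝ), h u * fejK (v - u)) atTop (𝓝 0) := by
  have hM : 0 ≤ M := (abs_nonneg _).trans (hb 0)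
  -- Fubini
  have hF : ∀ ε : ℝ, 0 < ε → ∀ v : ℝ,
      ∫ t in (-1:ℝ)..1, ((1 - |t| : ℝ) : ℂ) * Complex.exp (Complex.I * t * v) * G (ε + Complex.I * t)
      = ∫ u in Ioi (0:ℝ), ((h u * Real.exp (-ε * u) * fejK (v - u) : ℝ) : ℂ) := by
    intro ε hε v
    have h1 : ∀ t : ℝ, ((1 - |t| : ℝ) : ℂ) * Complex.exp (Complex.I * t * v) * G (ε + Complex.I * t)
       = ∫ u in Ioi (0:ℝ), (h u * Real.exp (-ε * u) : ℝ) * (((1 - |t| : ℝ) : ℂ) * Complex.exp (Complex.I * t * ((v - u : ℝ) : ℂ))) := by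
      intro t
      rw [← hL _ (by simp [hε]), ← integral_const_mul]
      congr 1; ext u
      push_cast
      rw [show Complex.I * t * ((v:ℂ) - u) = Complex.I * t * v + (- Complex.I * t * u) by ring,
        show -((ε:ℂ) + Complex.I * t) * u = -ε * u + (- Complex.I * t * u) by ring,
        Complex.exp_add, Complex.exp_add]
      ring
    simp_rw [h1]
    rw [intervalIntegral.integral_of_le (by norm_num), integral_integral_swap]
    · congr 1; ext u
      rw [integral_const_mul, ← intervalIntegral.integral_of_le (by norm_num), fejK_complex]
      push_cast; ring
    · have i1 : Integrable (fun u : ℝ => M * Real.exp (-ε * u)) (volume.restrict (Ioi 0)) :=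
        (integrableOn_exp_mul_Ioi (by linarith) 0).const_mul M
      have i2 : Integrable (fun t : ℝ => (1:ℝ)) (volume.restrict (Ioc (-1:ℝ) 1)) := by
        exact integrableOn_const (by simp) 
      refine Integrable.mono' (i2.mul_prod i1) ?_ ?_
      · apply Measurable.aestronglyMeasurable
        fun_prop
      · have hpr : ∀ᵐ p : ℝ × ℝ ∂((volume.restrict (Ioc (-1:ℝ) 1)).prod (volume.restrict (Ioi (0:ℝ)))),
            p.1 ∈ Ioc (-1:ℝ) 1 := by
          rw [Measure.prod_restrict]
          filter_upwards [ae_restrict_mem (measurableSet_Ioc.prod measurableSet_Ioi)] with p hp using hp.1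
        filter_upwards [hpr] with p hp
        simp only [Function.uncurry, norm_mul, Complex.norm_real, norm_eq_abs]
        rw [show Complex.I * (p.1:ℂ) * ((v - p.2 : ℝ):ℂ) = ((p.1 * (v - p.2) : ℝ):ℂ) * Complex.I by push_cast; ring,
          Complex.norm_exp_ofReal_mul_I, abs_of_pos (Real.exp_pos _), one_mul, mul_one]
        have : abs (1 - |p.1|) ≤ 1 := by
          have h1 := abs_le.mpr ⟨hp.1.le, hp.2⟩
          have h2 := abs_nonneg p.1
          rw [abs_le]; constructor <;> linarith
        calc _ ≤ M * Real.exp (-ε * p.2) * 1 := by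
              gcongr; exact hb _
          _ = _ := by ring
  -- limit ε → 0
  have hF0 : ∀ v : ℝ,
      ∫ t in (-1:ℝ)..1, ((1 - |t| : ℝ) : ℂ) * Complex.exp (Complex.I * t * v) * G (Complex.I * t)
      = ∫ u in Ioi (0:ℝ), ((h u * fejK (v - u) : ℝ) : ℂ) := by
    intro v
    have hcomp : IsCompact ((fun p : ℝ × ℝ => (p.1 : ℂ) + Complex.I * p.2) '' (Icc 0 1 ×ˢ Icc (-1) 1)) :=
      (isCompact_Icc.prod isCompact_Icc).image (by fun_prop)
    obtain ⟨C, hC⟩ := hcomp.exists_bound_of_continuousOn (f := G) (hG.mono (by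
      rintro _ ⟨p, hp, rfl⟩; simpa using hp.1.1))
    have hC' : ∀ ε t : ℝ, ε ∈ Icc (0:ℝ) 1 → t ∈ Icc (-1:ℝ) 1 → ‖G (ε + Complex.I * t)‖ ≤ C :=
      fun ε t h1 h2 => hC _ ⟨(ε, t), ⟨h1, h2⟩, rfl⟩
    have hev : ∀ᶠ ε : ℝ in 𝓝[>] 0, ε ∈ Ioc (0:ℝ) 1 := Ioc_mem_nhdsGT one_pos
    have hGt : ∀ t : ℝ, Tendsto (fun ε : ℝ => G (ε + Complex.I * t)) (𝓝[>] 0) (𝓝 (G (Complex.I * t))) := by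
      intro t
      have hc : ContinuousWithinAt G {s | 0 ≤ s.re} (Complex.I * t) := hG _ (by simp)
      refine hc.tendsto.comp (tendsto_nhdsWithin_iff.2 ⟨?_, ?_⟩)
      · have : Continuous (fun ε : ℝ => (ε : ℂ) + Complex.I * t) := by fun_prop
        have := this.tendsto 0
        simp at this
        exact this.mono_left nhdsWithin_le_nhds
      · filter_upwards [hev] with ε hε
        simpa using hε.1.le
    have l1 : Tendsto (fun ε : ℝ => ∫ t in (-1:ℝ)..1, ((1 - |t| : ℝ) : ℂ) * Complex.exp (Complex.I * t * v) * G (ε + Complex.I * t)) (𝓝[>] 0)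
      (𝓝 (∫ t in (-1:ℝ)..1, ((1 - |t| : ℝ) : ℂ) * Complex.exp (Complex.I * t * v) * G (Complex.I * t))) := by
      apply intervalIntegral.tendsto_integral_filter_of_dominated_convergence (fun _ => C)
      · filter_upwards [hev] with ε hε
        apply Continuous.aestronglyMeasurable
        have : Continuous (fun t : ℝ => G (ε + Complex.I * t)) :=
          hG.comp_continuous (by fun_prop) (by intro t; simpa using hε.1.le)
        exact Continuous.mul (by fun_prop) this
      · filter_upwards [hev] with ε hε
        filter_upwards with t ht
        rw [uIoc_of_le (by norm_num)] at ht
        rw [norm_mul, norm_mul, Complex.norm_real, show Complex.I * (t:ℂ) * v = ((t * v : ℝ):ℂ) * Complex.I by push_cast; ring,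
          Complex.norm_exp_ofReal_mul_I, mul_one, norm_eq_abs]
        have : abs (1 - |t|) ≤ 1 := by
          have h1 := abs_le.mpr ⟨ht.1.le, ht.2⟩
          have h2 := abs_nonneg t
          rw [abs_le]; constructor <;> linarith
        calc _ ≤ 1 * C := by
              gcongr; exact hC' ε t ⟨hε.1.le, hε.2⟩ ⟨ht.1.le, ht.2⟩
          _ = C := one_mul _
      · simp
      · filter_upwards with t _
        exact (hGt t).const_mul _
    have l2 : Tendsto (fun ε : ℝ => ∫ u in Ioi (0:ℝ), ((h u * Real.exp (-ε * u) * fejK (v - u) : ℝ) : ℂ)) (𝓝[>] 0)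
      (𝓝 (∫ u in Ioi (0:ℝ), ((h u * fejK (v - u) : ℝ) : ℂ))) := by
      apply tendsto_integral_filter_of_dominated_convergence (fun u => M * fejK (v - u))
      · filter_upwards with ε
        apply Measurable.aestronglyMeasurable
        have := fejK_cont.measurable
        fun_prop
      · filter_upwards [hev] with ε hε
        filter_upwards [ae_restrict_mem measurableSet_Ioi] with u hu
        rw [Complex.norm_real, norm_mul, norm_mul, norm_eq_abs, norm_eq_abs, norm_eq_abs, abs_of_nonneg (fejK_nonneg _), abs_of_pos (Real.exp_pos _)]
        have : Real.exp (-ε * u) ≤ 1 := by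
          rw [Real.exp_le_one_iff]; have := mul_pos hε.1 hu; linarith
        have h3 := fejK_nonneg (v - u)
        calc _ ≤ M * 1 * fejK (v - u) := by gcongr; exact hb u
          _ = _ := by ring
      · exact ((fejK_int.comp_sub_left v).const_mul M).integrableOn
      · filter_upwards with u
        have : Continuous (fun ε : ℝ => ((h u * Real.exp (-ε * u) * fejK (v - u) : ℝ) : ℂ)) := by fun_prop
        have := this.tendsto 0
        simp only [neg_zero, zero_mul, Real.exp_zero, mul_one] at this
        exact this.mono_left nhdsWithin_le_nhds
    have l3 := l1.congr' (f₂ := fun ε : ℝ => ∫ u in Ioi (0:ℝ), ((h u * Real.exp (-ε * u) * fejK (v - u) : ℝ) : ℂ)) (by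
      filter_upwards [hev] with ε hε using hF ε hε.1 v)
    exact tendsto_nhds_unique l3 l2
  -- Riemann-Lebesgue
  have rl := Real.tendsto_integral_exp_smul_cocompact
    ((Ioc (-1:ℝ) 1).indicator (fun t : ℝ => ((1 - |t| : ℝ) : ℂ) * G (Complex.I * t)))
  have rl2 : Tendsto (fun v : ℝ => -(v / (2 * π))) atTop (cocompact ℝ) := by
    rw [cocompact_eq_atBot_atTop]
    refine Tendsto.mono_right (tendsto_neg_atTop_atBot.comp (tendsto_id.atTop_div_const (by positivity))) le_sup_left
  have rl3 := rl.comp rl2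
  have : ∀ v : ℝ, ((∫ u in Ioi (0:ℝ), h u * fejK (v - u) : ℝ) : ℂ) =
     ((fun w : ℝ => ∫ x : ℝ, Real.fourierChar (-(x * w)) • ((Ioc (-1:ℝ) 1).indicator (fun t : ℝ => ((1 - |t| : ℝ) : ℂ) * G (Complex.I * t))) x) ∘ fun v => -(v / (2 * π))) v := by
    intro v
    have := hF0 v
    rw [integral_complex_ofReal] at this
    simp only [Function.comp]
    rw [← this]
    rw [intervalIntegral.integral_of_le (by norm_num), ← integral_indicator measurableSet_Ioc]
    congr 1; ext t
    by_cases ht : t ∈ Ioc (-1:ℝ) 1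
    · simp only [indicator_of_mem ht, Circle.smul_def, Real.fourierChar_apply, smul_eq_mul]
      rw [show (((2 * π * -(t * -(v / (2 * π))) : ℝ)) : ℂ) * Complex.I = Complex.I * t * v by
        push_cast; field_simp]
      ring
    · simp [indicator_of_notMem ht]
  have h4 := rl3.congr (fun v => (this v).symm)
  simpa [Function.comp_def] using (Complex.continuous_re.tendsto 0).comp h4

end

section
open Real Set Filter Topology MeasureTheory

noncomputable def psiB (u : ℝ) : ℝ := Chebyshev.psi (Real.exp u) * Real.exp (-u)

lemma psiB_nonneg (u : ℝ) : 0 ≤ psiB u := mul_nonneg (Chebyshev.psi_nonneg _) (Real.exp_pos _).le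

lemma psiB_meas : Measurable psiB := by
  unfold psiB
  have : Measurable Chebyshev.psi := Chebyshev.psi_mono.measurable
  fun_prop

lemma psiB_le (u : ℝ) : psiB u ≤ Real.log 4 + 4 := by
  have h := Chebyshev.psi_le_const_mul_self (Real.exp_pos u).le
  unfold psiB
  calc _ ≤ ((Real.log 4 + 4) * Real.exp u) * Real.exp (-u) := by gcongr
    _ = _ := by rw [mul_assoc, ← Real.exp_add]; simp

lemma psiB_mono {u v : ℝ} (huv : u ≤ v) : psiB u ≤ psiB v * Real.exp (v - u) := by
  unfold psiB
  rw [mul_assoc, ← Real.exp_add]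
  have : -v + (v - u) = -u := by ring
  rw [this]
  exact mul_le_mul_of_nonneg_right (Chebyshev.psi_mono (Real.exp_le_exp.2 huv)) (Real.exp_pos _).le

noncomputable def psiG (s : ℂ) : ℂ :=
  (ArithmeticFunction.vonMangoldt.LFunctionResidueClassAux (1 : ZMod 1) (1 + s) - 1) / (1 + s)

lemma psiG_cont : ContinuousOn psiG {s | 0 ≤ s.re} := by
  unfold psiG
  refine ContinuousOn.div ?_ (by fun_prop) ?_
  · refine ContinuousOn.sub ?_ continuousOn_const
    refine (ArithmeticFunction.vonMangoldt.continuousOn_LFunctionResidueClassAux (1 : ZMod 1)).comp (by fun_prop) ?_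
    intro s hs; simpa using hs
  · intro s hs h
    have := congrArg Complex.re h
    simp at this hs
    linarith

lemma laplace_psi (s : ℂ) (hs : 1 < s.re) :
    ∫ u in Ioi (0:ℝ), (psiB u : ℂ) * Complex.exp (-(s - 1) * u) =
      LSeries (fun n => ((ArithmeticFunction.vonMangoldt n : ℝ) : ℂ)) s / s := by
  have hs0 : s ≠ 0 := by rintro rfl; simp at hs; linarith
  rw [LSeries_eq_mul_integral_of_nonneg (fun n => ArithmeticFunction.vonMangoldt n) zero_le_one hs]
  · rw [mul_div_cancel_left₀ _ hs0]
    have himg : Real.exp '' Ioi 0 = Ioi 1 := by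
      ext x; constructor
      · rintro ⟨y, hy, rfl⟩; exact Real.one_lt_exp_iff.2 hy
      · intro hx; exact ⟨Real.log x, Real.log_pos hx, Real.exp_log (lt_trans one_pos hx)⟩
    rw [← himg, integral_image_eq_integral_abs_deriv_smul measurableSet_Ioi
      (fun x _ => (Real.hasDerivAt_exp x).hasDerivWithinAt) Real.exp_injective.injOn]
    congr 1; ext u
    have h1 : ∑ k ∈ Finset.Icc 1 ⌊Real.exp u⌋₊, ((ArithmeticFunction.vonMangoldt k : ℝ) : ℂ) = Chebyshev.psi (Real.exp u) := by
      rw [Chebyshev.psi]; push_cast; rfl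
    rw [h1, abs_of_pos (Real.exp_pos u), Complex.real_smul, psiB,
      Complex.cpow_def_of_ne_zero (by exact_mod_cast (Real.exp_pos u).ne'), ← Complex.ofReal_log (Real.exp_pos u).le, Real.log_exp]
    push_cast
    rw [show Complex.exp u * (Chebyshev.psi (Real.exp u) * Complex.exp (u * -(s + 1))) = Chebyshev.psi (Real.exp u) * (Complex.exp u * Complex.exp (u * -(s + 1))) by ring,
      mul_assoc, ← Complex.exp_add, ← Complex.exp_add]
    congr 2; ring
  · apply Asymptotics.IsBigO.of_bound (Real.log 4 + 4)
    filter_upwards with n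
    have h := Chebyshev.psi_le_const_mul_self (Nat.cast_nonneg (α := ℝ) n)
    have h1 : ∑ k ∈ Finset.Icc 1 n, ArithmeticFunction.vonMangoldt k = Chebyshev.psi n := by
      rw [Chebyshev.psi]; simp; rfl
    rw [h1]
    simpa [abs_of_nonneg (Chebyshev.psi_nonneg _)] using h
  · intro n; exact ArithmeticFunction.vonMangoldt_nonneg

lemma laplace_h (s : ℂ) (hs : 0 < s.re) :
    ∫ u in Ioi (0:ℝ), ((psiB u - 1 : ℝ) : ℂ) * Complex.exp (-s * u) = psiG s := by
  have h1 := laplace_psi (1 + s) (by simpa using hs)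
  have hs0 : s ≠ 0 := by rintro rfl; simp at hs
  have hs1 : 1 + s ≠ 0 := by
    intro h
    have := congrArg Complex.re h
    simp at this; linarith
  have i0 : IntegrableOn (fun u : ℝ => Complex.exp (-s * u)) (Ioi 0) :=
    integrableOn_exp_mul_complex_Ioi (by simpa using hs) 0
  have i1 : IntegrableOn (fun u : ℝ => (psiB u : ℂ) * Complex.exp (-s * u)) (Ioi 0) := by
    refine Integrable.bdd_mul (c := Real.log 4 + 4) i0 ?_ ?_
    · have := psiB_meas
      apply Measurable.aestronglyMeasurable; fun_prop
    · filter_upwards with u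
      rw [Complex.norm_real, Real.norm_of_nonneg (psiB_nonneg u)]; exact psiB_le u
  have h2 : ∫ u in Ioi (0:ℝ), Complex.exp (-s * u) = 1 / s := by
    rw [integral_exp_mul_complex_Ioi (by simpa using hs)]
    simp
  have h3 : ∀ u : ℝ, ((psiB u - 1 : ℝ) : ℂ) * Complex.exp (-s * u) = (psiB u : ℂ) * Complex.exp (-s * u) - Complex.exp (-s * u) := by
    intro u; push_cast; ring
  simp_rw [h3]
  rw [integral_sub i1 i0, h2]
  rw [show (1 + s - 1) = s by ring] at h1
  rw [h1, psiG]
  have h4 := ArithmeticFunction.vonMangoldt.eqOn_LFunctionResidueClassAux (a := (1 : ZMod 1)) isUnit_one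
    (show (1 + s) ∈ {s : ℂ | 1 < s.re} by simpa using hs)
  rw [h4]
  have h5 : (fun n => ((ArithmeticFunction.vonMangoldt.residueClass (1 : ZMod 1) n : ℝ) : ℂ)) = (fun n => ((ArithmeticFunction.vonMangoldt n : ℝ) : ℂ)) := by
    ext n
    congr 1
    simp only [ArithmeticFunction.vonMangoldt.residueClass]
    rw [indicator_of_mem]
    exact Subsingleton.elim _ _
  simp only [h5]
  simp
  field_simp
  ring

lemma wi_psi (c : ℝ) (hc : 0 < c) :
    Tendsto (fun v : ℝ => ∫ u in Ioi (0:ℝ), (psiB (u / c) - 1) * fejK (v - u)) atTop (𝓝 0) := by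
  have hpm := psiB_meas
  refine wi_core (fun u => psiB (u / c) - 1) (by fun_prop) (Real.log 4 + 4 + 1) ?_ (fun s => c * psiG (c * s)) ?_ ?_
  · intro u
    have h1 := psiB_nonneg (u / c)
    have h2 := psiB_le (u / c)
    rw [abs_le]; constructor <;> linarith
  · refine continuousOn_const.mul (psiG_cont.comp (by fun_prop) ?_)
    intro s hs
    simp at hs ⊢
    positivity
  · intro s hs
    have := integral_comp_mul_left_Ioi (fun u : ℝ => ((psiB (u / c) - 1 : ℝ) : ℂ) * Complex.exp (-s * u)) 0 hc
    simp only [mul_zero] at this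
    have h2 := laplace_h (c * s) (by simpa using mul_pos hc hs)
    rw [← h2]
    have h3 : ∀ u : ℝ, ((psiB (c * u / c) - 1 : ℝ) : ℂ) * Complex.exp (-s * ((c * u : ℝ) : ℂ)) =
       ((psiB u - 1 : ℝ) : ℂ) * Complex.exp (-(c * s) * u) := by
      intro u
      rw [mul_div_cancel_left₀ _ hc.ne']
      congr 2; push_cast; ring
    simp_rw [h3] at this
    rw [this, Complex.real_smul, ← mul_assoc]
    push_cast
    rw [mul_inv_cancel₀ (by exact_mod_cast hc.ne'), one_mul]

lemma fej_half_lim : Tendsto (fun v : ℝ => ∫ u in Ioi (0:ℝ), fejK (v - u)) atTop (𝓝 (∫ x, fejK x)) := by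
  have h : ∀ v : ℝ, ∫ u in Ioi (0:ℝ), fejK (v - u) = ∫ x in Iio v, fejK x := by
    intro v
    rw [← integral_indicator measurableSet_Ioi, ← integral_indicator measurableSet_Iio,
      ← integral_sub_left_eq_self (fun x => (Iio v).indicator fejK x) volume v]
    congr 1; ext u
    by_cases hu : 0 < u
    · rw [indicator_of_mem (by exact hu), indicator_of_mem (by simpa using hu)]
    · rw [indicator_of_notMem (by exact hu), indicator_of_notMem (by simpa using hu)]
  simp_rw [h]
  have := (aecover_Iio (μ := volume) (tendsto_id (α := ℝ) (x := atTop))).integral_tendsto_of_countably_generated fejK_int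
  simpa using this

lemma wi_psi' (c : ℝ) (hc : 0 < c) :
    Tendsto (fun v : ℝ => ∫ u in Ioi (0:ℝ), psiB (u / c) * fejK (v - u)) atTop (𝓝 (∫ x, fejK x)) := by
  have := (wi_psi c hc).add fej_half_lim
  rw [zero_add] at this
  refine this.congr fun v => ?_
  have hi : IntegrableOn (fun u : ℝ => fejK (v - u)) (Ioi 0) := (fejK_int.comp_sub_left v).integrableOn
  have hpm := psiB_meas
  rw [← integral_add _ hi]
  · congr 1; ext u; ring
  · refine Integrable.bdd_mul (c := Real.log 4 + 4 + 1) hi ?_ ?_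
    · apply Measurable.aestronglyMeasurable; fun_prop
    · filter_upwards with u
      have h1 := psiB_nonneg (u / c)
      have h2 := psiB_le (u / c)
      rw [norm_eq_abs, abs_le]; constructor <;> linarith

lemma fej_window (R : ℝ) (v : ℝ) : ∫ u in Icc (v - R) (v + R), fejK (v - u) = ∫ x in Icc (-R) R, fejK x := by
  rw [← integral_indicator measurableSet_Icc, ← integral_indicator measurableSet_Icc,
      ← integral_sub_left_eq_self (fun x => (Icc (-R) R).indicator fejK x) volume v]
  congr 1; ext u
  by_cases hu : u ∈ Icc (v - R) (v + R)
  · rw [indicator_of_mem hu, indicator_of_mem]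
    rw [mem_Icc] at hu ⊢; constructor <;> linarith [hu.1, hu.2]
  · rw [indicator_of_notMem hu, indicator_of_notMem]
    intro h; apply hu
    rw [mem_Icc] at h ⊢; constructor <;> linarith [h.1, h.2]

lemma fej_big : Tendsto (fun R : ℝ => ∫ x in Icc (-R) R, fejK x) atTop (𝓝 (∫ x, fejK x)) :=
  (aecover_Icc (μ := volume) tendsto_neg_atTop_atBot (tendsto_id (α := ℝ) (x := atTop))).integral_tendsto_of_countably_generated fejK_int

lemma fej_int_psi (c v : ℝ) : Integrable (fun u : ℝ => psiB (u / c) * fejK (v - u)) := by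
  have hpm := psiB_meas
  refine Integrable.bdd_mul (c := Real.log 4 + 4) (fejK_int.comp_sub_left v) ?_ ?_
  · apply Measurable.aestronglyMeasurable; fun_prop
  · filter_upwards with u
    rw [Real.norm_of_nonneg (psiB_nonneg _)]; exact psiB_le _

lemma psiB_upper (δ : ℝ) (hδ : 0 < δ) : ∀ᶠ u in atTop, psiB u ≤ 1 + δ := by
  set I := ∫ x, fejK x with hI
  have hIp : 0 < I := fejK_I_pos
  obtain ⟨η, hη, hη1, hη2⟩ : ∃ η : ℝ, 0 < η ∧ η < 1 ∧ (1 + η) * (1 + η) ≤ (1 + δ) * (1 - η) := by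
    refine ⟨min (δ/10) (1/10), by positivity, by have := min_le_right (δ/10) (1/10:ℝ); linarith, ?_⟩
    have h1 := min_le_right (δ/10) (1/10:ℝ)
    have h2 := min_le_left (δ/10) (1/10:ℝ)
    have h3 : 0 < min (δ/10) (1/10:ℝ) := by positivity
    nlinarith
  obtain ⟨R, hR, hR0⟩ : ∃ R : ℝ, (1 - η) * I < ∫ x in Icc (-R) R, fejK x ∧ 0 < R :=
    ((fej_big.eventually (lt_mem_nhds (show (1 - η) * I < I by nlinarith))).and (eventually_gt_atTop 0)).exists
  obtain ⟨c, hc, hc2⟩ : ∃ c : ℝ, 0 < c ∧ Real.exp (2 * R / c) ≤ 1 + η := by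
    refine ⟨2 * R / Real.log (1 + η), by have := Real.log_pos (show 1 < 1 + η by linarith); positivity, ?_⟩
    rw [div_div_cancel₀ (by positivity), Real.exp_log (by linarith)]
  have hev := (wi_psi' c hc).eventually (gt_mem_nhds (show I < (1 + η) * I by nlinarith))
  have hmap : Tendsto (fun u : ℝ => c * u + R) atTop atTop :=
    tendsto_atTop_add_const_right _ _ (tendsto_id.const_mul_atTop hc)
  filter_upwards [hmap.eventually hev, eventually_gt_atTop 0] with u hu hu0
  set v := c * u + R with hv
  have hsub : Icc (v - R) (v + R) ⊆ Ioi 0 := by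
    intro x hx; have := hx.1; have := mul_pos hc hu0; simp [hv] at *; linarith
  have h1 : ∫ w in Icc (v - R) (v + R), psiB (w / c) * fejK (v - w) ≤ ∫ w in Ioi 0, psiB (w / c) * fejK (v - w) := by
    apply setIntegral_mono_set (fej_int_psi c v).integrableOn
    · filter_upwards with w using mul_nonneg (psiB_nonneg _) (fejK_nonneg _)
    · exact hsub.eventuallyLE
  have h2 : ∫ w in Icc (v - R) (v + R), (psiB u * (1 + η)⁻¹) * fejK (v - w) ≤ ∫ w in Icc (v - R) (v + R), psiB (w / c) * fejK (v - w) := by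
    apply setIntegral_mono_on ((fejK_int.comp_sub_left v).const_mul _).integrableOn (fej_int_psi c v).integrableOn measurableSet_Icc
    intro w hw
    apply mul_le_mul_of_nonneg_right _ (fejK_nonneg _)
    have hw1 : u ≤ w / c := by
      rw [le_div_iff₀ hc]; have := hw.1; simp [hv] at this; linarith
    have hw2 : w / c - u ≤ 2 * R / c := by
      rw [div_sub' hc.ne', div_le_div_iff_of_pos_right hc]; have := hw.2; simp [hv] at this; linarith
    rw [mul_inv_le_iff₀ (by linarith)]
    refine (psiB_mono hw1).trans ?_
    gcongr
    · exact psiB_nonneg _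
    · exact (Real.exp_le_exp.2 hw2).trans hc2
  rw [integral_const_mul, fej_window] at h2
  have h3 : psiB u * (1 + η)⁻¹ * ((1 - η) * I) ≤ (1 + η) * I := by
    have h4 : 0 ≤ psiB u * (1 + η)⁻¹ := mul_nonneg (psiB_nonneg _) (by positivity)
    calc _ ≤ _ := mul_le_mul_of_nonneg_left hR.le h4
      _ ≤ _ := h2.trans (h1.trans hu.le)
  have h5 : psiB u * (1 - η) ≤ (1 + η) * (1 + η) := by
    have : psiB u * (1 + η)⁻¹ * ((1 - η) * I) = (psiB u * (1 - η)) / (1 + η) * I := by field_simp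
    rw [this] at h3
    have := le_of_mul_le_mul_right h3 hIp
    rwa [div_le_iff₀ (by linarith)] at this
  have h6 : psiB u * (1 - η) ≤ (1 + δ) * (1 - η) := h5.trans hη2
  exact le_of_mul_le_mul_right h6 (by linarith)

lemma psiB_lower (δ : ℝ) (hδ : 0 < δ) : ∀ᶠ u in atTop, 1 - δ ≤ psiB u := by
  set I := ∫ x, fejK x with hI
  have hIp : 0 < I := fejK_I_pos
  set M := Real.log 4 + 4 with hM
  have hM0 : 0 < M := by have := Real.log_pos (show (1:ℝ) < 4 by norm_num); linarith
  obtain ⟨η, hη, hη1, hη2⟩ : ∃ η : ℝ, 0 < η ∧ η < 1 ∧ (1 - δ) * (1 + η) ≤ 1 - η - M * η := by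
    by_cases h1 : 1 ≤ δ
    · refine ⟨1 / (2 + M), by positivity, by rw [div_lt_one (by positivity)]; linarith, ?_⟩
      have h2 : 0 < 1 / (2 + M) := by positivity
      have h3 : 1 - 1 / (2 + M) - M * (1 / (2+M)) = 1 / (2 + M) := by field_simp; ring
      rw [h3]; nlinarith
    · push Not at h1
      refine ⟨δ / (3 + M), by positivity, by rw [div_lt_one (by positivity)]; linarith, ?_⟩
      have h2 : 0 < δ / (3 + M) := by positivity
      have h3 : 1 - δ / (3 + M) - M * (δ / (3+M)) = 1 - δ + 2 * (δ / (3 + M)) := by field_simp; ring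
      rw [h3]; nlinarith
  obtain ⟨R, hR, hR0⟩ : ∃ R : ℝ, (1 - η) * I < ∫ x in Icc (-R) R, fejK x ∧ 0 < R :=
    ((fej_big.eventually (lt_mem_nhds (show (1 - η) * I < I by nlinarith))).and (eventually_gt_atTop 0)).exists
  obtain ⟨c, hc, hc2⟩ : ∃ c : ℝ, 0 < c ∧ Real.exp (2 * R / c) ≤ 1 + η := by
    refine ⟨2 * R / Real.log (1 + η), by have := Real.log_pos (show 1 < 1 + η by linarith); positivity, ?_⟩
    rw [div_div_cancel₀ (by positivity), Real.exp_log (by linarith)]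
  have hev := (wi_psi' c hc).eventually (lt_mem_nhds (show (1 - η) * I < I by nlinarith))
  have hmap : Tendsto (fun u : ℝ => c * u - R) atTop atTop :=
    tendsto_atTop_add_const_right _ _ (tendsto_id.const_mul_atTop hc)
  filter_upwards [hmap.eventually hev, eventually_gt_atTop (2 * R / c)] with u hu hu0
  set v := c * u - R with hv
  rw [div_lt_iff₀ hc] at hu0
  have hi := fejK_int.comp_sub_left v
  have hb : ∀ w, psiB (w / c) * fejK (v - w) ≤ M * fejK (v - w) := fun w =>
    mul_le_mul_of_nonneg_right (psiB_le _) (fejK_nonneg _)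
  have hall : ∫ w in Ioi 0, psiB (w / c) * fejK (v - w) ≤ ∫ w, psiB (w / c) * fejK (v - w) :=
    setIntegral_le_integral (fej_int_psi c v) (by filter_upwards with w using mul_nonneg (psiB_nonneg _) (fejK_nonneg _))
  have hsplit := integral_add_compl (μ := volume) (measurableSet_Icc (a := v - R) (b := v + R)) (fej_int_psi c v)
  have hsplit2 := integral_add_compl (μ := volume) (measurableSet_Icc (a := v - R) (b := v + R)) hi
  rw [fej_window, integral_sub_left_eq_self fejK volume v] at hsplit2
  have h1 : ∫ w in (Icc (v - R) (v + R))ᶜ, psiB (w / c) * fejK (v - w) ≤ ∫ w in (Icc (v - R) (v + R))ᶜ, M * fejK (v - w) :=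
    setIntegral_mono_on (fej_int_psi c v).integrableOn (hi.const_mul _).integrableOn measurableSet_Icc.compl (fun w _ => hb w)
  have h2 : ∫ w in Icc (v - R) (v + R), psiB (w / c) * fejK (v - w) ≤ ∫ w in Icc (v - R) (v + R), (psiB u * (1 + η)) * fejK (v - w) := by
    apply setIntegral_mono_on (fej_int_psi c v).integrableOn (hi.const_mul _).integrableOn measurableSet_Icc
    intro w hw
    apply mul_le_mul_of_nonneg_right _ (fejK_nonneg _)
    have hw1 : w / c ≤ u := by
      rw [div_le_iff₀ hc]; have := hw.2; simp [hv] at this; linarith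
    have hw2 : u - w / c ≤ 2 * R / c := by
      rw [sub_div' hc.ne', div_le_div_iff_of_pos_right hc]; have := hw.1; simp [hv] at this; linarith
    refine (psiB_mono hw1).trans ?_
    gcongr
    · exact psiB_nonneg _
    · exact (Real.exp_le_exp.2 hw2).trans hc2
  rw [integral_const_mul, fej_window] at h2
  rw [integral_const_mul] at h1
  set J := ∫ x in Icc (-R) R, fejK x with hJ
  have hJI : J ≤ I := setIntegral_le_integral fejK_int (by filter_upwards with w using fejK_nonneg _)
  have h7 : psiB u * (1 + η) * J ≤ psiB u * (1 + η) * I :=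
    mul_le_mul_of_nonneg_left hJI (mul_nonneg (psiB_nonneg _) (by linarith))
  have h8 : ∫ w in (Icc (v - R) (v + R))ᶜ, fejK (v - w) ≤ η * I := by linarith
  have h9 := mul_le_mul_of_nonneg_left h8 hM0.le
  have h10 : (1 - η) * I ≤ psiB u * (1 + η) * I + M * (η * I) := by linarith
  have h11 : (1 - η - M * η) * I ≤ psiB u * (1 + η) * I := by linarith
  have h12 := le_of_mul_le_mul_right h11 hIp
  exact le_of_mul_le_mul_right (hη2.trans h12) (by linarith)

theorem psi_pnt : Tendsto (fun x : ℝ => Chebyshev.psi x / x) atTop (𝓝 1) := by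
  have h1 : Tendsto psiB atTop (𝓝 1) := by
    rw [Metric.tendsto_nhds]
    intro ε hε
    filter_upwards [psiB_upper (ε/2) (by linarith), psiB_lower (ε/2) (by linarith)] with u h1 h2
    rw [Real.dist_eq, abs_lt]; constructor <;> linarith
  refine (h1.comp Real.tendsto_log_atTop).congr' ?_
  filter_upwards [eventually_gt_atTop 0] with x hx
  simp [psiB, Real.exp_neg, Real.exp_log hx, div_eq_mul_inv]

theorem theta_pnt : Tendsto (fun x : ℝ => Chebyshev.theta x / x) atTop (𝓝 1) := by
  have h0 : Tendsto (fun x : ℝ => 2 * (Real.log x / x ^ (1/2:ℝ))) atTop (𝓝 (2 * 0)) :=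
    ((isLittleO_log_rpow_atTop (by norm_num)).tendsto_div_nhds_zero).const_mul 2
  have h1 : Tendsto (fun x : ℝ => (Chebyshev.psi x - Chebyshev.theta x) / x) atTop (𝓝 0) := by
    rw [mul_zero] at h0
    refine squeeze_zero' ?_ ?_ h0
    · filter_upwards [eventually_gt_atTop 0] with x hx
      have := Chebyshev.theta_le_psi x
      apply div_nonneg _ hx.le; linarith
    · filter_upwards [eventually_ge_atTop 1] with x hx
      have := Chebyshev.psi_sub_theta_le hx
      rw [← Real.sqrt_eq_rpow, ← mul_div_assoc, div_le_div_iff₀ (by linarith) (by positivity)]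
      have h3 : √x * √x = x := Real.mul_self_sqrt (by linarith)
      calc _ ≤ (2 * √x * Real.log x) * √x := by gcongr
        _ = _ := by rw [show (2 * √x * Real.log x) * √x = 2 * Real.log x * (√x * √x) by ring, h3]
  have := psi_pnt.sub h1
  rw [sub_zero] at this
  refine this.congr fun x => ?_
  ring

end

section
open Real Set Filter Topology MeasureTheory Polynomial

noncomputable def sechW (y : ℝ) : ℝ := π / 2 / (Real.cosh (π * y)) ^ 2

lemma sechW_pos (y : ℝ) : 0 < sechW y := by
  unfold sechW; have := Real.cosh_pos (π * y); positivity

lemma sechW_cont : Continuous sechW := by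
  unfold sechW
  refine Continuous.div (by fun_prop) (by fun_prop) ?_
  intro y; have := Real.cosh_pos (π * y); positivity

lemma sechW_le (y : ℝ) : sechW y ≤ 2 * π * Real.exp (-(2 * π * |y|)) := by
  have h1 : Real.exp (π * |y|) / 2 ≤ Real.cosh (π * y) := by
    rw [← Real.cosh_abs, abs_mul, abs_of_pos Real.pi_pos, Real.cosh_eq]
    have := Real.exp_pos (-(π * |y|)); linarith
  have h2 : (Real.exp (π * |y|) / 2) ^ 2 ≤ Real.cosh (π * y) ^ 2 := by gcongr
  unfold sechW
  rw [div_le_iff₀ (by have := Real.cosh_pos (π * y); positivity)]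
  calc π / 2 = 2 * π * Real.exp (-(2 * π * |y|)) * (Real.exp (π * |y|) / 2) ^ 2 := by
        rw [div_pow, ← Real.exp_nat_mul, mul_assoc, ← mul_div_assoc, ← Real.exp_add]
        push_cast
        rw [show -(2 * π * |y|) + 2 * (π * |y|) = 0 by ring]; simp; ring
    _ ≤ _ := by gcongr

lemma sechW_poly_int (j : ℕ) : Integrable (fun y : ℝ => (1 + |y|) ^ j * sechW y) := by
  have hI : IntegrableOn (fun y : ℝ => (1 + |y|) ^ j * sechW y) (Ioi 0) := by
    have : IntegrableOn (fun y : ℝ => (2 * π * ((j+1:ℕ).factorial:ℝ) * Real.exp 1) * Real.exp (-(5 * y))) (Ioi 0) := by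
      have := (integrableOn_exp_mul_Ioi (a := -5) (by norm_num) 0).const_mul (2 * π * ((j+1:ℕ).factorial:ℝ) * Real.exp 1)
      simp only [neg_mul] at this
      exact this
    refine Integrable.mono' this ?_ ?_
    · have := sechW_cont
      apply Continuous.aestronglyMeasurable; fun_prop
    · filter_upwards [ae_restrict_mem measurableSet_Ioi] with y hy
      have hy : 0 < y := hy
      rw [norm_mul, norm_pow, Real.norm_of_nonneg (by positivity), Real.norm_of_nonneg (sechW_pos y).le, abs_of_pos hy]
      have h1 : (1 + y) ^ j / (j.factorial : ℝ) ≤ Real.exp (1 + y) := Real.pow_div_factorial_le_exp _ (by linarith) _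
      rw [div_le_iff₀ (by positivity)] at h1
      have h2 := sechW_le y
      rw [abs_of_pos hy] at h2
      have h3 : Real.exp (-(2 * π * y)) ≤ Real.exp (-(6 * y)) := by
        apply Real.exp_le_exp.2; nlinarith [Real.pi_gt_three]
      have h4 : (j.factorial : ℝ) ≤ ((j+1:ℕ).factorial : ℝ) := by exact_mod_cast Nat.factorial_le (Nat.le_succ j)
      calc _ ≤ (Real.exp (1 + y) * ((j+1:ℕ).factorial : ℝ)) * (2 * π * Real.exp (-(6 * y))) := by
            refine mul_le_mul (h1.trans (by gcongr)) (h2.trans (by gcongr)) (sechW_pos y).le (by positivity)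
        _ = (2 * π * ((j+1:ℕ).factorial:ℝ)) * (Real.exp (1 + y) * Real.exp (-(6 * y))) := by ring
        _ = _ := by
          rw [← Real.exp_add, mul_assoc _ (Real.exp 1), ← Real.exp_add]; congr 2; ring
  have hI' : IntegrableOn (fun y : ℝ => (1 + |y|) ^ j * sechW y) (Iic 0) := by
    have h := hI.comp_neg
    have h2 : IntegrableOn (fun y : ℝ => (1 + |y|) ^ j * sechW y) (Iio 0) := by
      simpa [sechW] using h
    exact (integrableOn_Iic_iff_integrableOn_Iio).2 h2
  rw [← integrableOn_univ, ← Iic_union_Ioi (a := (0:ℝ))]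
  exact hI'.union hI

/-- the line `1/2 + i y`. -/
noncomputable def ln (y : ℝ) : ℂ := 1/2 + Complex.I * y

lemma ln_norm_le (y : ℝ) : ‖ln y‖ ≤ 1 + |y| := by
  unfold ln
  calc _ ≤ ‖(1/2:ℂ)‖ + ‖Complex.I * y‖ := norm_add_le _ _
    _ ≤ _ := by simp; norm_num

lemma ln_cont : Continuous ln := by unfold ln; fun_prop

lemma exp_ln_norm (t y : ℝ) : ‖Complex.exp (t * ln y)‖ = Real.exp (t / 2) := by
  rw [Complex.norm_exp]
  congr 1; simp [ln]; ring

noncomputable def TT (j : ℕ) (t : ℝ) : ℂ := ∫ y, ln y ^ j * Complex.exp (t * ln y) * sechW y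

lemma TT_integrable (j : ℕ) {t : ℝ} (ht : t < 0) :
    Integrable (fun y => ln y ^ j * Complex.exp (t * ln y) * sechW y) := by
  have h1 := sechW_cont
  have h2 := ln_cont
  refine Integrable.mono' (sechW_poly_int j) (Continuous.aestronglyMeasurable (by fun_prop)) ?_
  filter_upwards with y
  rw [norm_mul, norm_mul, norm_pow, exp_ln_norm, Complex.norm_real, Real.norm_of_nonneg (sechW_pos y).le]
  have : Real.exp (t/2) ≤ 1 := Real.exp_le_one_iff.2 (by linarith)
  have h3 := (sechW_pos y).le
  calc _ ≤ (1 + |y|) ^ j * 1 * sechW y := by gcongr; exact ln_norm_le y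
    _ = _ := by ring

lemma TT_deriv (j : ℕ) {t : ℝ} (ht : t < 0) : HasDerivAt (TT j) (TT (j+1) t) t := by
  have h1 := sechW_cont
  have h2 := ln_cont
  refine (hasDerivAt_integral_of_dominated_loc_of_deriv_le (F := fun (t : ℝ) (y : ℝ) => ln y ^ j * Complex.exp (t * ln y) * sechW y)
    (F' := fun (t : ℝ) (y : ℝ) => ln y ^ (j+1) * Complex.exp (t * ln y) * sechW y)
    (bound := fun y => (1 + |y|) ^ (j+1) * sechW y) (s := Iio 0) (Iio_mem_nhds ht) ?_ (TT_integrable j ht) ?_ ?_ (sechW_poly_int _) ?_).2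
  · filter_upwards with x; exact Continuous.aestronglyMeasurable (by fun_prop)
  · exact Continuous.aestronglyMeasurable (by fun_prop)
  · filter_upwards with y x hx
    rw [norm_mul, norm_mul, norm_pow, exp_ln_norm, Complex.norm_real, Real.norm_of_nonneg (sechW_pos y).le]
    have : Real.exp (x/2) ≤ 1 := Real.exp_le_one_iff.2 (by simp at hx; linarith)
    have h3 := (sechW_pos y).le
    calc _ ≤ (1 + |y|) ^ (j+1) * 1 * sechW y := by gcongr; exact ln_norm_le y
      _ = _ := by ring
  · filter_upwards with y x hx
    have h3 : HasDerivAt (fun x : ℝ => Complex.exp (x * ln y)) (Complex.exp (x * ln y) * ln y) x := by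
      have h4 : HasDerivAt (fun x : ℝ => (x:ℂ) * ln y) (ln y) x := by
        simpa using (Complex.ofRealCLM.hasDerivAt (x := x)).mul_const (ln y)
      exact h4.cexp
    refine ((h3.const_mul (ln y ^ j)).mul_const (sechW y : ℂ)).congr_deriv ?_
    ring

noncomputable def SS (j : ℕ) (t : ℝ) : ℝ := ∑' k : ℕ, ((k:ℝ)+1) ^ j * Real.exp (t * ((k:ℝ)+1))

lemma SS_summable (j : ℕ) {t : ℝ} (ht : t < 0) : Summable (fun k : ℕ => ((k:ℝ)+1) ^ j * Real.exp (t * ((k:ℝ)+1))) := by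
  have h := Real.summable_pow_mul_exp_neg_nat_mul j (r := -t) (by linarith)
  have h2 := (summable_nat_add_iff 1).2 h
  refine h2.congr fun k => ?_
  push_cast; congr 2; ring

lemma SS_deriv (j : ℕ) {t : ℝ} (ht : t < 0) : HasDerivAt (SS j) (SS (j+1) t) t := by
  refine hasDerivAt_tsum_of_isPreconnected (u := fun k : ℕ => ((k:ℝ)+1) ^ (j+1) * Real.exp (t/2 * ((k:ℝ)+1))) (t := Iio (t/2)) (y₀ := t)
    (g := fun (k : ℕ) (t : ℝ) => ((k:ℝ)+1) ^ j * Real.exp (t * ((k:ℝ)+1)))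
    (g' := fun (k : ℕ) (t : ℝ) => ((k:ℝ)+1) ^ (j+1) * Real.exp (t * ((k:ℝ)+1)))
    (SS_summable _ (by linarith)) isOpen_Iio (convex_Iio _).isPreconnected ?_ ?_ (by simp; linarith) (SS_summable j ht) (by simp; linarith)
  · intro k y _
    have h4 : HasDerivAt (fun y : ℝ => y * ((k:ℝ)+1)) ((k:ℝ)+1) y := by
      simpa using (hasDerivAt_id y).mul_const ((k:ℝ)+1)
    refine (h4.exp.const_mul (((k:ℝ)+1)^j)).congr_deriv ?_
    ring
  · intro k y hy
    rw [Real.norm_of_nonneg (by positivity)]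
    simp at hy
    gcongr

lemma sig_hasDeriv (y : ℝ) : HasDerivAt (fun y : ℝ => 1 / (1 + Real.exp (-(2 * π * y)))) (sechW y) y := by
  have h1 : HasDerivAt (fun y : ℝ => -(2 * π * y)) (-(2 * π)) y := by
    exact (((hasDerivAt_id y).const_mul (2 * π)).neg).congr_deriv (by simp)
  have h2 := (h1.exp.const_add 1).inv (by positivity)
  simp only [one_div]
  refine h2.congr_deriv ?_
  unfold sechW
  rw [Real.cosh_eq, show -(2 * π * y) = -(π * y) + -(π * y) by ring, Real.exp_add, Real.exp_neg]
  have := Real.exp_pos (π * y)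
  field_simp

lemma TT0 {t : ℝ} (ht : t < 0) : TT 0 t = -(t * Real.exp t / (1 - Real.exp t) : ℝ) := by
  set a : ℂ := Complex.I * t / (2 * π) with ha
  have hre : a.re = 0 := by
    have : a = ((t / (2 * π) : ℝ) : ℂ) * Complex.I := by rw [ha]; push_cast; ring
    rw [this, Complex.re_ofReal_mul]; simp
  have ha0 : a ≠ 0 := by
    rw [ha]; 
    have : (t:ℂ) ≠ 0 := by exact_mod_cast ht.ne
    have : (π:ℂ) ≠ 0 := by exact_mod_cast Real.pi_ne_zero
    simp [*]
  have hbeta := Complex.Gamma_mul_Gamma_eq_betaIntegral (s := 1 + a) (t := 1 - a) (by simp [hre]) (by simp [hre])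
  have hG2 : Complex.Gamma (1 + a + (1 - a)) = 1 := by
    rw [show (1 + a + (1 - a)) = ((1:ℕ):ℂ) + 1 by push_cast; ring, Complex.Gamma_nat_eq_factorial]; simp
  rw [hG2, one_mul, add_comm 1 a, Complex.Gamma_add_one _ ha0, mul_assoc, Complex.Gamma_mul_Gamma_one_sub] at hbeta
  -- integral
  have himg : (fun y : ℝ => 1 / (1 + Real.exp (-(2 * π * y)))) '' univ = Ioo 0 1 := by
    ext x; constructor
    · rintro ⟨y, -, rfl⟩
      have := Real.exp_pos (-(2 * π * y))
      refine ⟨by positivity, ?_⟩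
      simp only
      rw [div_lt_one (by positivity)]; linarith
    · rintro ⟨h0, h1⟩
      refine ⟨-Real.log (1/x - 1) / (2 * π), trivial, ?_⟩
      have h2 : 0 < 1 / x - 1 := by rw [sub_pos, lt_div_iff₀ h0]; linarith
      simp only
      rw [show -(2 * π * (-Real.log (1 / x - 1) / (2 * π))) = Real.log (1/x - 1) by field_simp, Real.exp_log h2]
      simp
  have hinj : InjOn (fun y : ℝ => 1 / (1 + Real.exp (-(2 * π * y)))) univ := by
    intro x _ y _ hxy
    simp at hxy
    exact hxy
  have hint : Complex.betaIntegral (a + 1) (1 - a) = ∫ y : ℝ, Complex.exp (Complex.I * t * y) * sechW y := by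
    unfold Complex.betaIntegral
    rw [intervalIntegral.integral_of_le zero_le_one, ← integral_Icc_eq_integral_Ioc, integral_Icc_eq_integral_Ioo, ← himg,
      integral_image_eq_integral_abs_deriv_smul MeasurableSet.univ (fun y _ => (sig_hasDeriv y).hasDerivWithinAt) hinj, setIntegral_univ]
    congr 1; ext y
    rw [abs_of_pos (sechW_pos y), Complex.real_smul, mul_comm]
    congr 1
    have hE := Real.exp_pos (-(2 * π * y))
    have e1 : ((1:ℂ) - ((1 / (1 + Real.exp (-(2 * π * y))) : ℝ):ℂ)) = ((Real.exp (-(2 * π * y)) / (1 + Real.exp (-(2 * π * y))) : ℝ) : ℂ) := by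
      rw [← Complex.ofReal_one, ← Complex.ofReal_sub]; congr 1; field_simp; ring
    rw [e1, show a + 1 - 1 = a by ring, show 1 - a - 1 = -a by ring,
      Complex.cpow_def_of_ne_zero (by exact_mod_cast (by positivity : (1 / (1 + Real.exp (-(2 * π * y))))≠0)),
      Complex.cpow_def_of_ne_zero (by exact_mod_cast (by positivity : (Real.exp (-(2 * π * y)) / (1 + Real.exp (-(2 * π * y))))≠0)),
      ← Complex.ofReal_log (by positivity), ← Complex.ofReal_log (by positivity), ← Complex.exp_add,
      Real.log_div (by positivity) (by positivity), Real.log_div (by positivity) (by positivity), Real.log_exp]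
    congr 1
    rw [ha]
    have : (π:ℂ) ≠ 0 := by exact_mod_cast Real.pi_ne_zero
    push_cast; simp
    field_simp
    ring
  rw [hint] at hbeta
  have hT : TT 0 t = Complex.exp (t / 2) * ∫ y : ℝ, Complex.exp (Complex.I * t * y) * sechW y := by
    unfold TT
    rw [← integral_const_mul]
    congr 1; ext y
    rw [pow_zero, one_mul, ← mul_assoc, ← Complex.exp_add, ln]
    congr 2; ring
  rw [hT, ← hbeta]
  have hsin : Complex.sin (π * a) = Complex.I * Complex.sinh (t/2) := by
    have : (π:ℂ) ≠ 0 := by exact_mod_cast Real.pi_ne_zero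
    rw [show (π:ℂ) * a = (t/2:ℂ) * Complex.I by rw [ha]; field_simp, Complex.sin_mul_I]; ring
  rw [hsin, ha]
  have hsh : Complex.sinh (t/2:ℂ) = (Real.sinh (t/2) : ℝ) := by push_cast; rfl
  have hex : Complex.exp (t/2:ℂ) = (Real.exp (t/2) : ℝ) := by push_cast; rfl
  rw [hsh, hex]
  have hs0 : Real.sinh (t/2) ≠ 0 := by rw [Ne, Real.sinh_eq_zero]; linarith
  have hs1 : (Real.sinh (t/2) : ℂ) ≠ 0 := by exact_mod_cast hs0
  have hpi : (π:ℂ) ≠ 0 := by exact_mod_cast Real.pi_ne_zero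
  have hreal : Real.exp (t/2) * (t / 2 / Real.sinh (t/2)) = -(t * Real.exp t / (1 - Real.exp t)) := by
    have h1 : Real.exp t = Real.exp (t/2) * Real.exp (t/2) := by rw [← Real.exp_add]; congr 1; ring
    have h2 : Real.exp t < 1 := by rw [Real.exp_lt_one_iff]; exact ht
    have h3 : 1 - Real.exp t ≠ 0 := by linarith
    have h5 : Real.sinh (t/2) = - (1 - Real.exp t) / (2 * Real.exp (t/2)) := by
      rw [Real.sinh_eq, Real.exp_neg, h1]; have := Real.exp_pos (t/2); field_simp; ring
    rw [h5]
    have := Real.exp_pos (t/2)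
    rw [h1] at h3 ⊢
    field_simp
  rw [← Complex.ofReal_neg, ← hreal]
  push_cast
  field_simp

lemma SS0 {t : ℝ} (ht : t < 0) : SS 0 t = Real.exp t / (1 - Real.exp t) := by
  have h2 : Real.exp t < 1 := by rw [Real.exp_lt_one_iff]; exact ht
  unfold SS
  have : ∀ k : ℕ, ((k:ℝ)+1)^0 * Real.exp (t * ((k:ℝ)+1)) = Real.exp t * Real.exp t ^ k := by
    intro k
    rw [← Real.exp_nat_mul, ← Real.exp_add]; simp; ring
  simp_rw [this]
  rw [tsum_mul_left, tsum_geometric_of_lt_one (Real.exp_pos t).le h2]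
  rfl

lemma TT_SS (j : ℕ) : ∀ {t : ℝ}, t < 0 → TT j t = -((t * SS j t + j * SS (j-1) t : ℝ) : ℂ) := by
  induction j with
  | zero =>
    intro t ht
    rw [TT0 ht, SS0 ht]; push_cast; ring
  | succ j ih =>
    intro t ht
    have h1 := TT_deriv j ht
    have h2 : HasDerivAt (fun t : ℝ => (t * SS j t + j * SS (j-1) t : ℝ)) (t * SS (j+1) t + (j+1) * SS j t) t := by
      have h3 := ((hasDerivAt_id t).mul (SS_deriv j ht))
      rcases j with _ | j
      · simp at h3 ⊢
        refine h3.congr_deriv ?_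
        ring
      · have h4 := h3.add ((SS_deriv j ht).const_mul ((j+1:ℕ):ℝ))
        refine h4.congr_deriv ?_
        simp; ring
    have h5 : HasDerivAt (TT j) (-((t * SS (j+1) t + (j+1) * SS j t : ℝ) : ℂ)) t := by
      refine (h2.ofReal_comp.neg).congr_of_eventuallyEq ?_
      filter_upwards [Iio_mem_nhds ht] with x hx
      exact ih hx
    rw [h1.unique h5]
    simp

/-- evaluation functional. -/
noncomputable def Lam (t : ℝ) (G : ℝ[X]) : ℝ := ∑' k : ℕ, G.eval ((k:ℝ)+1) * Real.exp (t * ((k:ℝ)+1))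

lemma Lam_summable (G : ℝ[X]) {t : ℝ} (ht : t < 0) : Summable (fun k : ℕ => G.eval ((k:ℝ)+1) * Real.exp (t * ((k:ℝ)+1))) := by
  induction G using Polynomial.induction_on' with
  | add p q hp hq => simpa [add_mul] using hp.add hq
  | monomial n a => simpa [mul_assoc] using (SS_summable n ht).mul_left a

lemma Lam_add (G H : ℝ[X]) {t : ℝ} (ht : t < 0) : Lam t (G + H) = Lam t G + Lam t H := by
  unfold Lam
  rw [← (Lam_summable G ht).tsum_add (Lam_summable H ht)]
  congr 1; ext k; simp; ring

lemma Lam_C_mul (a : ℝ) (G : ℝ[X]) {t : ℝ} : Lam t (C a * G) = a * Lam t G := by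
  unfold Lam
  rw [← tsum_mul_left]
  congr 1; ext k; simp; ring

lemma J_integrable (G : ℝ[X]) {t : ℝ} (ht : t < 0) : Integrable (fun y => (G.aeval (ln y)) * Complex.exp (t * ln y) * sechW y) := by
  induction G using Polynomial.induction_on' with
  | add p q hp hq =>
    simp only [map_add, add_mul]
    exact hp.add hq
  | monomial n a => simpa [mul_assoc, aeval_monomial] using (TT_integrable n ht).const_mul (a:ℂ)

theorem J_rep (G : ℝ[X]) {t : ℝ} (ht : t < 0) :
    ((Lam t (C t * G + derivative G) : ℝ) : ℂ) = - ∫ y, (G.aeval (ln y)) * Complex.exp (t * ln y) * sechW y := by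
  induction G using Polynomial.induction_on' with
  | add p q hp hq =>
    have : C t * (p + q) + derivative (p + q) = (C t * p + derivative p) + (C t * q + derivative q) := by
      simp; ring
    rw [this, Lam_add _ _ ht, Complex.ofReal_add, hp, hq]
    simp only [map_add, add_mul]
    rw [integral_add]
    · ring
    · exact J_integrable p ht
    · exact J_integrable q ht
  | monomial n a =>
    have h1 : ∫ y, ((monomial n a).aeval (ln y)) * Complex.exp (t * ln y) * sechW y = a * TT n t := by
      unfold TT
      rw [← integral_const_mul]
      congr 1; ext y; simp [aeval_monomial]; ring
    rw [h1, TT_SS n ht]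
    have h2 : ∀ i (b : ℝ), Lam t (monomial i b) = b * SS i t := by
      intro i b
      unfold Lam SS
      rw [← tsum_mul_left]
      congr 1; ext k; simp; ring
    rw [Lam_add _ _ ht, Lam_C_mul, derivative_monomial, h2, h2]
    push_cast; ring

theorem J_bound (G : ℝ[X]) {t : ℝ} (ht : t < 0) :
    |Lam t (C t * G + derivative G)| ≤ ∫ y, ‖G.aeval (ln y)‖ * sechW y := by
  rw [← Real.norm_eq_abs, ← Complex.norm_real, J_rep G ht, norm_neg]
  refine (norm_integral_le_integral_norm _).trans ?_
  have hI := (J_integrable G ht).norm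
  have hE : ∀ y, ‖(G.aeval (ln y)) * Complex.exp (t * ln y) * sechW y‖ = Real.exp (t/2) * (‖G.aeval (ln y)‖ * sechW y) := by
    intro y
    rw [norm_mul, norm_mul, exp_ln_norm, Complex.norm_real, Real.norm_of_nonneg (sechW_pos y).le]; ring
  simp_rw [hE]
  rw [integral_const_mul]
  have h1 : Real.exp (t/2) ≤ 1 := Real.exp_le_one_iff.2 (by linarith)
  have h2 : 0 ≤ ∫ y, ‖G.aeval (ln y)‖ * sechW y :=
    integral_nonneg fun y => mul_nonneg (norm_nonneg _) (sechW_pos y).le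
  nlinarith

end

section
open Real Set Filter Topology MeasureTheory Polynomial

noncomputable def tau : ℝ := Real.log (2/3)
lemma tau_neg : tau < 0 := Real.log_neg (by norm_num) (by norm_num)
lemma exp_tau : Real.exp tau = 2/3 := Real.exp_log (by norm_num)

noncomputable def sh (c : ℝ) (G : ℝ[X]) : ℝ[X] := G.comp (X + C c)

lemma sh_eval (c x : ℝ) (G : ℝ[X]) : (sh c G).eval x = G.eval (x + c) := by simp [sh]
lemma sh_mul (c : ℝ) (G H : ℝ[X]) : sh c (G * H) = sh c G * sh c H := by simp [sh]
lemma sh_sh (c d : ℝ) (G : ℝ[X]) : sh c (sh d G) = sh (d + c) G := by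
  simp only [sh, comp_assoc]; congr 1; simp; ring
lemma sh_zero (G : ℝ[X]) : sh 0 G = G := by simp [sh]
lemma sh_deriv (c : ℝ) (G : ℝ[X]) : derivative (sh c G) = sh c (derivative G) := by
  simp [sh, derivative_comp]

lemma Lam_shift (G : ℝ[X]) : Lam tau G = 2/3 * (Lam tau (sh 1 G) + G.eval 1) := by
  have h := (Lam_summable G tau_neg).tsum_eq_zero_add
  have h1 : Lam tau G = ∑' k : ℕ, G.eval ((k:ℝ)+1) * Real.exp (tau * ((k:ℝ)+1)) := rfl
  rw [h1, h]
  have h2 : ∀ k : ℕ, G.eval (((k+1:ℕ):ℝ)+1) * Real.exp (tau * (((k+1:ℕ):ℝ)+1)) =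
     2/3 * ((sh 1 G).eval ((k:ℝ)+1) * Real.exp (tau * ((k:ℝ)+1))) := by
    intro k
    rw [sh_eval, ← exp_tau]; push_cast
    rw [show tau * ((k:ℝ) + 1 + 1) = tau + tau * (k + 1) by ring, Real.exp_add]; ring
  simp_rw [h2]
  rw [tsum_mul_left]
  simp [exp_tau, Lam]; ring

lemma Lam_zero : Lam tau 0 = 0 := by simp [Lam]
lemma Lam_sub (G H : ℝ[X]) : Lam tau (G - H) = Lam tau G - Lam tau H := by
  have := Lam_add (G - H) H tau_neg
  rw [sub_add_cancel] at this; linarith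

def IntVal (G : ℝ[X]) : Prop := ∀ k : ℤ, ∃ n : ℤ, G.eval (k:ℝ) = n

lemma IntVal.sh {G : ℝ[X]} (h : IntVal G) (c : ℤ) : IntVal (sh c G) := by
  intro k
  obtain ⟨n, hn⟩ := h (k + c)
  exact ⟨n, by rw [sh_eval, ← hn]; push_cast; rfl⟩

lemma IntVal.sub {G H : ℝ[X]} (h : IntVal G) (h' : IntVal H) : IntVal (G - H) := by
  intro k
  obtain ⟨n, hn⟩ := h k
  obtain ⟨n', hn'⟩ := h' k
  exact ⟨n - n', by simp [hn, hn']⟩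

lemma IntVal.add {G H : ℝ[X]} (h : IntVal G) (h' : IntVal H) : IntVal (G + H) := by
  intro k
  obtain ⟨n, hn⟩ := h k
  obtain ⟨n', hn'⟩ := h' k
  exact ⟨n + n', by simp [hn, hn']⟩

lemma IntVal.mul {G H : ℝ[X]} (h : IntVal G) (h' : IntVal H) : IntVal (G * H) := by
  intro k
  obtain ⟨n, hn⟩ := h k
  obtain ⟨n', hn'⟩ := h' k
  exact ⟨n * n', by simp [hn, hn']⟩

lemma IntVal.C (a : ℤ) : IntVal (C (a:ℝ)) := fun k => ⟨a, by simp⟩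
lemma IntVal.X : IntVal X := fun k => ⟨k, by simp⟩

lemma Lam_int (n : ℕ) : ∀ G : ℝ[X], G.natDegree ≤ n → IntVal G → ∃ N : ℤ, Lam tau G = 2 * N := by
  induction n with
  | zero =>
    intro G hd hG
    obtain ⟨N, hN⟩ := hG 0
    have hC := eq_C_of_natDegree_le_zero hd
    have h := Lam_shift G
    have h1 : sh 1 G = G := by rw [hC]; simp [sh]
    have h2 : G.eval 1 = N := by rw [← hN]; rw [hC]; simp
    rw [h1, h2] at h
    exact ⟨N, by linarith⟩
  | succ n ih =>
    intro G hd hG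
    have hI : IntVal (sh 1 G - G) := by
      have := hG.sh 1
      push_cast at this
      exact this.sub hG
    have hdeg : (sh 1 G - G).natDegree ≤ n := by
      by_cases h0 : G.natDegree = 0
      · rw [eq_C_of_natDegree_eq_zero h0]; simp [sh]
      by_cases hz : sh 1 G - G = 0
      · rw [hz]; simp
      have hG0 : G ≠ 0 := by rintro rfl; simp at h0
      have hXC : (X + C (1:ℝ)).natDegree = 1 := natDegree_X_add_C 1
      have hnd : (sh 1 G).natDegree = G.natDegree := by rw [sh, natDegree_comp, hXC, mul_one]
      have hs0 : sh 1 G ≠ 0 := by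
        intro h; rw [h] at hnd; simp at hnd; omega
      have hlc : (sh 1 G).leadingCoeff = G.leadingCoeff := by
        unfold sh; rw [leadingCoeff_comp (by rw [hXC]; exact one_ne_zero), (monic_X_add_C (1:ℝ)).leadingCoeff]; simp
      have hd2 : (sh 1 G).degree = G.degree := by
        rw [degree_eq_natDegree hs0, degree_eq_natDegree hG0, hnd]
      have := natDegree_lt_natDegree hz (degree_sub_lt_left hd2 hs0 hlc)
      omega
    obtain ⟨N, hN⟩ := ih _ hdeg hI
    obtain ⟨N', hN'⟩ := hG 1
    have h := Lam_shift G
    rw [Lam_sub] at hN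
    push_cast at hN'
    rw [hN'] at h
    exact ⟨2 * N + N', by push_cast; linarith⟩

lemma Lam_shift_many (b : ℕ) : ∀ G : ℝ[X], (∀ k : ℕ, k < b → G.eval ((k:ℝ)+1) = 0) →
    Lam tau G = (2/3)^b * Lam tau (sh b G) := by
  induction b with
  | zero => intro G _; simp [sh_zero]
  | succ b ih =>
    intro G h
    have h1 := Lam_shift G
    have h0 := h 0 (by omega)
    simp at h0
    rw [h1, h0, ih (sh 1 G), sh_sh]
    · push_cast; rw [add_comm (1:ℝ) b]; ring
    · intro k hk
      rw [sh_eval]; have := h (k+1) (by omega); push_cast at this; exact this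

lemma Lam_int_strong (a b : ℕ) (G : ℝ[X]) (hG : IntVal G)
    (hz : ∀ k : ℤ, -(a:ℤ) < k → k ≤ b → G.eval (k:ℝ) = 0) :
    ∃ N : ℤ, Lam tau G = (2 * 2^b * 3^a : ℝ) * N := by
  obtain ⟨N, hN⟩ := Lam_int _ G le_rfl hG
  obtain ⟨N1, hN1⟩ := Lam_int _ (sh (b:ℝ) G) le_rfl (by exact_mod_cast hG.sh b)
  obtain ⟨N2, hN2⟩ := Lam_int _ (sh (-(a:ℝ)) G) le_rfl (by exact_mod_cast hG.sh (-a))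
  have e1 := Lam_shift_many b G (by
    intro k hk
    have := hz (k+1) (by omega) (by omega)
    push_cast at this; exact this)
  have e2 := Lam_shift_many a (sh (-(a:ℝ)) G) (by
    intro k hk
    rw [sh_eval]
    have := hz (k+1-a) (by omega) (by omega)
    push_cast at this; rw [← this]; congr 1)
  rw [sh_sh, neg_add_cancel, sh_zero, hN, hN2, div_pow] at e2
  rw [hN, hN1, div_pow] at e1
  have f1 : 3^b * N = 2^b * N1 := by
    have h3 : (3:ℝ)^b ≠ 0 := by positivity
    field_simp at e1
    have : ((3^b * N : ℤ) : ℝ) = ((2^b * N1 : ℤ) : ℝ) := by push_cast; linarith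
    exact_mod_cast this
  have f2 : 3^a * N2 = 2^a * N := by
    have h3 : (3:ℝ)^a ≠ 0 := by positivity
    field_simp at e2
    have : ((3^a * N2 : ℤ) : ℝ) = ((2^a * N : ℤ) : ℝ) := by push_cast; linarith
    exact_mod_cast this
  have c1 : IsCoprime ((2:ℤ)^b) (3^b) := IsCoprime.pow (by norm_num)
  have c2 : IsCoprime ((3:ℤ)^a) (2^a) := IsCoprime.pow (by norm_num)
  have c3 : IsCoprime ((2:ℤ)^b) (3^a) := IsCoprime.pow (by norm_num)
  have d1 : (2:ℤ)^b ∣ N := c1.dvd_of_dvd_mul_left ⟨N1, f1⟩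
  have d2 : (3:ℤ)^a ∣ N := c2.dvd_of_dvd_mul_left ⟨N2, f2.symm⟩
  obtain ⟨M, hM⟩ := c3.mul_dvd d1 d2
  refine ⟨M, ?_⟩
  rw [hN, hM]; push_cast; ring

/-- differential operator. -/
noncomputable def Dop (a b c : ℝ) (g : ℝ[X]) : ℝ[X] :=
  C a * derivative (derivative g) - C b * derivative g + C c * g

lemma Dop_sh (a b c d : ℝ) (g : ℝ[X]) : Dop a b c (sh d g) = sh d (Dop a b c g) := by
  simp only [Dop, sh_deriv]; simp [sh]

lemma Dop_add (a b c : ℝ) (g h : ℝ[X]) : Dop a b c (g + h) = Dop a b c g + Dop a b c h := by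
  simp only [Dop]; simp; ring
lemma Dop_Cmul (a b c d : ℝ) (g : ℝ[X]) : Dop a b c (C d * g) = C d * Dop a b c g := by
  simp only [Dop]; simp; ring

lemma triple_zero {x : ℝ} {g : ℝ[X]} (h : (X - C x)^3 ∣ g) :
    g.eval x = 0 ∧ (derivative g).eval x = 0 ∧ (derivative (derivative g)).eval x = 0 := by
  obtain ⟨q, rfl⟩ := h
  simp [derivative_mul, derivative_pow]

noncomputable def LamD (a b c : ℝ) (g : ℝ[X]) : ℝ := Lam tau (Dop a b c g)
lemma LamD_add (a b c : ℝ) (g h : ℝ[X]) : LamD a b c (g + h) = LamD a b c g + LamD a b c h := by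
  rw [LamD, Dop_add, Lam_add _ _ tau_neg]; rfl
lemma LamD_Cmul (a b c d : ℝ) (g : ℝ[X]) : LamD a b c (C d * g) = d * LamD a b c g := by
  rw [LamD, Dop_Cmul, Lam_C_mul]; rfl
lemma LamD_shift (a b c : ℝ) (g : ℝ[X]) : LamD a b c g = 2/3 * (LamD a b c (sh 1 g) + (Dop a b c g).eval 1) := by
  rw [LamD, Lam_shift, ← Dop_sh]; rfl
lemma LamD_shift0 (a b c : ℝ) {g : ℝ[X]} (h : (X - C 1)^3 ∣ g) : LamD a b c g = 2/3 * LamD a b c (sh 1 g) := by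
  obtain ⟨h0, h1, h2⟩ := triple_zero h
  rw [LamD_shift]; simp [Dop, h0, h1, h2]

theorem nonvanish (a b c : ℝ) (F u v : ℝ[X]) (hF0 : F ≠ 0) (hs : F.Splits)
    (hFu : sh 1 (F * u) = F * v) (h1 : (X - C 1)^3 ∣ F * u)
    (hu : u.Monic) (hud : u.natDegree = 3) (hv : v.Monic) (hvd : v.natDegree = 3)
    (hj : ∀ j < 3, LamD a b c (F * X ^ j) = 0) : a = 0 ∧ b = 0 ∧ c = 0 := by
  -- step 1
  have key : ∀ W, LamD a b c (F * (u * W - C (2/3) * (v * sh 1 W))) = 0 := by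
    intro W
    have e : F * (u * W - C (2/3) * (v * sh 1 W)) = F * u * W + C (-(2/3)) * (F * v * sh 1 W) := by
      simp; ring
    rw [e, LamD_add, LamD_Cmul, LamD_shift0 a b c (h1.mul_right W), sh_mul, hFu]
    ring
  have step : ∀ n : ℕ, ∀ W : ℝ[X], W.natDegree < n → LamD a b c (F * W) = 0 := by
    intro n
    induction n with
    | zero => intro W h; omega
    | succ n ih =>
      intro W hW
      rcases lt_or_ge n 3 with hn | hn
      · rw [as_sum_range' W 3 (by omega), Finset.mul_sum]
        simp only [Finset.sum_range_succ, Finset.sum_range_zero, zero_add, LamD_add]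
        have : ∀ i < 3, LamD a b c (F * monomial i (W.coeff i)) = 0 := by
          intro i hi
          rw [← C_mul_X_pow_eq_monomial, mul_left_comm, LamD_Cmul, hj i hi, mul_zero]
        rw [this 0 (by norm_num), this 1 (by norm_num), this 2 (by norm_num)]; norm_num
      · obtain ⟨d, rfl⟩ := Nat.exists_eq_add_of_le' hn
        set Q := u * X ^ d - C (2/3) * (v * sh 1 (X ^ d)) with hQ
        have hsd : sh 1 (X ^ d : ℝ[X]) = (X + C 1) ^ d := by simp [sh]
        have m1 : (u * X ^ d).Monic := hu.mul (monic_X_pow d)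
        have m2 : (v * (X + C 1) ^ d).Monic := hv.mul ((monic_X_add_C 1).pow d)
        have n1 : (u * X ^ d).natDegree = d + 3 := by
          rw [hu.natDegree_mul (monic_X_pow d), hud, natDegree_X_pow]; ring
        have n2 : (v * (X + C 1) ^ d).natDegree = d + 3 := by
          rw [hv.natDegree_mul ((monic_X_add_C 1).pow d), hvd, (monic_X_add_C (1:ℝ)).natDegree_pow, natDegree_X_add_C]; ring
        have c1 : Q.coeff (d+3) = 1/3 := by
          rw [hQ, hsd, coeff_sub, coeff_C_mul]
          have a1 := m1.coeff_natDegree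
          have a2 := m2.coeff_natDegree
          rw [n1] at a1; rw [n2] at a2
          rw [a1, a2]; norm_num
        have nQ : Q.natDegree ≤ d + 3 := by
          rw [hQ, hsd]
          refine (natDegree_sub_le _ _).trans (max_le n1.le ?_)
          exact (natDegree_C_mul_le _ _).trans n2.le
        have hW' : (W - C (3 * W.coeff (d+3)) * Q).natDegree < d + 3 := by
          have hle : (W - C (3 * W.coeff (d+3)) * Q).natDegree ≤ d + 3 :=
            (natDegree_sub_le _ _).trans (max_le (by omega) ((natDegree_C_mul_le _ _).trans nQ))
          have hco : (W - C (3 * W.coeff (d+3)) * Q).coeff (d+3) = 0 := by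
            rw [coeff_sub, coeff_C_mul, c1]; ring
          rcases hle.lt_or_eq with h | h
          · exact h
          · exfalso
            generalize W - C (3 * W.coeff (d+3)) * Q = R at h hco
            rw [← h, coeff_natDegree, leadingCoeff_eq_zero] at hco
            rw [hco] at h; simp at h
        have e1 := ih _ hW'
        have e2 : F * W = F * (W - C (3 * W.coeff (d+3)) * Q) + C (3 * W.coeff (d+3)) * (F * Q) := by ring
        rw [e2, LamD_add, e1, LamD_Cmul, key]; simp
  have all : ∀ W, LamD a b c (F * W) = 0 := fun W => step _ W (Nat.lt_succ_self _)
  -- ideal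
  let I : Ideal ℝ[X] :=
    { carrier := {g | ∀ W, LamD a b c (g * W) = 0}
      add_mem' := by
        intro g h hg hh W
        rw [add_mul, LamD_add, hg, hh, add_zero]
      zero_mem' := by intro W; simp [LamD, Dop, Lam_zero]
      smul_mem' := by
        intro r g hg W
        rw [smul_eq_mul, mul_assoc, mul_left_comm]; exact hg _ }
  have hFI : F ∈ I := all
  obtain ⟨g, hg⟩ := (IsPrincipalIdealRing.principal I).principal
  have hgI : ∀ p, p ∈ I ↔ g ∣ p := by
    intro p; rw [hg]; exact Ideal.mem_span_singleton
  have hgF : g ∣ F := (hgI F).1 hFI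
  have hg0 : g ≠ 0 := by rintro rfl; exact hF0 (zero_dvd_iff.1 hgF)
  have r1 : g ∣ sh 1 g * X ^ 3 := by
    rw [← hgI]
    intro W
    have hmem : g * (X - C 1)^3 ∈ I := (hgI _).2 (dvd_mul_right _ _)
    have h2 := hmem (sh (-1) W)
    rw [LamD_shift0 a b c ((dvd_mul_left _ g).mul_right _), sh_mul, sh_mul, sh_sh, neg_add_cancel, sh_zero] at h2
    have h3 : sh 1 ((X - C 1 : ℝ[X])^3) = X ^ 3 := by simp [sh]
    rw [h3] at h2
    linarith
  have r2 : g ∣ sh (-1) g * (X - C 1)^3 := by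
    rw [← hgI]
    intro W
    have hmem : g * X ^ 3 ∈ I := (hgI _).2 (dvd_mul_right _ _)
    have h2 := hmem (sh 1 W)
    rw [LamD_shift0 a b c ((dvd_mul_left _ _).mul_right _), sh_mul, sh_mul, sh_sh, neg_add_cancel, sh_zero]
    have h3 : sh 1 ((X - C 1 : ℝ[X])^3) = X ^ 3 := by simp [sh]
    rw [h3, h2, mul_zero]
  have hroots : g.roots.toFinset = ∅ := by
    by_contra hne
    have hne' : g.roots.toFinset.Nonempty := Finset.nonempty_iff_ne_empty.2 hne
    have mr : ∀ x, x ∈ g.roots.toFinset ↔ g.eval x = 0 := by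
      intro x; rw [Multiset.mem_toFinset, mem_roots hg0]; rfl
    have hmax := (mr _).1 (Finset.max'_mem _ hne')
    have hmin := (mr _).1 (Finset.min'_mem _ hne')
    set M := g.roots.toFinset.max' hne'
    set m := g.roots.toFinset.min' hne'
    have hM0 : M = 0 := by
      have := eval_eq_zero_of_dvd_of_eval_eq_zero r1 hmax
      rw [eval_mul, sh_eval, mul_eq_zero] at this
      rcases this with h | h
      · have := Finset.le_max' _ _ ((mr _).2 h); linarith
      · simpa using h
    have hm1 : m = 1 := by
      have := eval_eq_zero_of_dvd_of_eval_eq_zero r2 hmin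
      rw [eval_mul, sh_eval, mul_eq_zero] at this
      rcases this with h | h
      · have := Finset.min'_le _ _ ((mr _).2 h); linarith
      · simp at h; linarith
    have : m ≤ M := Finset.min'_le_max' _ hne'
    linarith
  have hgs : g.Splits := hs.of_dvd hF0 hgF
  have hgd : g.natDegree = 0 := by
    rw [hgs.natDegree_eq_card_roots]
    rw [Multiset.toFinset_eq_empty] at hroots
    rw [hroots]; rfl
  have hunit : IsUnit g := by
    rw [isUnit_iff_degree_eq_zero, degree_eq_natDegree hg0, hgd]; rfl
  have hone : (1 : ℝ[X]) ∈ I := (hgI 1).2 (hunit.dvd)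
  have hz : ∀ W, LamD a b c W = 0 := fun W => by simpa using hone W
  have hb : ∀ W, (Dop a b c W).eval 1 = 0 := by
    intro W
    have := LamD_shift a b c W
    rw [hz, hz] at this; linarith
  have e1 := hb 1
  have e2 := hb (X - C 1)
  have e3 := hb ((X - C 1)^2)
  simp [Dop, derivative_pow] at e1 e2 e3
  exact ⟨e3, e2, e1⟩

end

section
open Polynomial

/-- intervals `[a/b, c/11)`, coded as `(a,b,c)`. -/
def S1 : Finset (ℕ × ℕ × ℕ) := {(1,13,1),(2,13,2),(3,13,3),(4,13,4),(4,10,5),(1,2,6),(7,12,7),(2,3,8),(7,9,9),(8,9,10)}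
def S2 : Finset (ℕ × ℕ × ℕ) := {(1,12,1),(2,12,2),(3,12,3),(1,3,4),(4,9,5),(7,13,6),(8,13,7),(7,10,8),(8,10,9),(9,10,10)}

def cov (n p : ℕ) (x : ℕ × ℕ × ℕ) : Prop := x.1 * p ≤ x.2.1 * (n % p) ∧ 11 * (n % p) < x.2.2 * p
instance (n p : ℕ) (x : ℕ × ℕ × ℕ) : Decidable (cov n p x) := by unfold cov; infer_instance

def goodS (S : Finset (ℕ × ℕ × ℕ)) : Prop :=
  (∀ x ∈ S, 0 < x.2.1 ∧ x.2.2 * x.2.1 ≤ 11 * x.1 + x.2.1 ∧ 1 ≤ x.2.2 ∧ x.2.2 ≤ 10 ∧ 0 < x.1 ∧ 11 * x.1 < x.2.2 * x.2.1) ∧ ∀ x ∈ S, ∀ y ∈ S, x.2.2 = y.2.2 → x = y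
lemma good1 : goodS S1 := by unfold goodS; decide
lemma good2 : goodS S2 := by unfold goodS; decide

def gn (S : Finset (ℕ × ℕ × ℕ)) (n p : ℕ) : ℕ := (S.filter (cov n p)).card

lemma cov_low {S : Finset (ℕ × ℕ × ℕ)} (hS : goodS S) {n p : ℕ} {x : ℕ × ℕ × ℕ} (hx : x ∈ S) (h : cov n p x) :
    x.2.2 * p ≤ 11 * (n % p) + p := by
  obtain ⟨h1, h2, h3, -⟩ := hS.1 x hx
  have h4 := h.1
  have : x.2.1 * (x.2.2 * p) ≤ x.2.1 * (11 * (n % p) + p) := by nlinarith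
  exact Nat.le_of_mul_le_mul_left this h1

lemma gn_le_one {S : Finset (ℕ × ℕ × ℕ)} (hS : goodS S) {n p : ℕ} : gn S n p ≤ 1 := by
  rcases Nat.eq_zero_or_pos p with rfl | hp
  · unfold gn
    rw [Finset.filter_false_of_mem]
    · simp
    · intro x hx h; have := h.2; simp at this
  unfold gn
  rw [Finset.card_le_one]
  intro x hx y hy
  rw [Finset.mem_filter] at hx hy
  apply hS.2 x hx.1 y hy.1
  have a1 := cov_low hS hx.1 hx.2
  have a2 := cov_low hS hy.1 hy.2
  have b1 := hx.2.2
  have b2 := hy.2.2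
  have c1 : x.2.2 * p < (y.2.2 + 1) * p := by linarith
  have c2 : y.2.2 * p < (x.2.2 + 1) * p := by linarith
  have d1 := Nat.lt_of_mul_lt_mul_right c1
  have d2 := Nat.lt_of_mul_lt_mul_right c2
  omega

def gainp (n p : ℕ) : ℕ := gn S1 n p + gn S2 n p
lemma gainp_le (n p : ℕ) : gainp n p ≤ 2 := by
  have := gn_le_one good1 (n := n) (p := p)
  have := gn_le_one good2 (n := n) (p := p)
  unfold gainp; omega

def Dm (m : ℕ) : ℕ := ∏ p ∈ Nat.primesLE (1100 * m), p ^ (2 * Nat.log p (1100 * m) - gainp (100 * m) p)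

lemma count_one (P : ℕ) (hP : 0 < P) (L : ℕ) (c : ℤ) :
    (((Finset.range L).filter (fun j : ℕ => (P:ℤ) ∣ c - j)).card : ℤ) =
      L / P + if c % P < (L:ℤ) % P then 1 else 0 := by
  have hP' : (0:ℤ) < P := by exact_mod_cast hP
  have h1 : ((Finset.range L).filter (fun j : ℕ => (P:ℤ) ∣ c - j)).card =
      ((Finset.Ioc (c - L) c).filter (fun x => (P:ℤ) ∣ x)).card := by
    apply Finset.card_bij (fun (j:ℕ) _ => c - (j:ℤ))
    · intro j hj
      simp only [Finset.mem_filter, Finset.mem_range, Finset.mem_Ioc] at hj ⊢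
      refine ⟨⟨by omega, by omega⟩, hj.2⟩
    · intro a _ b _ h; omega
    · intro b hb
      simp only [Finset.mem_filter, Finset.mem_Ioc] at hb
      refine ⟨(c - b).toNat, ?_, by omega⟩
      simp only [Finset.mem_filter, Finset.mem_range]
      refine ⟨by omega, ?_⟩
      rw [Int.toNat_of_nonneg (by omega)]; simpa using hb.2
  rw [h1, Int.Ioc_filter_dvd_card _ _ hP']
  have e1 := Int.emod_add_mul_ediv c P
  have e2 := Int.emod_add_mul_ediv (L:ℤ) P
  have f1 := Int.emod_nonneg c hP'.ne'
  have f2 := Int.emod_lt_of_pos c hP'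
  have f3 := Int.emod_nonneg (L:ℤ) hP'.ne'
  have f4 := Int.emod_lt_of_pos (L:ℤ) hP'
  have g1 : ⌊(c:ℚ) / ((P:ℤ):ℚ)⌋ = c / P := by
    exact_mod_cast Rat.floor_intCast_div_natCast c P
  have g2 : ⌊((c - L : ℤ):ℚ) / ((P:ℤ):ℚ)⌋ = (c - L) / P := by
    exact_mod_cast Rat.floor_intCast_div_natCast (c - L) P
  rw [g1, g2]
  have hL0 : (0:ℤ) ≤ L / P := Int.ediv_nonneg (by omega) hP'.le
  split_ifs with h
  · have : (c - L) / P = c / P - L / P - 1 := by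
      have := (Int.ediv_emod_unique hP' (a := c - L) (r := c % P - L % P + P) (q := c / P - L / P - 1)).2
        ⟨by linear_combination e1 - e2, by omega, by omega⟩
      exact this.1
    rw [this, max_eq_left (by omega)]; ring
  · have : (c - L) / P = c / P - L / P := by
      have := (Int.ediv_emod_unique hP' (a := c - L) (r := c % P - L % P) (q := c / P - L / P)).2
        ⟨by linear_combination e1 - e2, by omega, by omega⟩
      exact this.1
    rw [this, max_eq_left (by omega)]; ring

lemma emod_sub_cases (c n p : ℤ) (hp : 0 < p) : (c - n) % p = c % p - n % p ∨ (c - n) % p = c % p - n % p + p := by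
  have e1 := Int.emod_add_mul_ediv c p
  have e2 := Int.emod_add_mul_ediv n p
  have f1 := Int.emod_nonneg c hp.ne'
  have f2 := Int.emod_lt_of_pos c hp
  have f3 := Int.emod_nonneg n hp.ne'
  have f4 := Int.emod_lt_of_pos n hp
  rcases le_or_gt (n % p) (c % p) with h | h
  · left
    exact ((Int.ediv_emod_unique hp (a := c - n) (r := c % p - n % p) (q := c / p - n / p)).2
        ⟨by linear_combination e1 - e2, by omega, by omega⟩).2
  · right
    exact ((Int.ediv_emod_unique hp (a := c - n) (r := c % p - n % p + p) (q := c / p - n / p - 1)).2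
        ⟨by linear_combination e1 - e2, by omega, by omega⟩).2

lemma gain_count (n p : ℕ) (hp : 0 < p) (y : ℤ) :
    (gainp n p : ℤ) ≤ (if y % p < ((11 * n : ℕ) : ℤ) % p then 1 else 0)
      + (if (y - n) % p < ((11 * n : ℕ) : ℤ) % p then 1 else 0)
      + (if (y - n - n) % p < ((11 * n : ℕ) : ℤ) % p then 1 else 0) := by
  have hp' : (0:ℤ) < p := by exact_mod_cast hp
  have f1 := Int.emod_nonneg y hp'.ne'
  have f2 := Int.emod_lt_of_pos y hp'
  have f3 := Int.emod_nonneg (y - n) hp'.ne'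
  have f4 := Int.emod_lt_of_pos (y - n) hp'
  have f5 := Int.emod_nonneg (y - n - n) hp'.ne'
  have f6 := Int.emod_lt_of_pos (y - n - n) hp'
  have g1 := emod_sub_cases y n p hp'
  have g2 := emod_sub_cases (y - n) n p hp'
  have hr : (n:ℤ) % p = ((n % p : ℕ) : ℤ) := by push_cast; rfl
  have hrp : n % p < p := Nat.mod_lt _ hp
  -- R
  have hR : ∀ S, goodS S → ∀ x ∈ S, cov n p x → ((11 * n : ℕ) : ℤ) % p = 11 * ((n % p : ℕ):ℤ) - (x.2.2 - 1) * p := by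
    intro S hS x hx hc
    have a1 := cov_low hS hx hc
    have a2 := hc.2
    have e := Int.emod_add_mul_ediv (n:ℤ) p
    refine ((Int.ediv_emod_unique hp' (a := ((11 * n : ℕ) : ℤ)) (q := 11 * (n / p) + (x.2.2 - 1))).2 ⟨?_, ?_, ?_⟩).2
    · push_cast; linear_combination 11 * e
    · zify at a1; push_cast at a1 ⊢; linarith
    · zify at a2; push_cast at a2 ⊢; linarith
  generalize ((11 * n : ℕ) : ℤ) % p = R at hR ⊢
  rw [hr] at g1 g2
  generalize y % (p:ℤ) = s0 at *
  generalize (y - n) % (p:ℤ) = s1 at *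
  generalize (y - n - n) % (p:ℤ) = s2 at *
  have k1 : ∀ x ∈ S1, cov n p x → s0 < R ∨ s1 < R ∨ s2 < R := by
    intro x hx hc
    have hR1 := hR S1 good1 x hx hc
    have c1 := hc.1
    have c2 := hc.2
    clear hR hc
    generalize n % p = r at *
    simp only [S1, Finset.mem_insert, Finset.mem_singleton] at hx
    rcases hx with rfl|rfl|rfl|rfl|rfl|rfl|rfl|rfl|rfl|rfl <;> simp only at hR1 c1 c2 <;> norm_num at hR1 <;> omega
  have k2 : ∀ x ∈ S2, cov n p x → (s0 < R ∧ s1 < R) ∨ (s1 < R ∧ s2 < R) ∨ (s0 < R ∧ s2 < R) := by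
    intro x hx hc
    have hR1 := hR S2 good2 x hx hc
    have c1 := hc.1
    have c2 := hc.2
    clear hR hc
    generalize n % p = r at *
    simp only [S2, Finset.mem_insert, Finset.mem_singleton] at hx
    rcases hx with rfl|rfl|rfl|rfl|rfl|rfl|rfl|rfl|rfl|rfl <;> simp only at hR1 c1 c2 <;> norm_num at hR1 <;> omega
  have u1 := gn_le_one good1 (n := n) (p := p)
  have u2 := gn_le_one good2 (n := n) (p := p)
  have v1 : gn S1 n p = 0 ∨ (s0 < R ∨ s1 < R ∨ s2 < R) := by
    rcases Nat.eq_zero_or_pos (gn S1 n p) with h | h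
    · exact Or.inl h
    · right
      obtain ⟨x, hx⟩ := Finset.card_pos.1 h
      rw [Finset.mem_filter] at hx
      exact k1 x hx.1 hx.2
  have v2 : gn S2 n p = 0 ∨ ((s0 < R ∧ s1 < R) ∨ (s1 < R ∧ s2 < R) ∨ (s0 < R ∧ s2 < R)) := by
    rcases Nat.eq_zero_or_pos (gn S2 n p) with h | h
    · exact Or.inl h
    · right
      obtain ⟨x, hx⟩ := Finset.card_pos.1 h
      rw [Finset.mem_filter] at hx
      exact k2 x hx.1 hx.2
  unfold gainp
  split_ifs <;> push_cast <;> omega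

def rt (m : ℕ) (q : ℕ × ℕ) : ℤ := -699 * m + 100 * m * q.1 + 1 + q.2
def idx (m : ℕ) : Finset (ℕ × ℕ) := Finset.range 3 ×ˢ Finset.range (1100 * m)

lemma count_all (m : ℕ) (P : ℕ) (hP : 0 < P) (k : ℤ) :
    (((idx m).filter (fun q => (P:ℤ) ∣ k - rt m q)).card : ℤ) =
     3 * (((1100 * m : ℕ) : ℤ) / P) + ((if (k + 699 * m - 1) % P < ((1100 * m : ℕ) : ℤ) % P then 1 else 0)
      + (if (k + 699 * m - 1 - (100 * m : ℕ)) % P < ((1100 * m : ℕ) : ℤ) % P then 1 else 0)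
      + (if (k + 699 * m - 1 - (100 * m : ℕ) - (100 * m : ℕ)) % P < ((1100 * m : ℕ) : ℤ) % P then 1 else 0)) := by
  have h : ((idx m).filter (fun q => (P:ℤ) ∣ k - rt m q)).card =
      ∑ i ∈ Finset.range 3, ((Finset.range (1100 * m)).filter (fun j : ℕ => (P:ℤ) ∣ (k + 699 * m - 1 - 100 * m * i) - j)).card := by
    rw [Finset.card_filter, idx, Finset.sum_product]
    apply Finset.sum_congr rfl
    intro i _
    rw [Finset.card_filter]
    apply Finset.sum_congr rfl
    intro j _
    rw [show k - rt m (i, j) = (k + 699 * m - 1 - 100 * m * i) - j by simp [rt]; ring]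
  rw [h]
  simp only [Finset.sum_range_succ, Finset.sum_range_zero, zero_add]
  push_cast
  have h1 := count_one P hP (1100 * m) (k + 699 * m - 1 - 100 * m * (0:ℕ))
  have h2 := count_one P hP (1100 * m) (k + 699 * m - 1 - 100 * m * (1:ℕ))
  have h3 := count_one P hP (1100 * m) (k + 699 * m - 1 - 100 * m * (2:ℕ))
  push_cast at h1 h2 h3
  rw [h1, h2, h3]
  rw [show k + 699 * (m:ℤ) - 1 - 100 * m * 0 = k + 699 * m - 1 by ring,
   show k + 699 * (m:ℤ) - 1 - 100 * m * 1 = k + 699 * m - 1 - 100 * m by ring,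
   show k + 699 * (m:ℤ) - 1 - 100 * m * 2 = k + 699 * m - 1 - 100 * m - 100 * m by ring]
  ring

lemma fact_count {p : ℕ} (hp : p.Prime) {x : ℤ} (hx : x ≠ 0) (b : ℕ) :
    ((Finset.Ico 1 b).filter (fun a => ((p ^ a : ℕ):ℤ) ∣ x)).card ≤ x.natAbs.factorization p := by
  have hsub : (Finset.Ico 1 b).filter (fun a => ((p ^ a : ℕ):ℤ) ∣ x) ⊆ Finset.Ico 1 (x.natAbs.factorization p + 1) := by
    intro a ha
    rw [Finset.mem_filter, Finset.mem_Ico] at ha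
    rw [Finset.mem_Ico]
    refine ⟨ha.1.1, ?_⟩
    have h2 : p ^ a ∣ x.natAbs := Int.natCast_dvd.1 ha.2
    have := (hp.pow_dvd_iff_le_factorization (by simpa using hx)).1 h2
    omega
  have := Finset.card_le_card hsub
  simpa using this

lemma Dm_pos (m : ℕ) : 0 < Dm m := by
  apply Finset.prod_pos
  intro p hp
  have := (Nat.mem_primesLE.1 hp).2.pos
  positivity

lemma Dm_fact (m : ℕ) {p : ℕ} (hp : p.Prime) (hpl : p ≤ 1100 * m) :
    (Dm m).factorization p = 2 * Nat.log p (1100 * m) - gainp (100 * m) p := by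
  have hmem : p ∈ Nat.primesLE (1100 * m) := Nat.mem_primesLE.2 ⟨hpl, hp⟩
  unfold Dm
  rw [Nat.factorization_prod]
  · rw [Finset.sum_apply']
    rw [Finset.sum_eq_single p]
    · rw [hp.factorization_pow]; simp
    · intro q hq hqp
      have hq' := (Nat.mem_primesLE.1 hq).2
      rw [hq'.factorization_pow, Finsupp.single_apply, if_neg hqp]
    · intro h; exact absurd hmem h
  · intro q hq
    have := (Nat.mem_primesLE.1 hq).2.pos
    positivity

lemma natAbs_prod_aux {ι : Type*} (t : Finset ι) (g : ι → ℤ) : (∏ q ∈ t, g q).natAbs = ∏ q ∈ t, (g q).natAbs :=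
  map_prod Int.natAbsHom g t

theorem key_dvd (m : ℕ) (k : ℤ) (t : Finset (ℕ × ℕ)) (ht : t ⊆ idx m) (hc : (idx m \ t).card ≤ 2) :
    (((1100 * m).factorial : ℤ)) ^ 3 ∣ (Dm m : ℤ) * ∏ q ∈ t, (k - rt m q) := by
  by_cases h0 : ∏ q ∈ t, (k - rt m q) = 0
  · rw [h0]; simp
  have hne : ∀ q ∈ t, k - rt m q ≠ 0 := fun q hq h => h0 (Finset.prod_eq_zero hq h)
  set L := 1100 * m with hL
  have hD := Dm_pos m
  rw [← Int.natAbs_dvd_natAbs, Int.natAbs_mul, Int.natAbs_pow, Int.natAbs_natCast, Int.natAbs_natCast,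
    ← Nat.factorization_le_iff_dvd (by positivity) (by
      have := Int.natAbs_pos.2 h0; positivity)]
  rw [Finsupp.le_def]
  intro p
  by_cases hp : p.Prime
  swap
  · simp [Nat.factorization_eq_zero_of_not_prime _ hp]
  have hP0 := hp.pos
  rw [Nat.factorization_mul hD.ne' (by simpa using h0), Nat.factorization_pow, Finsupp.smul_apply, Finsupp.add_apply,
    natAbs_prod_aux, Nat.factorization_prod (by intro q hq; simpa using hne q hq), Finset.sum_apply']
  have hfac : (L.factorial).factorization p = ∑ i ∈ Finset.Ico 1 (Nat.log p L + 1), L / p ^ i := by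
    exact Nat.factorization_factorial hp (Nat.lt_succ_self _)
  rw [hfac]
  by_cases hpL : p ≤ L
  swap
  · have : Nat.log p L = 0 := Nat.log_of_lt (by omega)
    rw [this]; simp
  rw [Dm_fact m hp hpL]
  set b := Nat.log p L with hb
  have hb1 : 1 ≤ b := Nat.log_pos hp.one_lt hpL
  have hg := gainp_le (100 * m) p
  -- total count
  have s1 : ∑ a ∈ Finset.Ico 1 (b + 1), (t.filter (fun q => ((p ^ a : ℕ):ℤ) ∣ k - rt m q)).card
      ≤ ∑ q ∈ t, (k - rt m q).natAbs.factorization p := by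
    simp only [Finset.card_filter]
    rw [Finset.sum_comm]
    apply Finset.sum_le_sum
    intro q hq
    have := fact_count hp (hne q hq) (b + 1)
    rwa [Finset.card_filter] at this
  have s2 : ∀ a, ((idx m).filter (fun q => ((p ^ a : ℕ):ℤ) ∣ k - rt m q)).card ≤
      (t.filter (fun q => ((p ^ a : ℕ):ℤ) ∣ k - rt m q)).card + 2 := by
    intro a
    have h1 : (idx m).filter (fun q => ((p ^ a : ℕ):ℤ) ∣ k - rt m q) ⊆
      t.filter (fun q => ((p ^ a : ℕ):ℤ) ∣ k - rt m q) ∪ (idx m \ t) := by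
      intro q hq
      rw [Finset.mem_filter] at hq
      rw [Finset.mem_union, Finset.mem_filter, Finset.mem_sdiff]
      by_cases h : q ∈ t
      · exact Or.inl ⟨h, hq.2⟩
      · exact Or.inr ⟨hq.1, h⟩
    exact (Finset.card_le_card h1).trans ((Finset.card_union_le _ _).trans (by omega))
  have s3 : ∀ a, 3 * (L / p ^ a) ≤ ((idx m).filter (fun q => ((p ^ a : ℕ):ℤ) ∣ k - rt m q)).card := by
    intro a
    have := count_all m (p ^ a) (by positivity) k
    zify
    push_cast at this
    rw [this]
    have : ∀ P : Prop, ∀ [Decidable P], (0:ℤ) ≤ if P then 1 else 0 := by intro P _; split_ifs <;> norm_num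
    push_cast [hL]
    linarith [this ((k + 699 * m - 1) % (p:ℤ)^a < 1100 * (m:ℤ) % (p:ℤ)^a), this ((k + 699 * m - 1 - 100 * m) % (p:ℤ)^a < 1100 * (m:ℤ) % (p:ℤ)^a), this ((k + 699 * m - 1 - 100 * m - 100 * m) % (p:ℤ)^a < 1100 * (m:ℤ) % (p:ℤ)^a)]
  have s4 : 3 * (L / p ^ 1) + gainp (100 * m) p ≤ ((idx m).filter (fun q => ((p ^ 1 : ℕ):ℤ) ∣ k - rt m q)).card := by
    have h1 := count_all m (p ^ 1) (by positivity) k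
    have h2 := gain_count (100 * m) p hP0 (k + 699 * m - 1)
    zify
    push_cast at h1
    rw [h1]
    rw [show 11 * (100 * m) = 1100 * m by ring] at h2
    push_cast [hL] at h2 ⊢
    simp only [pow_one]
    linarith
  rw [Finset.sum_eq_sum_Ico_succ_bot (by omega)] at s1 ⊢
  have s5 : ∑ a ∈ Finset.Ico (1+1) (b + 1), 3 * (L / p ^ a) ≤ ∑ a ∈ Finset.Ico (1+1) (b + 1), ((t.filter (fun q => ((p ^ a : ℕ):ℤ) ∣ k - rt m q)).card + 2) :=
    Finset.sum_le_sum fun a _ => (s3 a).trans (s2 a)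
  rw [Finset.sum_add_distrib, Finset.sum_const, Nat.card_Ico, ← Finset.mul_sum] at s5
  have s6 := s4.trans (s2 1)
  simp only [smul_eq_mul] at *
  omega

end

section
open Real Set Filter Topology MeasureTheory Polynomial

noncomputable def FFt (m : ℕ) (t : Finset (ℕ × ℕ)) : ℝ[X] := ∏ q ∈ t, (X - C ((rt m q : ℤ) : ℝ))
noncomputable def FF (m : ℕ) : ℝ[X] := FFt m (idx m)
noncomputable def fL (m : ℕ) : ℝ := (((1100 * m).factorial : ℝ) ^ 3)⁻¹
noncomputable def ff (m : ℕ) : ℝ[X] := C (fL m) * FF m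

lemma fL_pos (m : ℕ) : 0 < fL m := by unfold fL; positivity

lemma FFt_int (m : ℕ) (t : Finset (ℕ × ℕ)) (ht : t ⊆ idx m) (hc : (idx m \ t).card ≤ 2) :
    IntVal (C (Dm m : ℝ) * (C (fL m) * FFt m t)) := by
  intro k
  obtain ⟨N, hN⟩ := key_dvd m k t ht hc
  refine ⟨N, ?_⟩
  have hN' : (Dm m : ℝ) * ∏ q ∈ t, ((k:ℝ) - (rt m q : ℤ)) = ((1100 * m).factorial : ℝ)^3 * N := by
    exact_mod_cast hN
  simp only [eval_mul, eval_C, FFt, eval_prod, eval_sub, eval_X]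
  have : ((1100 * m).factorial : ℝ) ≠ 0 := by positivity
  unfold fL
  rw [show (Dm m : ℝ) * ((((1100 * m).factorial : ℝ) ^ 3)⁻¹ * ∏ q ∈ t, ((k:ℝ) - (rt m q : ℤ))) = (((1100 * m).factorial : ℝ) ^ 3)⁻¹ * ((Dm m : ℝ) * ∏ q ∈ t, ((k:ℝ) - (rt m q : ℤ))) by ring, hN']
  field_simp

lemma FFt_deriv (m : ℕ) (t : Finset (ℕ × ℕ)) : derivative (FFt m t) = ∑ a ∈ t, FFt m (t.erase a) := by
  unfold FFt
  rw [derivative_prod_finset]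
  simp

lemma IntVal.sum {ι : Type*} (s : Finset ι) (g : ι → ℝ[X]) (h : ∀ i ∈ s, IntVal (g i)) : IntVal (∑ i ∈ s, g i) := by
  classical
  induction s using Finset.induction_on with
  | empty => intro k; exact ⟨0, by simp⟩
  | insert a s ha ih =>
    rw [Finset.sum_insert ha]
    exact (h a (Finset.mem_insert_self _ _)).add (ih fun i hi => h i (Finset.mem_insert_of_mem hi))

lemma IntVal.map (p : ℤ[X]) : IntVal (p.map (Int.castRingHom ℝ)) := by
  intro k
  exact ⟨p.eval k, by simp⟩

lemma ff_int (m : ℕ) : IntVal (C (Dm m : ℝ) * ff m) := FFt_int m _ (Finset.Subset.refl _) (by simp)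
lemma ff_int1 (m : ℕ) : IntVal (C (Dm m : ℝ) * derivative (ff m)) := by
  unfold ff FF
  rw [derivative_C_mul, FFt_deriv, Finset.mul_sum, Finset.mul_sum]
  apply IntVal.sum
  intro a ha
  apply FFt_int m _ (Finset.erase_subset _ _)
  rw [Finset.card_sdiff_of_subset (Finset.erase_subset _ _), Finset.card_erase_of_mem ha]
  omega
lemma ff_int2 (m : ℕ) : IntVal (C (Dm m : ℝ) * derivative (derivative (ff m))) := by
  unfold ff FF
  rw [derivative_C_mul, derivative_C_mul, FFt_deriv, derivative_sum, Finset.mul_sum, Finset.mul_sum]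
  apply IntVal.sum
  intro a ha
  rw [FFt_deriv, Finset.mul_sum, Finset.mul_sum]
  apply IntVal.sum
  intro b hb
  have hs : ((idx m).erase a).erase b ⊆ idx m := (Finset.erase_subset _ _).trans (Finset.erase_subset _ _)
  apply FFt_int m _ hs
  rw [Finset.card_sdiff_of_subset hs, Finset.card_erase_of_mem hb, Finset.card_erase_of_mem ha]
  omega

lemma Dop_int (m j : ℕ) (a b c : ℤ) : IntVal (C (Dm m : ℝ) * Dop a b c (ff m * X ^ j)) := by
  have e : C (Dm m : ℝ) * Dop a b c (ff m * X ^ j) =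
      C ((a:ℤ):ℝ) * ((C (Dm m : ℝ) * derivative (derivative (ff m))) * ((X ^ j : ℤ[X]).map (Int.castRingHom ℝ))
        + C ((2:ℤ):ℝ) * ((C (Dm m : ℝ) * derivative (ff m)) * ((derivative (X ^ j : ℤ[X])).map (Int.castRingHom ℝ)))
        + (C (Dm m : ℝ) * ff m) * ((derivative (derivative (X ^ j : ℤ[X]))).map (Int.castRingHom ℝ)))
      - C ((b:ℤ):ℝ) * ((C (Dm m : ℝ) * derivative (ff m)) * ((X ^ j : ℤ[X]).map (Int.castRingHom ℝ))
        + (C (Dm m : ℝ) * ff m) * ((derivative (X ^ j : ℤ[X])).map (Int.castRingHom ℝ)))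
      + C ((c:ℤ):ℝ) * ((C (Dm m : ℝ) * ff m) * ((X ^ j : ℤ[X]).map (Int.castRingHom ℝ))) := by
    simp only [← derivative_map]
    rw [Polynomial.map_pow, Polynomial.map_X]
    generalize (X : ℝ[X]) ^ j = w
    simp only [Dop, derivative_mul, derivative_add]
    have : C ((2:ℤ):ℝ) = (2 : ℝ[X]) := by rw [show ((2:ℤ):ℝ) = 2 by norm_num]; rfl
    rw [this]
    ring
  rw [e]
  have i0 := ff_int m
  have i1 := ff_int1 m
  have i2 := ff_int2 m
  exact (((IntVal.C a).mul (((i2.mul (IntVal.map _)).add ((IntVal.C 2).mul (i1.mul (IntVal.map _)))).add (i0.mul (IntVal.map _)))).sub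
    ((IntVal.C b).mul ((i1.mul (IntVal.map _)).add (i0.mul (IntVal.map _))))).add ((IntVal.C c).mul (i0.mul (IntVal.map _)))

lemma FF_prod (m : ℕ) : FF m = ∏ i ∈ Finset.range 3, ∏ j ∈ Finset.range (1100 * m), (X - C ((rt m (i, j) : ℤ) : ℝ)) := by
  unfold FF FFt idx
  rw [Finset.prod_product]

lemma FF_triple (m : ℕ) (k : ℤ) (h1 : -((499 * m : ℕ):ℤ) < k) (h2 : k ≤ (401 * m : ℕ)) :
    (X - C (k:ℝ)) ^ 3 ∣ FF m := by
  rw [FF_prod]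
  have : (X - C (k:ℝ)) ^ 3 = ∏ i ∈ Finset.range 3, (X - C (k:ℝ)) := by simp
  rw [this]
  apply Finset.prod_dvd_prod_of_dvd
  intro i hi
  rw [Finset.mem_range] at hi
  have : rt m (i, (k + 699 * m - 100 * m * i - 1).toNat) = k := by
    simp only [rt]
    interval_cases i <;> push_cast <;> omega
  rw [← this]
  apply Finset.dvd_prod_of_mem (fun j => X - C ((rt m (i, j) : ℤ) : ℝ))
  rw [Finset.mem_range]
  interval_cases i <;> push_cast <;> omega

lemma LamD_int (m j : ℕ) (a b c : ℤ) : ∃ N : ℤ, (Dm m : ℝ) * LamD a b c (ff m * X ^ j) = (2 * 2 ^ (401 * m) * 3 ^ (499 * m) : ℝ) * N := by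
  have h := Lam_int_strong (499 * m) (401 * m) _ (Dop_int m j a b c) ?_
  · rwa [Lam_C_mul] at h
  · intro k h1 h2
    have h3 : (X - C (k:ℝ)) ^ 3 ∣ ff m * X ^ j := by
      unfold ff
      exact Dvd.dvd.mul_right (Dvd.dvd.mul_left (FF_triple m k h1 h2) _) _
    obtain ⟨z0, z1, z2⟩ := triple_zero h3
    rw [eval_mul, Dop]
    simp [-derivative_mul, z0, z1, z2]

lemma FF_ne (m : ℕ) : FF m ≠ 0 := by
  unfold FF FFt
  exact Finset.prod_ne_zero_iff.2 fun q _ => X_sub_C_ne_zero _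

lemma FF_nonvanish (m : ℕ) (hm : 0 < m) (a b c : ℝ) (h : ∀ j < 3, LamD a b c (ff m * X ^ j) = 0) :
    a = 0 ∧ b = 0 ∧ c = 0 := by
  refine nonvanish a b c (FF m) (∏ i ∈ Finset.range 3, (X - C ((rt m (i, 1100 * m) : ℤ) : ℝ)))
    (∏ i ∈ Finset.range 3, (X - C ((rt m (i, 0) : ℤ) - 1 : ℝ))) (FF_ne m) ?_ ?_ ?_ ?_ ?_ ?_ ?_ ?_
  · unfold FF FFt
    exact Polynomial.Splits.prod fun q _ => Polynomial.Splits.X_sub_C _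
  · rw [FF_prod, ← Finset.prod_mul_distrib, ← Finset.prod_mul_distrib, sh, Polynomial.prod_comp]
    apply Finset.prod_congr rfl
    intro i _
    rw [← Finset.prod_range_succ (fun j => X - C ((rt m (i, j) : ℤ) : ℝ)), Polynomial.prod_comp, Finset.prod_range_succ']
    congr 1
    · apply Finset.prod_congr rfl
      intro j _
      simp [rt]; ring
    · simp; ring
  · have := FF_triple m 1 (by omega) (by omega)
    simp only [Int.cast_one] at this
    exact this.mul_right _
  · exact monic_prod_of_monic _ _ fun i _ => monic_X_sub_C _
  · rw [natDegree_prod_of_monic _ _ fun i _ => monic_X_sub_C _]; simp only [natDegree_X_sub_C]; simp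
  · exact monic_prod_of_monic _ _ fun i _ => monic_X_sub_C _
  · rw [natDegree_prod_of_monic _ _ fun i _ => monic_X_sub_C _]
    simp only [natDegree_X_sub_C]; simp
  · intro j hj
    have := h j hj
    rw [ff, mul_assoc, LamD_Cmul] at this
    exact (mul_eq_zero.1 this).resolve_left (fL_pos m).ne'

end

section
open Real Set Filter Topology

lemma theta_diff (n M a b c : ℕ) (hb : 0 < b) (ha : 0 < a) (hc : c ≤ 10) (h1 : 11 * a < c * b) (hM : 1 ≤ M ∨ b ≤ 11 * a) :
    Chebyshev.theta ((b:ℝ) / (b * M + a) * n) - Chebyshev.theta ((11:ℝ) / (11 * M + c) * n) ≤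
      ∑ p ∈ (Nat.primesLE (11 * n)).filter (fun p => cov n p (a, b, c) ∧ n / p = M), Real.log p := by
  have hc0 : 0 < c := by rcases Nat.eq_zero_or_pos c with rfl | h; · omega
                         · exact h
  have hd1 : (0:ℝ) < b * M + a := by positivity
  have hd2 : (0:ℝ) < 11 * M + c := by positivity
  rw [Chebyshev.theta_eq_sum_primesLE, Chebyshev.theta_eq_sum_primesLE]
  have hsub : Nat.primesLE ⌊(11:ℝ) / (11 * M + c) * n⌋₊ ⊆ Nat.primesLE ⌊(b:ℝ) / (b * M + a) * n⌋₊ := by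
    intro p hp
    rw [Nat.mem_primesLE] at hp ⊢
    refine ⟨hp.1.trans (Nat.floor_le_floor ?_), hp.2⟩
    apply mul_le_mul_of_nonneg_right _ (Nat.cast_nonneg n)
    rw [div_le_div_iff₀ hd2 hd1]
    have : (11:ℝ) * a < c * b := by exact_mod_cast h1
    nlinarith
  rw [← Finset.sum_sdiff_eq_sub hsub]
  apply Finset.sum_le_sum_of_subset_of_nonneg
  · intro p hp
    rw [Finset.mem_sdiff, Nat.mem_primesLE, Nat.mem_primesLE] at hp
    obtain ⟨⟨h2, hpp⟩, h3⟩ := hp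
    have h3 : ¬ (p ≤ ⌊(11:ℝ) / (11 * M + c) * n⌋₊) := fun h => h3 ⟨h, hpp⟩
    rw [Nat.le_floor_iff (by positivity), div_mul_eq_mul_div, le_div_iff₀ hd1] at h2
    rw [Nat.le_floor_iff (by positivity), div_mul_eq_mul_div, le_div_iff₀ hd2, not_le] at h3
    have h2 : p * (b * M + a) ≤ b * n := by exact_mod_cast h2
    have h3 : 11 * n < p * (11 * M + c) := by exact_mod_cast h3
    have hp0 := hpp.pos
    have k1 : M * p ≤ n := by
      have : b * (M * p) ≤ b * n := by nlinarith
      exact Nat.le_of_mul_le_mul_left this hb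
    have k2 : n < (M + 1) * p := by nlinarith
    have k3 : n / p = M := Nat.div_eq_of_lt_le k1 k2
    have k4 : n = p * M + n % p := by rw [← k3]; exact (Nat.div_add_mod n p).symm
    rw [Finset.mem_filter, Nat.mem_primesLE]
    refine ⟨⟨?_, hpp⟩, ⟨?_, ?_⟩, k3⟩
    · rcases hM with hM | hM
      · nlinarith
      · have : b * p ≤ b * (11 * n) := by nlinarith [Nat.mul_le_mul_right p hM, Nat.zero_le (p * (b * M))]
        exact Nat.le_of_mul_le_mul_left this hb
    · show a * p ≤ b * (n % p)
      nlinarith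
    · show 11 * (n % p) < c * p
      nlinarith
  · intro p _ _
    exact Real.log_natCast_nonneg p

def ms (x : ℕ × ℕ × ℕ) : ℕ := if x.2.2 = 1 then 1 else 0

noncomputable def tdf (n : ℕ) (x : ℕ × ℕ × ℕ) (M : ℕ) : ℝ :=
  Chebyshev.theta ((x.2.1:ℝ) / (x.2.1 * M + x.1) * n) - Chebyshev.theta ((11:ℝ) / (11 * M + x.2.2) * n)

lemma tdf_sum {S : Finset (ℕ × ℕ × ℕ)} (hS : goodS S) (n T : ℕ) (hS2 : ∀ x ∈ S, x.2.2 = 1 ∨ x.2.1 ≤ 11 * x.1) :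
    ∑ x ∈ S, ∑ M ∈ Finset.Ico (ms x) T, tdf n x M ≤ ∑ p ∈ Nat.primesLE (11 * n), gn S n p * Real.log p := by
  have h1 : ∑ p ∈ Nat.primesLE (11 * n), gn S n p * Real.log p =
     ∑ x ∈ S, ∑ p ∈ (Nat.primesLE (11 * n)).filter (fun p => cov n p x), Real.log p := by
    simp only [gn, Finset.card_filter, Finset.sum_filter]
    push_cast
    simp only [Finset.sum_mul, ite_mul, one_mul, zero_mul]
    rw [Finset.sum_comm]
  rw [h1]
  apply Finset.sum_le_sum
  intro x hx
  obtain ⟨g1, g2, g3, g4, g5, g6⟩ := hS.1 x hx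
  calc ∑ M ∈ Finset.Ico (ms x) T, tdf n x M ≤ ∑ M ∈ Finset.Ico (ms x) T, ∑ p ∈ (Nat.primesLE (11 * n)).filter (fun p => cov n p x ∧ n / p = M), Real.log p := by
        apply Finset.sum_le_sum
        intro M hM
        apply theta_diff n M x.1 x.2.1 x.2.2 g1 g5 g4 g6
        rcases hS2 x hx with h | h
        · left; rw [ms, if_pos h, Finset.mem_Ico] at hM; exact hM.1
        · right; exact h
    _ = ∑ M ∈ Finset.Ico (ms x) T, ∑ p ∈ ((Nat.primesLE (11 * n)).filter (fun p => cov n p x)).filter (fun p => n / p = M), Real.log p := by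
        simp only [Finset.filter_filter]
    _ ≤ _ := by
        rw [Finset.sum_fiberwise_eq_sum_filter]
        apply Finset.sum_le_sum_of_subset_of_nonneg (Finset.filter_subset _ _)
        intro p _ _
        exact Real.log_natCast_nonneg p

lemma hS21 : ∀ x ∈ S1, x.2.2 = 1 ∨ x.2.1 ≤ 11 * x.1 := by decide
lemma hS22 : ∀ x ∈ S2, x.2.2 = 1 ∨ x.2.1 ≤ 11 * x.1 := by decide

lemma logD_le (m T : ℕ) : Real.log (Dm m) ≤ 2 * Chebyshev.psi (11 * (100 * m : ℕ)) -
    (∑ x ∈ S1, ∑ M ∈ Finset.Ico (ms x) T, tdf (100 * m) x M + ∑ x ∈ S2, ∑ M ∈ Finset.Ico (ms x) T, tdf (100 * m) x M) := by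
  have h1 := tdf_sum good1 (100 * m) T hS21
  have h2 := tdf_sum good2 (100 * m) T hS22
  have h3 := Chebyshev.psi_eq_sum_mul_log_prime (11 * (100 * m))
  push_cast at h3 ⊢
  rw [h3]
  have h4 : Real.log (Dm m) = ∑ p ∈ Nat.primesLE (11 * (100 * m)), ((2 * Nat.log p (11 * (100 * m)) : ℝ) - (gn S1 (100 * m) p + gn S2 (100 * m) p)) * Real.log p := by
    unfold Dm
    rw [show 1100 * m = 11 * (100 * m) by ring]
    push_cast
    rw [Real.log_prod]
    · apply Finset.sum_congr rfl
      intro p hp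
      rw [Real.log_pow]
      have := gainp_le (100 * m) p
      rw [Nat.mem_primesLE] at hp
      have h5 : 1 ≤ Nat.log p (11 * (100 * m)) := Nat.log_pos hp.2.one_lt hp.1
      rw [Nat.cast_sub (by omega)]
      simp [gainp]
    · intro p hp
      have := (Nat.mem_primesLE.1 hp).2.pos
      positivity
  rw [h4]
  simp only [sub_mul, add_mul, Finset.sum_sub_distrib, Finset.sum_add_distrib, mul_assoc, ← Finset.mul_sum]
  linarith

lemma theta_lim (a : ℝ) (ha : 0 < a) : Tendsto (fun n : ℕ => Chebyshev.theta (a * n) / n) atTop (𝓝 a) := by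
  have h1 : Tendsto (fun n : ℕ => a * (n:ℝ)) atTop atTop := tendsto_natCast_atTop_atTop.const_mul_atTop ha
  have h2 := (theta_pnt.comp h1).const_mul a
  rw [mul_one] at h2
  refine h2.congr' ?_
  filter_upwards [eventually_gt_atTop 0] with n hn
  have : (n:ℝ) ≠ 0 := by positivity
  simp only [Function.comp]
  field_simp

lemma psi_lim (a : ℝ) (ha : 0 < a) : Tendsto (fun n : ℕ => Chebyshev.psi (a * n) / n) atTop (𝓝 a) := by
  have h1 : Tendsto (fun n : ℕ => a * (n:ℝ)) atTop atTop := tendsto_natCast_atTop_atTop.const_mul_atTop ha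
  have h2 := (psi_pnt.comp h1).const_mul a
  rw [mul_one] at h2
  refine h2.congr' ?_
  filter_upwards [eventually_gt_atTop 0] with n hn
  have : (n:ℝ) ≠ 0 := by positivity
  simp only [Function.comp]
  field_simp

noncomputable def gterm (x : ℕ × ℕ × ℕ) (M : ℕ) : ℝ := (x.2.1:ℝ) / (x.2.1 * M + x.1) - (11:ℝ) / (11 * M + x.2.2)
noncomputable def Gam (T : ℕ) : ℝ := ∑ x ∈ S1, ∑ M ∈ Finset.Ico (ms x) T, gterm x M + ∑ x ∈ S2, ∑ M ∈ Finset.Ico (ms x) T, gterm x M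

lemma tdf_lim {S : Finset (ℕ × ℕ × ℕ)} (hS : goodS S) (T : ℕ) :
    Tendsto (fun n : ℕ => (∑ x ∈ S, ∑ M ∈ Finset.Ico (ms x) T, tdf n x M) / n) atTop (𝓝 (∑ x ∈ S, ∑ M ∈ Finset.Ico (ms x) T, gterm x M)) := by
  simp only [Finset.sum_div]
  apply tendsto_finsetSum
  intro x hx
  obtain ⟨g1, g2, g3, g4, g5, g6⟩ := hS.1 x hx
  apply tendsto_finsetSum
  intro M _
  unfold tdf gterm
  simp only [sub_div]
  exact (theta_lim _ (by positivity)).sub (theta_lim _ (by positivity))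

lemma logD_ev (T : ℕ) (g : ℝ) (hg : g < Gam T) : ∀ᶠ m : ℕ in atTop, Real.log (Dm m) ≤ (22 - g) * (100 * m) := by
  have h1 := ((psi_lim 11 (by norm_num)).const_mul 2).sub ((tdf_lim good1 T).add (tdf_lim good2 T))
  have h2 : Tendsto (fun m : ℕ => 100 * m) atTop atTop := tendsto_id.const_mul_atTop' (by norm_num)
  have h3 := Tendsto.eventually_lt_const (u := 22 - g) (by unfold Gam at hg; linarith) (h1.comp h2)
  filter_upwards [h3, eventually_gt_atTop 0] with m hm hm0
  have h4 := logD_le m T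
  simp only [Function.comp] at hm
  have h5 : (0:ℝ) < ((100 * m : ℕ):ℝ) := by positivity
  rw [← add_div, ← mul_div_assoc, ← sub_div, div_lt_iff₀ h5] at hm
  push_cast at hm h4 ⊢
  linarith

def gq (x : ℕ × ℕ × ℕ) (M : ℕ) : ℚ := mkRat (x.2.1 * x.2.2 - 11 * x.1 : ℤ) ((x.2.1 * M + x.1) * (11 * M + x.2.2))
def tq (x : ℕ × ℕ × ℕ) : ℚ :=
  mkRat (x.2.1 * x.2.2 - 11 * x.1 : ℤ) (11 * x.2.1) * (1 / (40 + (mkRat (11 * x.1 + x.2.1 * x.2.2 : ℤ) (22 * x.2.1) - 159/320)) - 1 / (10^6 + (mkRat (11 * x.1 + x.2.1 * x.2.2 : ℤ) (22 * x.2.1) - 159/320)))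
def tot (S : Finset (ℕ × ℕ × ℕ)) : ℚ := ∑ x ∈ S, (∑ M ∈ Finset.Ico (ms x) 40, gq x M + tq x)
lemma tot_num : (4859914/1000000 : ℚ) < tot S1 + tot S2 := by decide +kernel

lemma gterm_eq (x : ℕ × ℕ × ℕ) (M : ℕ) (ha : 0 < x.1) (hb : 0 < x.2.1) (hc : 0 < x.2.2) : gterm x M = (gq x M : ℚ) := by
  unfold gterm gq
  rw [Rat.mkRat_eq_div]
  have : (0:ℝ) < x.2.1 * M + x.1 := by positivity
  have : (0:ℝ) < 11 * M + x.2.2 := by positivity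
  push_cast
  field_simp
  ring

lemma gterm_tail (M : ℕ) (hM : 40 ≤ M) (a b c : ℝ) (ha : 0 < a) (hb : 0 < b) (hc : 0 < c) (h : 11 * a < c * b) :
    (b * c - 11 * a) / (11 * b) * (1 / (M + ((11 * a + b * c) / (22 * b) - 159/320)) - 1 / (M + 1 + ((11 * a + b * c) / (22 * b) - 159/320)))
     ≤ b / (b * M + a) - 11 / (11 * M + c) := by
  have hM' : (40:ℝ) ≤ M := by exact_mod_cast hM
  set u := a / b with hu
  set v := c / 11 with hv
  have hu0 : 0 < u := by positivity
  have hv0 : 0 < v := by positivity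
  have e1 : b / (b * M + a) = 1 / (M + u) := by rw [hu]; field_simp
  have e2 : 11 / (11 * M + c) = 1 / (M + v) := by rw [hv]; field_simp
  have e3 : (b * c - 11 * a) / (11 * b) = v - u := by rw [hu, hv]; field_simp
  have e4 : (11 * a + b * c) / (22 * b) = (u + v) / 2 := by rw [hu, hv]; field_simp; ring
  rw [e1, e2, e3, e4]
  have huv : 0 < v - u := by rw [← e3]; exact div_pos (by linarith) (by positivity)
  set al := (u + v) / 2 - 159/320 with hal
  have p1 : (0:ℝ) < M + al := by rw [hal]; linarith
  have p2 : (0:ℝ) < M + 1 + al := by linarith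
  have p3 : (0:ℝ) < M + u := by linarith
  have p4 : (0:ℝ) < M + v := by linarith
  have f1 : 1 / (M + al) - 1 / (M + 1 + al) = 1 / ((M + al) * (M + 1 + al)) := by field_simp; ring
  have f2 : 1 / (M + u) - 1 / (M + v) = (v - u) * (1 / ((M + u) * (M + v))) := by field_simp; ring
  rw [f1, f2]
  apply mul_le_mul_of_nonneg_left _ huv.le
  apply one_div_le_one_div_of_le (by positivity)
  rw [hal]
  nlinarith [sq_nonneg (u - v)]

lemma gterm_sum (x : ℕ × ℕ × ℕ) (ha : 0 < x.1) (hb : 0 < x.2.1) (hc : 0 < x.2.2) (h : 11 * x.1 < x.2.2 * x.2.1) :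
    ((∑ M ∈ Finset.Ico (ms x) 40, gq x M + tq x : ℚ) : ℝ) ≤ ∑ M ∈ Finset.Ico (ms x) (10^6), gterm x M := by
  have hms : ms x ≤ 40 := by unfold ms; split_ifs <;> norm_num
  rw [← Finset.sum_Ico_consecutive _ hms (by norm_num : 40 ≤ 10^6)]
  push_cast
  have e : ∑ M ∈ Finset.Ico (ms x) 40, gterm x M = ∑ M ∈ Finset.Ico (ms x) 40, ((gq x M : ℚ):ℝ) :=
    Finset.sum_congr rfl fun M _ => gterm_eq x M ha hb hc
  rw [e]
  apply add_le_add_right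
  have key : ∀ T : ℕ, 40 ≤ T → ((x.2.1:ℝ) * x.2.2 - 11 * x.1) / (11 * x.2.1) * (1 / (40 + ((11 * (x.1:ℝ) + x.2.1 * x.2.2) / (22 * x.2.1) - 159/320)) - 1 / (T + ((11 * (x.1:ℝ) + x.2.1 * x.2.2) / (22 * x.2.1) - 159/320))) ≤ ∑ M ∈ Finset.Ico 40 T, gterm x M := by
    intro T hT
    induction T, hT using Nat.le_induction with
    | base => simp
    | succ T hT ih =>
      rw [Finset.sum_Ico_succ_top hT]
      have := gterm_tail T hT x.1 x.2.1 x.2.2 (by positivity) (by positivity) (by positivity) (by exact_mod_cast h)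
      unfold gterm at ih ⊢
      push_cast
      rw [mul_sub] at this ih ⊢
      linarith
  have := key (10^6) (by norm_num)
  refine le_trans (le_of_eq ?_) this
  unfold tq
  rw [Rat.mkRat_eq_div, Rat.mkRat_eq_div]
  push_cast
  norm_num

lemma tot_le {S : Finset (ℕ × ℕ × ℕ)} (hS : goodS S) : ((tot S : ℚ) : ℝ) ≤ ∑ x ∈ S, ∑ M ∈ Finset.Ico (ms x) (10^6), gterm x M := by
  unfold tot
  rw [Rat.cast_sum]
  apply Finset.sum_le_sum
  intro x hx
  obtain ⟨g1, g2, g3, g4, g5, g6⟩ := hS.1 x hx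
  exact gterm_sum x g5 g1 g3 g6

lemma Gam_num : (4.859914:ℝ) < Gam (10^6) := by
  have h1 := tot_le good1
  have h2 := tot_le good2
  have h3 : ((4859914/1000000 : ℚ):ℝ) < ((tot S1 + tot S2 : ℚ) : ℝ) := by exact_mod_cast tot_num
  push_cast at h3
  unfold Gam
  norm_num at h3 ⊢
  norm_num at h1 h2
  linarith

theorem logD_final : ∀ᶠ m : ℕ in atTop, Real.log (Dm m) ≤ 1714.0086 * m := by
  filter_upwards [logD_ev (10^6) 4.859914 Gam_num] with m hm
  linarith

end

section
open Real Set Filter Topology MeasureTheory Polynomial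

noncomputable def Hf (y x : ℝ) : ℝ := x / 2 * Real.log (x^2 + y^2) - x + y * Real.arctan (x / y)

lemma Hf_deriv {y : ℝ} (hy : 0 < y) (x : ℝ) : HasDerivAt (Hf y) (1/2 * Real.log (x^2+y^2)) x := by
  have hp : 0 < x^2 + y^2 := by positivity
  have h1 : HasDerivAt (fun x : ℝ => x^2 + y^2) (2 * x) x := by
    simpa using ((hasDerivAt_id x).pow 2).add_const (y^2)
  have h2 := ((hasDerivAt_id x).div_const 2).mul (h1.log hp.ne')
  have h3 := (((hasDerivAt_id x).div_const y).arctan).const_mul y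
  have h4 := (h2.sub (hasDerivAt_id x)).add h3
  refine h4.congr_deriv ?_
  simp only [id]
  have : 1 + (x / y)^2 = (x^2 + y^2) / y^2 := by field_simp; ring
  rw [this]
  field_simp
  ring

lemma Hf_step {y : ℝ} (hy : 0 < y) (x : ℝ) (hx : 0 ≤ x) : 1/2 * Real.log (x^2+y^2) ≤ Hf y (x+1) - Hf y x := by
  obtain ⟨c, hc, h⟩ := exists_hasDerivAt_eq_slope (Hf y) (fun x => 1/2 * Real.log (x^2+y^2)) (a := x) (b := x+1) (by linarith)
    (fun z _ => (Hf_deriv hy z).continuousAt.continuousWithinAt) (fun z _ => Hf_deriv hy z)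
  have : Hf y (x+1) - Hf y x = 1/2 * Real.log (c^2+y^2) := by
    rw [h]; simp
  rw [this]
  have := Real.log_le_log (by positivity : 0 < x^2+y^2) (by nlinarith [hc.1] : x^2+y^2 ≤ c^2+y^2)
  linarith

noncomputable def hp (A : ℕ) (y : ℝ) : ℝ := ∏ l ∈ Finset.range A, Real.sqrt (((l:ℝ)+1/2)^2 + y^2)

lemma hp_nonneg (A : ℕ) (y : ℝ) : 0 ≤ hp A y := Finset.prod_nonneg fun _ _ => Real.sqrt_nonneg _

lemma hp_mono (A : ℕ) {y z : ℝ} (h : |y| ≤ z) : hp A y ≤ hp A z := by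
  unfold hp
  apply Finset.prod_le_prod
  · intro _ _; positivity
  · intro l _
    apply Real.sqrt_le_sqrt
    have : y^2 ≤ z^2 := by rw [← sq_abs y]; gcongr
    linarith

lemma hp_le (A : ℕ) {y : ℝ} (hy : 1 ≤ y) : hp A y ≤ Real.sqrt ((A:ℝ)^2 + y^2) * Real.exp (Hf y A) := by
  have hy0 : 0 < y := by linarith
  induction A with
  | zero => simp [hp, Hf, Real.sqrt_sq hy0.le, hy]
  | succ A ih =>
    unfold hp at ih ⊢
    rw [Finset.prod_range_succ]
    have h1 := Hf_step hy0 (A:ℝ) (by positivity)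
    have h2 : Real.sqrt ((A:ℝ)^2+y^2) ≤ Real.exp (Hf y (A+1) - Hf y A) := by
      rw [Real.sqrt_eq_rpow, Real.rpow_def_of_pos (by positivity)]
      apply Real.exp_le_exp.2; linarith
    have h3 : Real.sqrt (((A:ℝ)+1/2)^2 + y^2) ≤ Real.sqrt (((A:ℝ)+1)^2 + y^2) := by
      apply Real.sqrt_le_sqrt; nlinarith [Nat.cast_nonneg (α := ℝ) A]
    push_cast
    calc _ ≤ (Real.sqrt ((A:ℝ)^2 + y^2) * Real.exp (Hf y A)) * Real.sqrt (((A:ℝ)+1)^2 + y^2) := by gcongr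
      _ ≤ (Real.exp (Hf y (A+1) - Hf y A) * Real.exp (Hf y A)) * Real.sqrt (((A:ℝ)+1)^2 + y^2) := by gcongr
      _ = _ := by rw [← Real.exp_add]; ring_nf

lemma phi_deriv {A y : ℝ} (hA : 0 < A) (hy : 0 < y) :
    HasDerivAt (fun y => A / 2 * Real.log (A^2 + y^2) + y * Real.arctan (A / y)) (Real.arctan (A / y)) y := by
  have hp : 0 < A^2 + y^2 := by positivity
  have h1 : HasDerivAt (fun y : ℝ => A^2 + y^2) (2 * y) y := by
    simpa using ((hasDerivAt_id y).pow 2).const_add (A^2)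
  have h2 := (h1.log hp.ne').const_mul (A/2)
  have h3 := (hasDerivAt_id y).mul ((((hasDerivAt_id y).inv hy.ne').const_mul A).arctan)
  refine (h2.add h3).congr_deriv ?_
  simp only [id, Pi.inv_apply]
  have : 1 + (A * y⁻¹)^2 = (A^2 + y^2) / y^2 := by field_simp; ring
  rw [this, ← div_eq_mul_inv]
  field_simp
  ring

lemma phi_le {A y z : ℝ} (hA : 0 < A) (hy : 0 < y) (hz : 0 < z) :
    A / 2 * Real.log (A^2 + y^2) + y * Real.arctan (A / y) ≤ A / 2 * Real.log (A^2 + z^2) + y * Real.arctan (A / z) := by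
  rcases lt_trichotomy y z with h | h | h
  · obtain ⟨c, hc, e⟩ := exists_hasDerivAt_eq_slope _ (fun y => Real.arctan (A / y)) h
      (fun x hx => (phi_deriv hA (hy.trans_le hx.1)).continuousAt.continuousWithinAt) (fun x hx => phi_deriv hA (hy.trans hx.1))
    rw [eq_div_iff (by linarith)] at e
    have : Real.arctan (A / z) ≤ Real.arctan (A / c) := by
      apply Real.arctan_mono
      exact div_le_div_of_nonneg_left hA.le (hy.trans hc.1) hc.2.le
    nlinarith
  · rw [h]
  · obtain ⟨c, hc, e⟩ := exists_hasDerivAt_eq_slope _ (fun y => Real.arctan (A / y)) h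
      (fun x hx => (phi_deriv hA (hz.trans_le hx.1)).continuousAt.continuousWithinAt) (fun x hx => phi_deriv hA (hz.trans hx.1))
    rw [eq_div_iff (by linarith)] at e
    have : Real.arctan (A / c) ≤ Real.arctan (A / z) := by
      apply Real.arctan_mono
      exact div_le_div_of_nonneg_left hA.le hz hc.1.le
    nlinarith

/-- the bound for one end. -/
lemma hp_bd (al m : ℕ) (c : ℝ) (hc : 0 < c) (hal : 0 < al) (hal2 : al ≤ 700) (hm : 0 < m) (y : ℝ) :
    hp (al * m) y ≤ 1400 * m * (1 + |y|) * Real.exp (m * (al / 2 * Real.log ((al:ℝ)^2 + c^2)) + m * (al * Real.log m) - al * m + (1 + |y|) * Real.arctan (al / c)) := by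
  set Y := 1 + |y| with hY
  have hY1 : 1 ≤ Y := by rw [hY]; linarith [abs_nonneg y]
  have hm1 : (1:ℝ) ≤ m := by exact_mod_cast hm
  have hal' : (0:ℝ) < al := by exact_mod_cast hal
  have hal1 : (1:ℝ) ≤ al := by exact_mod_cast hal
  have hal2' : (al:ℝ) ≤ 700 := by exact_mod_cast hal2
  refine (hp_mono _ (z := Y) (by rw [hY]; linarith [abs_nonneg y])).trans ((hp_le _ hY1).trans ?_)
  apply mul_le_mul _ _ (Real.exp_pos _).le (by positivity)
  · rw [Real.sqrt_le_left (by positivity)]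
    push_cast
    have h1 : (al * m : ℝ) ≤ 700 * m * Y := by
      calc (al * m : ℝ) ≤ 700 * m := by gcongr
        _ ≤ 700 * m * Y := le_mul_of_one_le_right (by positivity) hY1
    have h2 : Y ≤ 700 * m * Y := by nlinarith
    have h3 : 0 ≤ (al * m : ℝ) := by positivity
    nlinarith
  · apply Real.exp_le_exp.2
    unfold Hf
    push_cast
    have := phi_le (A := al * m) (y := Y) (z := c * m) (by positivity) (by linarith) (by positivity)
    rw [mul_div_mul_right _ _ (by positivity : (m:ℝ) ≠ 0)] at this
    have e : Real.log ((al * m:ℝ)^2 + (c * m)^2) = Real.log ((al:ℝ)^2 + c^2) + 2 * Real.log m := by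
      rw [show (al * m:ℝ)^2 + (c * m)^2 = ((al:ℝ)^2 + c^2) * (m:ℝ)^2 by ring, Real.log_mul (by positivity) (by positivity), Real.log_pow]
      push_cast; ring
    rw [e] at this
    nlinarith

lemma norm_end (y : ℝ) (x : ℝ) : ‖ln y - (x:ℂ)‖ = Real.sqrt ((x - 1/2)^2 + y^2) := by
  rw [Complex.norm_def, Complex.normSq_apply]
  congr 1
  simp [ln]; ring

lemma block_norm (m i : ℕ) (hi : i < 3) (y : ℝ) :
    ∏ j ∈ Finset.range (1100 * m), ‖ln y - ((rt m (i, j) : ℤ) : ℝ)‖ = hp ((699 - 100 * i) * m) y * hp ((401 + 100 * i) * m) y := by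
  have e : 1100 * m = (699 - 100 * i) * m + (401 + 100 * i) * m := by
    rw [← add_mul]; congr 1; omega
  rw [e, Finset.prod_range_add]
  congr 1
  · unfold hp
    rw [← Finset.prod_range_reflect]
    apply Finset.prod_congr rfl
    intro j hj
    rw [Finset.mem_range] at hj
    rw [norm_end]
    congr 2
    have h1 : ((((699 - 100 * i) * m - 1 - j : ℕ):ℤ)) = (699 - 100 * i) * m - 1 - j := by
      rw [Nat.sub_sub, Nat.cast_sub (by omega)]
      push_cast [show 100 * i ≤ 699 by omega]; ring
    have h2 : ((rt m (i, (699 - 100 * i) * m - 1 - j) : ℤ):ℝ) = - j := by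
      have : rt m (i, (699 - 100 * i) * m - 1 - j) = -j := by
        simp only [rt]; rw [h1]; ring
      rw [this]; push_cast; ring
    rw [h2]; ring
  · unfold hp
    apply Finset.prod_congr rfl
    intro j hj
    rw [norm_end]
    have h2 : ((rt m (i, (699 - 100 * i) * m + j) : ℤ):ℝ) = j + 1 := by
      have : rt m (i, (699 - 100 * i) * m + j) = j + 1 := by
        simp only [rt]; push_cast [show 100 * i ≤ 699 by omega]; ring
      rw [this]; push_cast; ring
    rw [h2]
    congr 2; ring

lemma FFt_norm (m : ℕ) (t : Finset (ℕ × ℕ)) (y : ℝ) : ‖(FFt m t).aeval (ln y)‖ = ∏ q ∈ t, ‖ln y - ((rt m q : ℤ) : ℝ)‖ := by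
  unfold FFt
  rw [map_prod, norm_prod]
  apply Finset.prod_congr rfl
  intro q _
  simp

lemma FF_norm (m : ℕ) (y : ℝ) : ‖(FF m).aeval (ln y)‖ =
    (hp (699 * m) y * hp (401 * m) y) * (hp (599 * m) y * hp (501 * m) y) * (hp (499 * m) y * hp (601 * m) y) := by
  unfold FF
  rw [FFt_norm, idx, Finset.prod_product]
  simp only [Finset.prod_range_succ _ 2, Finset.prod_range_succ _ 1, Finset.prod_range_succ _ 0, Finset.prod_range_zero, one_mul]
  rw [block_norm m 0 (by norm_num), block_norm m 1 (by norm_num), block_norm m 2 (by norm_num)]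

lemma rt_norm_ge (y : ℝ) (k : ℤ) : 1/2 ≤ ‖ln y - ((k:ℤ):ℝ)‖ := by
  rw [norm_end]
  apply Real.le_sqrt_of_sq_le
  have : (1/2:ℝ)^2 ≤ ((k:ℝ) - 1/2)^2 := by
    have h : (0:ℝ) ≤ ((k * (k - 1) : ℤ):ℝ) := by
      apply Int.cast_nonneg; rcases le_or_gt k 0 with h | h <;> nlinarith
    push_cast at h; nlinarith
  nlinarith [sq_nonneg y]

lemma FF_deriv_norm (m : ℕ) (y : ℝ) : ‖(derivative (FF m)).aeval (ln y)‖ ≤ 6600 * m * ‖(FF m).aeval (ln y)‖ := by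
  unfold FF
  rw [FFt_deriv, map_sum]
  refine (norm_sum_le _ _).trans ?_
  have : ∀ a ∈ idx m, ‖(FFt m ((idx m).erase a)).aeval (ln y)‖ ≤ 2 * ‖(FFt m (idx m)).aeval (ln y)‖ := by
    intro a ha
    rw [FFt_norm, FFt_norm, ← Finset.mul_prod_erase _ _ ha]
    have h1 := rt_norm_ge y (rt m a)
    have h2 : 0 ≤ ∏ q ∈ (idx m).erase a, ‖ln y - ((rt m q : ℤ) : ℝ)‖ := Finset.prod_nonneg fun _ _ => norm_nonneg _
    nlinarith
  refine (Finset.sum_le_card_nsmul _ _ _ this).trans (le_of_eq ?_)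
  simp [idx]; ring

end

section
lemma natV : (699^2*10^8+3102761^2)^3495 * (401^2*10^8+3102761^2)^2005 * (599^2*10^8+3102761^2)^2995 * (501^2*10^8+3102761^2)^2505
   * (499^2*10^8+3102761^2)^2495 * (601^2*10^8+3102761^2)^3005 * 27182818286^17754 * 1000 ≤ 963 * 1100^33000 * 10^309540 := by
  decide +kernel

lemma ed_up : (1:ℝ) ≤ Real.log 27182818286 - 10 * Real.log 10 := by
  have h := Real.exp_one_lt_d9
  have h1 : Real.exp 1 ≤ 27182818286 / 10^10 := by norm_num at h ⊢; exact h.le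
  have h2 := Real.log_le_log (Real.exp_pos 1) h1
  rw [Real.log_exp, Real.log_div (by norm_num) (by norm_num), Real.log_pow] at h2
  push_cast at h2; exact h2

lemma ed_lo : Real.log 27182818283 - 10 * Real.log 10 ≤ 1 := by
  have h := Real.exp_one_gt_d9
  have h1 : 27182818283 / 10^10 ≤ Real.exp 1 := by norm_num at h ⊢; exact h.le
  have h2 := Real.log_le_log (by norm_num) h1
  rw [Real.log_exp, Real.log_div (by norm_num) (by norm_num), Real.log_pow] at h2
  push_cast at h2; exact h2

noncomputable def cc : ℝ := 3102761/10000

lemma log_sc (a : ℕ) : Real.log ((a:ℝ)^2 + cc^2) = Real.log (a^2*10^8+3102761^2) - 8 * Real.log 10 := by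
  have : (a:ℝ)^2 + cc^2 = (a^2*10^8+3102761^2) / 10^8 := by unfold cc; ring
  rw [this, Real.log_div (by positivity) (by positivity), Real.log_pow]; push_cast; rfl

lemma V_num : 699/2 * Real.log ((699:ℕ)^2+cc^2) + 401/2 * Real.log ((401:ℕ)^2+cc^2) + 599/2 * Real.log ((599:ℕ)^2+cc^2)
   + 501/2 * Real.log ((501:ℕ)^2+cc^2) + 499/2 * Real.log ((499:ℕ)^2+cc^2) + 601/2 * Real.log ((601:ℕ)^2+cc^2) - 3300 * Real.log 1100 ≤ -1775.4037 := by
  have h : ((699:ℝ)^2*10^8+3102761^2)^3495 * (401^2*10^8+3102761^2)^2005 * (599^2*10^8+3102761^2)^2995 * (501^2*10^8+3102761^2)^2505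
   * (499^2*10^8+3102761^2)^2495 * (601^2*10^8+3102761^2)^3005 * 27182818286^17754 * 1000 ≤ 963 * 1100^33000 * 10^309540 := by exact_mod_cast natV
  have h2 := Real.log_le_log (by positivity) h
  rw [Real.log_mul (by positivity) (by positivity), Real.log_mul (by positivity) (by positivity), Real.log_mul (by positivity) (by positivity),
    Real.log_mul (by positivity) (by positivity), Real.log_mul (by positivity) (by positivity), Real.log_mul (by positivity) (by positivity),
    Real.log_mul (by positivity) (by positivity), Real.log_mul (by positivity) (by positivity), Real.log_mul (by positivity) (by positivity)] at h2
  simp only [Real.log_pow] at h2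
  have h3 := ed_up
  have h4 : Real.log 963 - Real.log 1000 ≤ -0.037 := by
    rw [← Real.log_div (by norm_num) (by norm_num)]
    have := Real.log_le_sub_one_of_pos (show (0:ℝ) < 963/1000 by norm_num)
    linarith
  simp only [log_sc]
  push_cast at h2 ⊢
  clear h
  norm_num only at h2 h3 h4 ⊢
  linarith

lemma at_num : Real.arctan (699/cc) + Real.arctan (401/cc) + Real.arctan (599/cc) + Real.arctan (501/cc) + Real.arctan (499/cc) + Real.arctan (601/cc) < 2 * Real.pi := by
  have inv : ∀ a : ℝ, 0 < a → Real.arctan (a / cc) = Real.pi / 2 - Real.arctan (cc / a) := by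
    intro a ha
    rw [← Real.arctan_inv_of_pos (by unfold cc; positivity), inv_div]
  rw [inv 699 (by norm_num), inv 401 (by norm_num), inv 599 (by norm_num), inv 501 (by norm_num), inv 499 (by norm_num), inv 601 (by norm_num)]
  have a1 := Real.arctan_add (x := cc / 699) (y := cc / 401) (by unfold cc; norm_num)
  have a2 := Real.arctan_add (x := cc / 599) (y := cc / 501) (by unfold cc; norm_num)
  have a3 := Real.arctan_add (x := cc / 499) (y := cc / 601) (by unfold cc; norm_num)
  set t1 := (cc / 699 + cc / 401) / (1 - cc / 699 * (cc / 401)) with ht1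
  set t2 := (cc / 599 + cc / 501) / (1 - cc / 599 * (cc / 501)) with ht2
  set t3 := (cc / 499 + cc / 601) / (1 - cc / 499 * (cc / 601)) with ht3
  have a4 := Real.arctan_add_eq_add_pi (x := t1) (y := t2) (by rw [ht1, ht2]; unfold cc; norm_num) (by rw [ht1]; unfold cc; norm_num)
  have a5 : -((t1 + t2) / (1 - t1 * t2)) < t3 := by rw [ht1, ht2, ht3]; unfold cc; norm_num
  have a6 := Real.arctan_strictMono a5
  rw [Real.arctan_neg] at a6
  linarith

end

section
lemma natQ : (10^8+14281989)^3495 * (10^8+14469860)^2995 * (10^8+14662740)^2495 * 10^391200 * 10000 ≤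
   9430 * (14281989^5500 * 14469860^5500 * 14662740^5500 * 27182818283^33108) := by
  decide +kernel

lemma nat23 : 27182818286^36351 * 10204 ≤ 10000 * (2^17644 * 3^21956 * 10^363510) := by
  decide +kernel

noncomputable def u1 : ℝ := 14281989/10^8
noncomputable def u2 : ℝ := 14469860/10^8
noncomputable def u3 : ℝ := 14662740/10^8

lemma u_prod : 2/3 * ((1+u1)*(1+u2)*(1+u3)) < 1 := by unfold u1 u2 u3; norm_num
lemma u1_pos : 0 < u1 := by unfold u1; norm_num
lemma u2_pos : 0 < u2 := by unfold u2; norm_num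
lemma u3_pos : 0 < u3 := by unfold u3; norm_num

lemma log_u (a : ℝ) (ha : 0 < a) : Real.log (a / 10^8) = Real.log a - 8 * Real.log 10 := by
  rw [Real.log_div ha.ne' (by positivity), Real.log_pow]; push_cast; rfl

lemma Q_num : 699 * Real.log (1+u1) + 599 * Real.log (1+u2) + 499 * Real.log (1+u3) - 1100 * (Real.log u1 + Real.log u2 + Real.log u3) ≤ 6621.589 := by
  have h : ((10:ℝ)^8+14281989)^3495 * (10^8+14469860)^2995 * (10^8+14662740)^2495 * 10^391200 * 10000 ≤
   9430 * (14281989^5500 * 14469860^5500 * 14662740^5500 * 27182818283^33108) := by exact_mod_cast natQ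
  have h2 := Real.log_le_log (by positivity) h
  rw [Real.log_mul (by positivity) (by positivity), Real.log_mul (by positivity) (by positivity), Real.log_mul (by positivity) (by positivity),
    Real.log_mul (by positivity) (by positivity), Real.log_mul (by positivity) (by positivity), Real.log_mul (by positivity) (by positivity),
    Real.log_mul (by positivity) (by positivity), Real.log_mul (by positivity) (by positivity)] at h2
  simp only [Real.log_pow] at h2
  have h3 := ed_lo
  have h4 : Real.log 9430 - Real.log 10000 ≤ -0.057 := by
    rw [← Real.log_div (by norm_num) (by norm_num)]
    have := Real.log_le_sub_one_of_pos (show (0:ℝ) < 9430/10000 by norm_num)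
    linarith
  have e1 : 1 + u1 = (10^8+14281989)/10^8 := by unfold u1; norm_num
  have e2 : 1 + u2 = (10^8+14469860)/10^8 := by unfold u2; norm_num
  have e3 : 1 + u3 = (10^8+14662740)/10^8 := by unfold u3; norm_num
  rw [e1, e2, e3]
  unfold u1 u2 u3
  rw [log_u _ (by positivity), log_u _ (by positivity), log_u _ (by positivity), log_u _ (by positivity), log_u _ (by positivity), log_u _ (by positivity)]
  push_cast at h2 ⊢
  clear h
  norm_num only at h2 h3 h4 ⊢
  linarith

lemma log23 : 826.1595 ≤ 401 * Real.log 2 + 499 * Real.log 3 := by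
  have h : (27182818286:ℝ)^36351 * 10204 ≤ 10000 * (2^17644 * 3^21956 * 10^363510) := by exact_mod_cast nat23
  have h2 := Real.log_le_log (by positivity) h
  rw [Real.log_mul (by positivity) (by positivity), Real.log_mul (by positivity) (by positivity), Real.log_mul (by positivity) (by positivity),
    Real.log_mul (by positivity) (by positivity)] at h2
  simp only [Real.log_pow] at h2
  have h3 := ed_up
  have h4 : Real.log 10000 - Real.log 10204 ≤ 10000/10204 - 1 := by
    rw [← Real.log_div (by norm_num) (by norm_num)]
    exact Real.log_le_sub_one_of_pos (show (0:ℝ) < 10000/10204 by norm_num)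
  push_cast at h2 ⊢
  clear h
  norm_num only at h2 h3 h4 ⊢
  linarith

end

section
open Real Set Filter Topology MeasureTheory Polynomial

noncomputable def SA : ℝ := Real.arctan (699/cc) + Real.arctan (401/cc) + Real.arctan (599/cc) + Real.arctan (501/cc) + Real.arctan (499/cc) + Real.arctan (601/cc)

lemma fact_low (n : ℕ) : Real.exp (n * Real.log n - n) ≤ (n.factorial : ℝ) := by
  rcases Nat.eq_zero_or_pos n with rfl | hn
  · simp
  have h := Real.pow_div_factorial_le_exp (n:ℝ) (by positivity) n
  have hn' : (0:ℝ) < n := by exact_mod_cast hn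
  rw [div_le_iff₀ (by positivity)] at h
  rw [Real.exp_sub, ← Real.log_pow, Real.exp_log (by positivity), div_le_iff₀ (Real.exp_pos _)]
  linarith

lemma fL_le (m : ℕ) (hm : 0 < m) : fL m ≤ Real.exp (-(3300 * m * (Real.log 1100 + Real.log m) - 3300 * m)) := by
  have hm' : (0:ℝ) < m := by exact_mod_cast hm
  have h := fact_low (1100 * m)
  unfold fL
  rw [Real.exp_neg]
  apply inv_anti₀ (Real.exp_pos _)
  calc _ = Real.exp ((1100 * m : ℕ) * Real.log (1100 * m : ℕ) - (1100 * m : ℕ)) ^ 3 := by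
        rw [← Real.exp_nat_mul]; push_cast
        rw [Real.log_mul (by norm_num) hm'.ne']; congr 1; ring
    _ ≤ _ := by gcongr

lemma ff_norm (m : ℕ) (hm : 0 < m) (y : ℝ) : ‖(ff m).aeval (ln y)‖ ≤
    1400^6 * (m:ℝ)^6 * (1 + |y|)^6 * Real.exp (-1775.4037 * m + (1 + |y|) * SA) := by
  have hc : 0 < cc := by unfold cc; norm_num
  have b1 := hp_bd 699 m cc hc (by norm_num) (by norm_num) hm y
  have b2 := hp_bd 401 m cc hc (by norm_num) (by norm_num) hm y
  have b3 := hp_bd 599 m cc hc (by norm_num) (by norm_num) hm y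
  have b4 := hp_bd 501 m cc hc (by norm_num) (by norm_num) hm y
  have b5 := hp_bd 499 m cc hc (by norm_num) (by norm_num) hm y
  have b6 := hp_bd 601 m cc hc (by norm_num) (by norm_num) hm y
  have n1 := hp_nonneg (699 * m) y
  have n2 := hp_nonneg (401 * m) y
  have n3 := hp_nonneg (599 * m) y
  have n4 := hp_nonneg (501 * m) y
  have n5 := hp_nonneg (499 * m) y
  have n6 := hp_nonneg (601 * m) y
  have hF := fL_le m hm
  have hF0 := fL_pos m
  have hY : 0 ≤ 1400 * (m:ℝ) * (1 + |y|) := by positivity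
  have e : ‖(ff m).aeval (ln y)‖ = fL m * ‖(FF m).aeval (ln y)‖ := by
    unfold ff; rw [map_mul, norm_mul]; simp [abs_of_pos hF0]
  rw [e, FF_norm]
  have V := V_num
  have hm' : (0:ℝ) < m := by exact_mod_cast hm
  generalize hp (699 * m) y = p1 at *
  generalize hp (401 * m) y = p2 at *
  generalize hp (599 * m) y = p3 at *
  generalize hp (501 * m) y = p4 at *
  generalize hp (499 * m) y = p5 at *
  generalize hp (601 * m) y = p6 at *
  refine (mul_le_mul hF (mul_le_mul (mul_le_mul (mul_le_mul b1 b2 n2 (by positivity)) (mul_le_mul b3 b4 n4 (by positivity)) (by positivity) (by positivity))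
    (mul_le_mul b5 b6 n6 (by positivity)) (by positivity) (by positivity)) (by positivity) (by positivity)).trans ?_
  generalize hYY : 1 + |y| = Y at *
  have hY0 : 0 ≤ Y := by rw [← hYY]; positivity
  have re : ∀ a x1 x2 x3 x4 x5 x6 : ℝ, Real.exp a * (1400 * m * Y * Real.exp x1 * (1400 * m * Y * Real.exp x2) * (1400 * m * Y * Real.exp x3 * (1400 * m * Y * Real.exp x4))
     * (1400 * m * Y * Real.exp x5 * (1400 * m * Y * Real.exp x6))) = 1400^6 * (m:ℝ)^6 * Y^6 * Real.exp (a + x1 + x2 + x3 + x4 + x5 + x6) := by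
    intros; simp only [Real.exp_add]; ring
  rw [re]
  apply mul_le_mul_of_nonneg_left _ (by positivity)
  apply Real.exp_le_exp.2
  unfold SA
  simp only [Nat.cast_ofNat] at V ⊢
  have V2 := mul_le_mul_of_nonneg_left V hm'.le
  linarith

lemma tau_abs : |tau| ≤ 1 := by
  rw [abs_of_neg tau_neg, tau, ← Real.log_inv]
  have := Real.log_le_sub_one_of_pos (show (0:ℝ) < (2/3)⁻¹ by norm_num)
  norm_num at this ⊢; linarith

lemma ffX_norm (m j : ℕ) (hj : j < 3) (y : ℝ) : ‖(ff m * X ^ j).aeval (ln y)‖ ≤ (1+|y|)^2 * ‖(ff m).aeval (ln y)‖ := by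
  have h1 := ln_norm_le y
  have h2 : ‖ln y‖ ^ j ≤ (1+|y|)^2 := by
    calc ‖ln y‖ ^ j ≤ (1+|y|)^j := by gcongr
      _ ≤ (1+|y|)^2 := pow_le_pow_right₀ (by linarith [abs_nonneg y]) (by omega)
  simp only [map_mul, map_pow, aeval_X, norm_mul, norm_pow]
  rw [mul_comm]; gcongr

lemma ff_deriv_norm (m : ℕ) (y : ℝ) : ‖(derivative (ff m)).aeval (ln y)‖ ≤ 6600 * m * ‖(ff m).aeval (ln y)‖ := by
  have h := FF_deriv_norm m y
  have hF0 := fL_pos m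
  unfold ff
  simp only [derivative_mul, derivative_C, zero_mul, zero_add, map_mul, norm_mul]
  have := mul_le_mul_of_nonneg_left h (norm_nonneg (aeval (ln y) (C (fL m))))
  linarith

lemma ffX_deriv_norm (m j : ℕ) (hj : j < 3) (y : ℝ) :
    ‖(derivative (ff m * X ^ j)).aeval (ln y)‖ ≤ (6600 * m + 2) * ((1+|y|)^2 * ‖(ff m).aeval (ln y)‖) := by
  have h1 := ln_norm_le y
  have hY : 1 ≤ 1 + |y| := by linarith [abs_nonneg y]
  have h0 := ff_deriv_norm m y
  have h2 : ∀ i, i < 3 → ‖ln y‖ ^ i ≤ (1+|y|)^2 := by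
    intro i hi
    calc ‖ln y‖ ^ i ≤ (1+|y|)^i := by gcongr
      _ ≤ (1+|y|)^2 := pow_le_pow_right₀ hY (by omega)
  have hj' : (j:ℝ) ≤ 2 := by exact_mod_cast (by omega : j ≤ 2)
  simp only [derivative_mul, derivative_X_pow, map_add, map_mul, map_pow, aeval_X]
  refine (norm_add_le _ _).trans ?_
  simp only [norm_mul, norm_pow]
  have e : ‖aeval (ln y) (C (j:ℝ))‖ = j := by simp
  rw [e]
  calc _ ≤ (6600 * m * ‖(ff m).aeval (ln y)‖) * (1+|y|)^2 + ‖(ff m).aeval (ln y)‖ * (2 * (1+|y|)^2) := by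
        gcongr
        · exact h2 j hj
        · exact h2 _ (by omega)
    _ = _ := by ring

lemma ffG_norm (m j : ℕ) (hm : 0 < m) (hj : j < 3) (y : ℝ) :
    ‖(C tau * (ff m * X ^ j) + derivative (ff m * X ^ j)).aeval (ln y)‖ ≤ 8000 * m * ((1+|y|)^2 * ‖(ff m).aeval (ln y)‖) := by
  rw [map_add, map_mul]
  refine (norm_add_le _ _).trans ?_
  have h1 := ffX_norm m j hj y
  have h2 := ffX_deriv_norm m j hj y
  have e : ‖aeval (ln y) (C tau)‖ = |tau| := by simp
  rw [norm_mul, e]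
  have h3 := tau_abs
  have hm' : (1:ℝ) ≤ m := by exact_mod_cast hm
  calc _ ≤ 1 * ((1+|y|)^2 * ‖(ff m).aeval (ln y)‖) + (6600 * m + 2) * ((1+|y|)^2 * ‖(ff m).aeval (ln y)‖) := by
        gcongr
    _ = (6600 * m + 3) * ((1+|y|)^2 * ‖(ff m).aeval (ln y)‖) := by ring
    _ ≤ _ := by gcongr; linarith

lemma exp_abs_int {c : ℝ} (hc : 0 < c) : Integrable (fun y : ℝ => Real.exp (-c * |y|)) := by
  have hI : IntegrableOn (fun y : ℝ => Real.exp (-c * |y|)) (Ioi 0) := by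
    refine (integrableOn_exp_mul_Ioi (a := -c) (by linarith) 0).congr_fun ?_ measurableSet_Ioi
    intro y hy
    simp only [abs_of_pos (show (0:ℝ) < y from hy)]
  have hI' : IntegrableOn (fun y : ℝ => Real.exp (-c * |y|)) (Iic 0) := by
    have h := hI.comp_neg
    have h2 : IntegrableOn (fun y : ℝ => Real.exp (-c * |y|)) (Iio 0) := by
      simpa using h
    exact (integrableOn_Iic_iff_integrableOn_Iio).2 h2
  rw [← integrableOn_univ, ← Iic_union_Ioi (a := (0:ℝ))]
  exact hI'.union hI

lemma J_gen : ∃ K : ℝ, 0 < K ∧ ∀ m : ℕ, 0 < m → ∀ G : ℝ[X],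
    (∀ y, ‖G.aeval (ln y)‖ ≤ 8000 * m * ((1+|y|)^2 * ‖(ff m).aeval (ln y)‖)) →
    |Lam tau (C tau * G + derivative G)| ≤ K * (m:ℝ)^7 * Real.exp (-1775.4037 * m) := by
  set d : ℝ := (2 * π - SA) / 2 with hd
  have hd0 : 0 < d := by have := at_num; rw [hd]; unfold SA; linarith
  set K0 : ℝ := 8000 * 1400^6 * (2 * π) * ((Nat.factorial 8 : ℝ) / d^8 * Real.exp (d + SA)) with hK0
  have hK0' : 0 < K0 := by rw [hK0]; positivity
  have hint := exp_abs_int hd0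
  have hi0 : 0 ≤ ∫ y, Real.exp (-d * |y|) := integral_nonneg fun y => (Real.exp_pos _).le
  refine ⟨K0 * (∫ y, Real.exp (-d * |y|)) + 1, by positivity, ?_⟩
  intro m hm G hG
  refine (J_bound G tau_neg).trans ?_
  have hm' : (0:ℝ) < m := by exact_mod_cast hm
  have key : ∀ y, ‖G.aeval (ln y)‖ * sechW y ≤ (K0 * (m:ℝ)^7 * Real.exp (-1775.4037 * m)) * Real.exp (-d * |y|) := by
    intro y
    have h1 := hG y
    have h2 := ff_norm m hm y
    have h3 := sechW_le y
    have h4 := Real.pow_div_factorial_le_exp (d * (1 + |y|)) (by positivity) 8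
    rw [div_le_iff₀ (by positivity), mul_pow] at h4
    have h5 : (1+|y|)^8 ≤ (Nat.factorial 8 : ℝ) / d^8 * Real.exp (d * (1+|y|)) := by
      rw [div_mul_eq_mul_div, le_div_iff₀ (by positivity)]; linarith
    calc ‖G.aeval (ln y)‖ * sechW y ≤ (8000 * m * ((1+|y|)^2 * (1400^6 * (m:ℝ)^6 * (1 + |y|)^6 * Real.exp (-1775.4037 * m + (1 + |y|) * SA)))) * (2 * π * Real.exp (-(2 * π * |y|))) := by
          apply mul_le_mul _ h3 (sechW_pos y).le (by positivity)
          refine h1.trans ?_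
          gcongr
      _ = 8000 * 1400^6 * (2 * π) * (m:ℝ)^7 * Real.exp (-1775.4037 * m) * Real.exp ((1+|y|) * SA) * Real.exp (-(2 * π * |y|)) * (1+|y|)^8 := by
          rw [Real.exp_add]; ring
      _ ≤ 8000 * 1400^6 * (2 * π) * (m:ℝ)^7 * Real.exp (-1775.4037 * m) * Real.exp ((1+|y|) * SA) * Real.exp (-(2 * π * |y|)) * ((Nat.factorial 8 : ℝ) / d^8 * Real.exp (d * (1+|y|))) := by
          gcongr
      _ = 8000 * 1400^6 * (2 * π) * (m:ℝ)^7 * Real.exp (-1775.4037 * m) * ((Nat.factorial 8 : ℝ) / d^8) * (Real.exp ((1+|y|) * SA) * Real.exp (-(2 * π * |y|)) * Real.exp (d * (1+|y|))) := by ring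
      _ = 8000 * 1400^6 * (2 * π) * (m:ℝ)^7 * Real.exp (-1775.4037 * m) * ((Nat.factorial 8 : ℝ) / d^8) * (Real.exp (d + SA) * Real.exp (-d * |y|)) := by
          congr 1
          rw [← Real.exp_add, ← Real.exp_add, ← Real.exp_add]
          congr 1; rw [hd]; ring
      _ = _ := by rw [hK0]; ring
  calc _ ≤ ∫ y, (K0 * (m:ℝ)^7 * Real.exp (-1775.4037 * m)) * Real.exp (-d * |y|) := by
        apply integral_mono_of_nonneg
        · filter_upwards with y; have := sechW_pos y; positivity
        · exact hint.const_mul _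
        · filter_upwards with y; exact key y
    _ = (K0 * (∫ y, Real.exp (-d * |y|))) * (m:ℝ)^7 * Real.exp (-1775.4037 * m) := by
        rw [integral_const_mul]; ring
    _ ≤ _ := by gcongr; linarith

lemma J_final : ∃ K : ℝ, 0 < K ∧ ∀ m : ℕ, 0 < m → ∀ j < 3,
    |Lam tau (C tau * (ff m * X ^ j) + derivative (ff m * X ^ j))| ≤ K * (m:ℝ)^7 * Real.exp (-1775.4037 * m) ∧
    |Lam tau (C tau * (C tau * (ff m * X ^ j) + derivative (ff m * X ^ j)) + derivative (C tau * (ff m * X ^ j) + derivative (ff m * X ^ j)))| ≤ K * (m:ℝ)^7 * Real.exp (-1775.4037 * m) := by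
  obtain ⟨K, hK, h⟩ := J_gen
  refine ⟨K, hK, fun m hm j hj => ⟨h m hm _ fun y => ?_, h m hm _ fun y => ffG_norm m j hm hj y⟩⟩
  have hm' : (1:ℝ) ≤ m := by exact_mod_cast hm
  refine (ffX_norm m j hj y).trans ?_
  apply le_mul_of_one_le_left (by positivity); linarith

end

section
open Real Set Filter Topology MeasureTheory Polynomial

lemma desc_prod (n L : ℕ) : ∏ j ∈ Finset.range L, ((n:ℝ) - j) = (L.factorial : ℝ) * (n.choose L : ℝ) := by
  have h : ∏ j ∈ Finset.range L, ((n:ℝ) - j) = (n.descFactorial L : ℝ) := by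
    induction L with
    | zero => simp
    | succ L ih =>
      rw [Finset.prod_range_succ, ih, Nat.descFactorial_succ]
      rcases le_or_gt L n with h | h
      · push_cast [Nat.cast_sub h]; ring
      · rw [Nat.descFactorial_eq_zero_iff_lt.2 h]; simp
  rw [h, Nat.descFactorial_eq_factorial_mul_choose]; push_cast; rfl

lemma choose_bd (n L : ℕ) {u : ℝ} (hu : 0 < u) : (n.choose L : ℝ) ≤ (1 + u)^n / u^L := by
  rw [le_div_iff₀ (by positivity)]
  rcases le_or_gt L n with h | h
  · rw [add_comm, add_pow]
    have := Finset.single_le_sum (f := fun i => u ^ i * 1 ^ (n - i) * (n.choose i : ℝ)) (s := Finset.range (n+1))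
      (fun i _ => by positivity) (Finset.mem_range.2 (Nat.lt_succ_of_le h))
    simp only [one_pow, mul_one] at this ⊢
    linarith
  · rw [Nat.choose_eq_zero_of_lt h]; simp; positivity

lemma block_eval (m i k : ℕ) (hi : i < 3) : ∏ j ∈ Finset.range (1100 * m), (((k:ℝ)+1) - ((rt m (i, j) : ℤ) : ℝ)) =
    ((1100*m).factorial : ℝ) * ((k + (699 - 100 * i) * m).choose (1100 * m) : ℝ) := by
  rw [← desc_prod]
  apply Finset.prod_congr rfl
  intro j _
  simp only [rt]
  push_cast [show 100 * i ≤ 699 by omega]; ring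

lemma ff_eval (m k : ℕ) : (ff m).eval ((k:ℝ)+1) = ((k + 699 * m).choose (1100 * m) : ℝ) * ((k + 599 * m).choose (1100 * m) : ℝ) * ((k + 499 * m).choose (1100 * m) : ℝ) := by
  unfold ff
  rw [FF_prod, eval_mul, eval_C, eval_prod]
  simp only [eval_prod, eval_sub, eval_X, eval_C]
  simp only [Finset.prod_range_succ _ 2, Finset.prod_range_succ _ 1, Finset.prod_range_succ _ 0, Finset.prod_range_zero, one_mul]
  rw [block_eval m 0 k (by norm_num), block_eval m 1 k (by norm_num), block_eval m 2 k (by norm_num)]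
  unfold fL
  have : ((1100*m).factorial : ℝ) ≠ 0 := by positivity
  norm_num
  field_simp

lemma ff_eval_nonneg (m k : ℕ) : 0 ≤ (ff m).eval ((k:ℝ)+1) := by rw [ff_eval]; positivity

noncomputable def rh : ℝ := 2/3 * ((1+u1)*(1+u2)*(1+u3))

lemma ff_eval_le (m k : ℕ) : (ff m).eval ((k:ℝ)+1) ≤ Real.exp (6621.589 * m) * ((1+u1)*(1+u2)*(1+u3))^k := by
  have h1 := u1_pos
  have h2 := u2_pos
  have h3 := u3_pos
  rw [ff_eval]
  have c1 := choose_bd (k + 699 * m) (1100 * m) h1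
  have c2 := choose_bd (k + 599 * m) (1100 * m) h2
  have c3 := choose_bd (k + 499 * m) (1100 * m) h3
  refine (mul_le_mul (mul_le_mul c1 c2 (by positivity) (by positivity)) c3 (by positivity) (by positivity)).trans ?_
  have ex : ∀ (x : ℝ) (n : ℕ), 0 < x → x ^ n = Real.exp (n * Real.log x) := by
    intro x n hx; rw [← Real.log_pow, Real.exp_log (by positivity)]
  have e : (1+u1)^(699*m)/u1^(1100*m) * ((1+u2)^(599*m)/u2^(1100*m)) * ((1+u3)^(499*m)/u3^(1100*m)) ≤ Real.exp (6621.589 * m) := by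
    rw [ex (1+u1) _ (by positivity), ex (1+u2) _ (by positivity), ex (1+u3) _ (by positivity), ex u1 _ h1, ex u2 _ h2, ex u3 _ h3,
      ← Real.exp_sub, ← Real.exp_sub, ← Real.exp_sub, ← Real.exp_add, ← Real.exp_add]
    apply Real.exp_le_exp.2
    have := mul_le_mul_of_nonneg_left Q_num (Nat.cast_nonneg m : (0:ℝ) ≤ m)
    push_cast
    linarith
  calc _ = ((1+u1)^(699*m)/u1^(1100*m) * ((1+u2)^(599*m)/u2^(1100*m)) * ((1+u3)^(499*m)/u3^(1100*m))) * ((1+u1)*(1+u2)*(1+u3))^k := by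
        rw [pow_add, pow_add, pow_add, mul_pow, mul_pow]; ring
    _ ≤ _ := by gcongr

lemma q_final : ∃ K : ℝ, 0 < K ∧ ∀ m : ℕ, ∀ j < 3, |Lam tau (ff m * X ^ j)| ≤ K * Real.exp (6621.589 * m) := by
  have hu1 := u1_pos
  have hu2 := u2_pos
  have hu3 := u3_pos
  have hr0 : 0 < rh := by unfold rh; positivity
  have hr1 : rh < 1 := u_prod
  have hs : Summable (fun k : ℕ => ((k:ℝ)+1)^2 * rh^(k+1)) := by
    have h := summable_pow_mul_geometric_of_norm_lt_one (R := ℝ) 2 (r := rh) (by rw [Real.norm_of_nonneg hr0.le]; exact hr1)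
    have := (summable_nat_add_iff 1).2 h
    simpa using this
  have ht0 : 0 ≤ ∑' k : ℕ, ((k:ℝ)+1)^2 * rh^(k+1) := tsum_nonneg fun k => by positivity
  refine ⟨(∑' k : ℕ, ((k:ℝ)+1)^2 * rh^(k+1)) + 1, by positivity, ?_⟩
  intro m j hj
  have hnn : ∀ k : ℕ, 0 ≤ (ff m * X ^ j).eval ((k:ℝ)+1) * Real.exp (tau * ((k:ℝ)+1)) := by
    intro k
    have := ff_eval_nonneg m k
    simp only [eval_mul, eval_pow, eval_X]; positivity
  have hdef : Lam tau (ff m * X ^ j) = ∑' k : ℕ, (ff m * X ^ j).eval ((k:ℝ)+1) * Real.exp (tau * ((k:ℝ)+1)) := rfl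
  rw [hdef, abs_of_nonneg (tsum_nonneg hnn)]
  have hle : ∀ k : ℕ, (ff m * X ^ j).eval ((k:ℝ)+1) * Real.exp (tau * ((k:ℝ)+1)) ≤ Real.exp (6621.589 * m) * (((k:ℝ)+1)^2 * rh^(k+1)) := by
    intro k
    have h1 := ff_eval_le m k
    have h2 : ((k:ℝ)+1)^j ≤ ((k:ℝ)+1)^2 := pow_le_pow_right₀ (by linarith [(Nat.cast_nonneg k : (0:ℝ) ≤ k)]) (by omega)
    have h3 : Real.exp (tau * ((k:ℝ)+1)) = (2/3)^(k+1) := by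
      rw [← exp_tau, ← Real.exp_nat_mul]; congr 1; push_cast; ring
    have h0 := ff_eval_nonneg m k
    rw [h3]
    simp only [eval_mul, eval_pow, eval_X]
    have hP : 1 ≤ (1+u1)*(1+u2)*(1+u3) := by
      have a : 1 ≤ (1+u1)*(1+u2) := by nlinarith
      nlinarith
    calc _ ≤ (Real.exp (6621.589 * m) * ((1+u1)*(1+u2)*(1+u3))^(k+1)) * ((k:ℝ)+1)^2 * (2/3)^(k+1) := by
          gcongr
          refine h1.trans ?_
          gcongr
          omega
      _ = _ := by
          unfold rh; rw [mul_pow (2/3:ℝ)]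
          generalize ((1+u1)*(1+u2)*(1+u3))^(k+1) = z
          ring
  calc _ ≤ ∑' k : ℕ, Real.exp (6621.589 * m) * (((k:ℝ)+1)^2 * rh^(k+1)) :=
        (Lam_summable _ tau_neg).tsum_le_tsum hle (hs.mul_left _)
    _ = (∑' k : ℕ, ((k:ℝ)+1)^2 * rh^(k+1)) * Real.exp (6621.589 * m) := by rw [tsum_mul_left]; ring
    _ ≤ _ := by gcongr; linarith

end

section
open Real Set Filter Topology MeasureTheory Polynomial

noncomputable def Wm (m : ℕ) : ℝ := 2 * 2 ^ (401 * m) * 3 ^ (499 * m)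
lemma Wm_pos (m : ℕ) : 0 < Wm m := by unfold Wm; positivity
lemma Wm_ge (m : ℕ) : Real.exp (826.1595 * m) ≤ Wm m := by
  have ex : ∀ (x : ℝ) (n : ℕ), 0 < x → x ^ n = Real.exp (n * Real.log x) := by
    intro x n hx; rw [← Real.log_pow, Real.exp_log (by positivity)]
  have h : Real.exp (826.1595 * m) ≤ 2 ^ (401 * m) * 3 ^ (499 * m) := by
    rw [ex 2 _ (by norm_num), ex 3 _ (by norm_num), ← Real.exp_add]
    apply Real.exp_le_exp.2
    have := mul_le_mul_of_nonneg_left log23 (Nat.cast_nonneg m : (0:ℝ) ≤ m)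
    push_cast; linarith
  have h2 : (0:ℝ) < 2 ^ (401 * m) * 3 ^ (499 * m) := by positivity
  unfold Wm; linarith

lemma lin_id (A B c : ℝ) (f : ℝ[X]) :
    Lam tau f * (A * tau^2 + B * tau + c) = LamD A B c f
      + A * (2 * tau * Lam tau (C tau * f + derivative f)
         - Lam tau (C tau * (C tau * f + derivative f) + derivative (C tau * f + derivative f)))
      + B * Lam tau (C tau * f + derivative f) := by
  have e : C tau * (C tau * f + derivative f) + derivative (C tau * f + derivative f)
     = C tau * (C tau * f) + C tau * derivative f + (C tau * derivative f + derivative (derivative f)) := by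
    simp; ring
  have e2 : LamD A B c f = A * Lam tau (derivative (derivative f)) - B * Lam tau (derivative f) + c * Lam tau f := by
    unfold LamD Dop
    rw [Lam_add _ _ tau_neg, Lam_sub, Lam_C_mul, Lam_C_mul, Lam_C_mul]
  rw [e, e2]
  simp only [Lam_add _ _ tau_neg, Lam_C_mul]
  ring

lemma poly_exp (K : ℝ) (n : ℕ) : ∀ᶠ m : ℕ in atTop, K * (m:ℝ)^n ≤ Real.exp (0.0001 * m) := by
  have h := (isLittleO_pow_exp_pos_mul_atTop n (b := 0.0001) (by norm_num)).const_mul_left K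
  have h2 := (h.comp_tendsto tendsto_natCast_atTop_atTop).bound one_pos
  filter_upwards [h2] with m hm
  simp only [Function.comp, one_mul, Real.norm_eq_abs, Real.abs_exp] at hm
  exact (le_abs_self _).trans hm

lemma main_ineq : ∃ m0 : ℕ, ∀ m ≥ m0, ∀ (a b c : ℤ) (H : ℝ), |(a:ℝ)| ≤ H → |(b:ℝ)| ≤ H → ¬ (a = 0 ∧ b = 0 ∧ c = 0) →
    1 ≤ |(25 * a : ℝ) * tau^2 + (5 * b) * tau + c| * Real.exp (7509.4384 * m) + 80 * H * Real.exp (-887.5545 * m) := by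
  obtain ⟨K, hK, hJ⟩ := J_final
  obtain ⟨K', hK', hq⟩ := q_final
  have ev := ((logD_final.and (poly_exp K 7)).and ((poly_exp K' 0).and (eventually_gt_atTop 0)))
  obtain ⟨m0, hm0⟩ := eventually_atTop.1 ev
  refine ⟨m0, fun m hm a b c H ha hb hne => ?_⟩
  obtain ⟨⟨hD, hp7⟩, hp0, hmpos⟩ := hm0 m hm
  have hex : ∃ j < 3, LamD ((25 * a : ℤ):ℝ) ((5 * b : ℤ):ℝ) (c:ℝ) (ff m * X ^ j) ≠ 0 := by
    by_contra hcon
    push Not at hcon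
    obtain ⟨h1, h2, h3⟩ := FF_nonvanish m hmpos _ _ _ hcon
    apply hne
    have h1 : 25 * a = 0 := by exact_mod_cast h1
    have h2 : 5 * b = 0 := by exact_mod_cast h2
    have h3 : c = 0 := by exact_mod_cast h3
    exact ⟨by omega, by omega, h3⟩
  obtain ⟨j, hj, hL⟩ := hex
  obtain ⟨N, hN⟩ := LamD_int m j (25 * a) (5 * b) c
  have hDpos : (0:ℝ) < Dm m := by exact_mod_cast Dm_pos m
  have hW := Wm_pos m
  have hN0 : N ≠ 0 := by
    rintro rfl
    simp only [Int.cast_zero, mul_zero, mul_eq_zero] at hN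
    rcases hN with h | h
    · exact hDpos.ne' h
    · exact hL h
  have hN1 : (1:ℝ) ≤ |(N:ℝ)| := by exact_mod_cast Int.one_le_abs hN0
  have hlow : Wm m ≤ Dm m * |LamD ((25 * a : ℤ):ℝ) ((5 * b : ℤ):ℝ) (c:ℝ) (ff m * X ^ j)| := by
    have : |(Dm m : ℝ) * LamD ((25 * a : ℤ):ℝ) ((5 * b : ℤ):ℝ) (c:ℝ) (ff m * X ^ j)| = Wm m * |(N:ℝ)| := by
      rw [hN, abs_mul, abs_of_pos (show (0:ℝ) < 2 * 2 ^ (401 * m) * 3 ^ (499 * m) by positivity)]; rfl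
    rw [abs_mul, abs_of_pos hDpos] at this
    rw [this]; exact le_mul_of_one_le_right hW.le hN1
  have hid := lin_id ((25 * a : ℤ):ℝ) ((5 * b : ℤ):ℝ) (c:ℝ) (ff m * X ^ j)
  obtain ⟨hJ1, hJ2⟩ := hJ m hmpos j hj
  have hqj := hq m j hj
  generalize LamD ((25 * a : ℤ):ℝ) ((5 * b : ℤ):ℝ) (c:ℝ) (ff m * X ^ j) = Λ at *
  generalize Lam tau (C tau * (C tau * (ff m * X ^ j) + derivative (ff m * X ^ j)) + derivative (C tau * (ff m * X ^ j) + derivative (ff m * X ^ j))) = J2 at *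
  generalize Lam tau (C tau * (ff m * X ^ j) + derivative (ff m * X ^ j)) = J1 at *
  generalize Lam tau (ff m * X ^ j) = q at *
  push_cast at hid
  set Pα : ℝ := (25 * a : ℝ) * tau^2 + (5 * b) * tau + c with hPα
  set R := K * (m:ℝ)^7 * Real.exp (-1775.4037 * m) with hR
  have hR0 : 0 ≤ R := by positivity
  have hH : 0 ≤ H := (abs_nonneg _).trans ha
  have ht := tau_abs
  have hΛ : |Λ| ≤ |q| * |Pα| + 80 * H * R := by
    have : Λ = q * Pα - ((25 * a) * (2 * tau * J1 - J2) + 5 * b * J1) := by linarith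
    rw [this]
    refine (abs_sub _ _).trans ?_
    rw [abs_mul]
    have e1 : |2 * tau * J1 - J2| ≤ 3 * R := by
      refine (abs_sub _ _).trans ?_
      rw [abs_mul, abs_mul, abs_of_pos (two_pos : (0:ℝ) < 2)]
      have : |tau| * |J1| ≤ 1 * R := mul_le_mul ht hJ1 (abs_nonneg _) (by norm_num)
      linarith
    have e2 : |(25 * a : ℝ) * (2 * tau * J1 - J2) + 5 * b * J1| ≤ 25 * H * (3 * R) + 5 * H * R := by
      refine (abs_add_le _ _).trans ?_
      simp only [abs_mul]
      rw [abs_of_pos (by norm_num : (0:ℝ) < 25), abs_of_pos (by norm_num : (0:ℝ) < 5)]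
      gcongr
    linarith
  have hDle : (Dm m : ℝ) ≤ Real.exp (1714.0086 * m) := by
    rwa [← Real.log_le_iff_le_exp hDpos]
  have hWge := Wm_ge m
  set E := Real.exp ((1714.0086 - 826.1595) * m) with hE
  have hDW : (Dm m : ℝ) ≤ E * Wm m := by
    calc (Dm m : ℝ) ≤ Real.exp (1714.0086 * m) := hDle
      _ = E * Real.exp (826.1595 * m) := by rw [hE, ← Real.exp_add]; congr 1; ring
      _ ≤ _ := by gcongr
  have h1 : Wm m ≤ Wm m * (E * (|q| * |Pα| + 80 * H * R)) := by
    calc Wm m ≤ Dm m * |Λ| := hlow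
      _ ≤ (E * Wm m) * (|q| * |Pα| + 80 * H * R) := by gcongr
      _ = _ := by ring
  have h2 : 1 ≤ E * (|q| * |Pα| + 80 * H * R) := by
    by_contra hcon
    push Not at hcon
    nlinarith
  have hEq : E * |q| ≤ Real.exp (7509.4384 * m) := by
    simp only [pow_zero, mul_one] at hp0
    calc E * |q| ≤ E * (K' * Real.exp (6621.589 * m)) := by gcongr
      _ ≤ E * (Real.exp (0.0001 * m) * Real.exp (6621.589 * m)) := by gcongr
      _ = Real.exp (7509.4382 * m) := by rw [hE, ← Real.exp_add, ← Real.exp_add]; congr 1; ring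
      _ ≤ _ := by gcongr; norm_num
  have hER : E * R ≤ Real.exp (-887.5545 * m) := by
    calc E * R ≤ E * (Real.exp (0.0001 * m) * Real.exp (-1775.4037 * m)) := by rw [hR]; gcongr
      _ = Real.exp (-887.5545 * m) := by rw [hE, ← Real.exp_add, ← Real.exp_add]; congr 1; ring
  calc 1 ≤ E * (|q| * |Pα| + 80 * H * R) := h2
    _ = |Pα| * (E * |q|) + 80 * H * (E * R) := by ring
    _ ≤ _ := by gcongr

lemma lower_bd : ∃ c0 : ℝ, 0 < c0 ∧ ∃ H1 : ℝ, ∀ (a b c : ℤ) (H : ℝ), 1 ≤ H → H1 ≤ H → |(a:ℝ)| ≤ H → |(b:ℝ)| ≤ H → ¬ (a = 0 ∧ b = 0 ∧ c = 0) →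
    c0 ≤ |(25 * a : ℝ) * tau^2 + (5 * b) * tau + c| * H ^ (8.46082:ℝ) := by
  obtain ⟨m0, hm0⟩ := main_ineq
  refine ⟨(2 * (160 * Real.exp 887.5545) ^ (8.46082:ℝ))⁻¹, by positivity, Real.exp (887.5545 * m0), ?_⟩
  intro a b c H h1 hH ha hb hne
  have hH0 : 0 < H := by linarith
  set m := ⌈Real.log (160 * H) / 887.5545⌉₊ with hm
  have hl0 : 0 ≤ Real.log (160 * H) := Real.log_nonneg (by linarith)
  have hmge : Real.log (160 * H) / 887.5545 ≤ m := Nat.le_ceil _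
  have hmlt : (m:ℝ) < Real.log (160 * H) / 887.5545 + 1 := Nat.ceil_lt_add_one (by positivity)
  have hmm : m0 ≤ m := by
    have : (m0:ℝ) ≤ m := by
      refine le_trans ?_ hmge
      rw [le_div_iff₀ (by norm_num), Real.le_log_iff_exp_le (by positivity)]
      rw [mul_comm]; linarith
    exact_mod_cast this
  have key := hm0 m hmm a b c H ha hb hne
  set P := |(25 * a : ℝ) * tau^2 + (5 * b) * tau + c| with hP
  have hP0 : 0 ≤ P := abs_nonneg _
  rw [div_le_iff₀ (by norm_num)] at hmge
  have hmlt2 : (m:ℝ) * 887.5545 ≤ Real.log (160 * H) + 887.5545 := by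
    have := mul_lt_mul_of_pos_right hmlt (show (0:ℝ) < 887.5545 by norm_num)
    rw [add_mul, div_mul_cancel₀ _ (by norm_num)] at this
    linarith
  have s1 : 80 * H * Real.exp (-887.5545 * m) ≤ 1/2 := by
    have : Real.exp (-887.5545 * m) ≤ (160 * H)⁻¹ := by
      calc Real.exp (-887.5545 * m) ≤ Real.exp (-Real.log (160 * H)) := by apply Real.exp_le_exp.2; linarith
        _ = _ := by rw [Real.exp_neg, Real.exp_log (by positivity)]
    calc _ ≤ 80 * H * (160 * H)⁻¹ := by gcongr
      _ = 1/2 := by field_simp; norm_num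
  have s2 : Real.exp (7509.4384 * m) ≤ (160 * Real.exp 887.5545) ^ (8.46082:ℝ) * H ^ (8.46082:ℝ) := by
    rw [← Real.mul_rpow (by positivity) hH0.le, Real.rpow_def_of_pos (by positivity)]
    apply Real.exp_le_exp.2
    rw [show 160 * Real.exp 887.5545 * H = (160 * H) * Real.exp 887.5545 by ring, Real.log_mul (by positivity) (by positivity), Real.log_exp]
    have := mul_le_mul_of_nonneg_right hmlt2 (show (0:ℝ) ≤ 8.46082 by norm_num)
    have hmn : (0:ℝ) ≤ m := Nat.cast_nonneg m
    linarith
  have s3 : 1/2 ≤ P * ((160 * Real.exp 887.5545) ^ (8.46082:ℝ) * H ^ (8.46082:ℝ)) := by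
    have := mul_le_mul_of_nonneg_left s2 hP0
    linarith
  set Z := (160 * Real.exp 887.5545) ^ (8.46082:ℝ) with hZ
  have hZ0 : 0 < Z := by positivity
  rw [inv_le_iff_one_le_mul₀ (by positivity)]
  linarith

end

section
open Real Set Filter Topology MeasureTheory Polynomial

lemma coeff_le_height (P : ℤ[X]) (i : ℕ) : (P.coeff i).natAbs ≤ polyHeight P := by
  by_cases h : i ∈ P.support
  · exact Finset.le_sup (f := fun i => (P.coeff i).natAbs) h
  · rw [notMem_support_iff.1 h]; simp

lemma coeff_le_height' (P : ℤ[X]) (i : ℕ) : |((P.coeff i : ℤ) : ℝ)| ≤ (polyHeight P : ℝ) := by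
  have := coeff_le_height P i
  rw [← Int.cast_abs, ← Int.natCast_natAbs]
  exact_mod_cast this

lemma fin_poly (N : ℕ) : {P : ℤ[X] | P.natDegree ≤ 2 ∧ polyHeight P ≤ N}.Finite := by
  have hf : ((Set.Icc (-(N:ℤ)) N) ×ˢ ((Set.Icc (-(N:ℤ)) N) ×ˢ (Set.Icc (-(N:ℤ)) N))).Finite :=
    (Set.finite_Icc _ _).prod ((Set.finite_Icc _ _).prod (Set.finite_Icc _ _))
  refine (hf.image (fun t : ℤ × ℤ × ℤ => C t.1 * X ^ 2 + C t.2.1 * X + C t.2.2)).subset ?_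
  rintro P ⟨hd, hN⟩
  have hc : ∀ i, P.coeff i ∈ Set.Icc (-(N:ℤ)) N := by
    intro i
    have := coeff_le_height P i
    constructor <;> omega
  refine ⟨(P.coeff 2, P.coeff 1, P.coeff 0), ⟨hc 2, hc 1, hc 0⟩, ?_⟩
  exact (eq_quadratic_of_degree_le_two (natDegree_le_iff_degree_le.1 hd)).symm

lemma alpha_eq : Real.sqrt 25 * Real.log ((Real.sqrt 25 - 1) / (Real.sqrt 25 + 1)) = 5 * tau := by
  have : Real.sqrt 25 = 5 := by
    rw [show (25:ℝ) = 5^2 by norm_num]; exact Real.sqrt_sq (by norm_num)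
  rw [this]; unfold tau; norm_num

theorem non_quadraticity_measure_alpha_12 :
    ∀ κ : ℝ, κ > 9.46082 →
      {β : ℝ | ∃ P : Polynomial ℤ, Irreducible P ∧ P.natDegree ≤ 2 ∧
          Polynomial.aeval β P = 0 ∧
          |Real.sqrt 25 * Real.log ((Real.sqrt 25 - 1) / (Real.sqrt 25 + 1)) - β| <
            ((polyHeight P : ℕ) : ℝ) ^ (-κ)}.Finite := by
  intro κ hκ
  rw [alpha_eq]
  obtain ⟨c0, hc0, H1, hlow⟩ := lower_bd
  have hev : ∀ᶠ H : ℝ in atTop, H1 ≤ H ∧ 1 ≤ H ∧ 12 / c0 < H ^ (κ - 9.46082) :=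
    (eventually_ge_atTop H1).and ((eventually_ge_atTop 1).and ((tendsto_rpow_atTop (by linarith)).eventually_gt_atTop _))
  obtain ⟨N, hN⟩ := eventually_atTop.1 (tendsto_natCast_atTop_atTop.eventually hev)
  have hbound : ∀ (β : ℝ) (P : ℤ[X]), Irreducible P → P.natDegree ≤ 2 → aeval β P = 0 →
      |5 * tau - β| < ((polyHeight P : ℕ) : ℝ) ^ (-κ) → polyHeight P ≤ N := by
    intro β P hirr hd hroot hlt
    by_contra hcon
    push Not at hcon
    obtain ⟨g1, g2, g3⟩ := hN _ hcon.le
    set H : ℝ := (polyHeight P : ℝ) with hH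
    have hH0 : 0 < H := by linarith
    have hP := eq_quadratic_of_degree_le_two (natDegree_le_iff_degree_le.1 hd)
    have a2 := coeff_le_height' P 2
    have a1 := coeff_le_height' P 1
    rw [← hH] at a1 a2
    have hne : ¬ (P.coeff 2 = 0 ∧ P.coeff 1 = 0 ∧ P.coeff 0 = 0) := by
      rintro ⟨h2, h1, h0⟩
      rw [h2, h1, h0] at hP
      simp at hP
      exact hirr.ne_zero hP
    have hl := hlow (P.coeff 2) (P.coeff 1) (P.coeff 0) H g2 g1 a2 a1 hne
    have hr : (P.coeff 2 : ℝ) * β^2 + P.coeff 1 * β + P.coeff 0 = 0 := by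
      rw [hP] at hroot; simpa using hroot
    generalize ((P.coeff 2 : ℤ) : ℝ) = a at *
    generalize ((P.coeff 1 : ℤ) : ℝ) = b at *
    generalize ((P.coeff 0 : ℤ) : ℝ) = c at *
    have e : 25 * a * tau^2 + 5 * b * tau + c = (5 * tau - β) * (a * (2 * (5 * tau) - (5 * tau - β)) + b) := by
      linear_combination hr
    rw [e, abs_mul] at hl
    have hle1 : H ^ (-κ) ≤ 1 := Real.rpow_le_one_of_one_le_of_nonpos g2 (by linarith)
    have h3 : |a * (2 * (5 * tau) - (5 * tau - β)) + b| ≤ 12 * H := by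
      refine (abs_add_le _ _).trans ?_
      have h4 : |2 * (5 * tau) - (5 * tau - β)| ≤ 11 := by
        refine (abs_sub _ _).trans ?_
        have := tau_abs
        rw [abs_mul, abs_mul, abs_of_pos (two_pos : (0:ℝ) < 2), abs_of_pos (by norm_num : (0:ℝ) < 5)]
        linarith
      rw [abs_mul]
      have := mul_le_mul a2 h4 (abs_nonneg _) hH0.le
      linarith
    have h5 : c0 ≤ H ^ (-κ) * (12 * H) * H ^ (8.46082:ℝ) := by
      refine hl.trans ?_
      gcongr
    have h6 : H ^ (-κ) * (12 * H) * H ^ (8.46082:ℝ) * H ^ (κ - 9.46082) = 12 := by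
      have : H ^ (-κ) * H * H ^ (8.46082:ℝ) * H ^ (κ - 9.46082) = 1 := by
        nth_rewrite 2 [← Real.rpow_one H]
        rw [← Real.rpow_add hH0, ← Real.rpow_add hH0, ← Real.rpow_add hH0]
        rw [show -κ + 1 + 8.46082 + (κ - 9.46082) = 0 by ring, Real.rpow_zero]
      linear_combination 12 * this
    have h7 : c0 * H ^ (κ - 9.46082) ≤ 12 := by
      rw [← h6]; gcongr
    rw [div_lt_iff₀ hc0] at g3
    linarith
  refine ((fin_poly N).biUnion (t := fun P => {β : ℝ | P ≠ 0 ∧ aeval β P = 0}) ?_).subset ?_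
  · intro P _
    by_cases h0 : P = 0
    · simp [h0]
    · refine (rootSet_finite P ℝ).subset ?_
      rintro β ⟨_, h⟩
      exact (mem_rootSet_of_ne h0).2 h
  · rintro β ⟨P, hirr, hd, hroot, hlt⟩
    simp only [Set.mem_iUnion]
    exact ⟨P, ⟨hd, hbound β P hirr hd hroot hlt⟩, hirr.ne_zero, hroot⟩

end
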